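/- arXiv:2506.14673 — 5 statements merged into one kernel-verified Lean document; each statement's English description precedes it below -/
import Mathlib

section
/- Let m, κ ∈ ℕ, ε > 0, and X₀, X₁, X₂ ∈ (𝒳^m)^κ be fixed. Suppose ℱ ⊆ ℝ^𝒳 admits an (ε/16, m)-discretization F on X₀, X₁, X₂. Then P_{b∼Uniform({0,1}^κ)}( ∃ f ∈ ℱ : S_b^{(>)}(f, 15ε/16) ≥ 4801/10000 and S_{1−b}^{(≤)}(f, 2ε/16) > 9701/10000 ) ≤ |F| · sup_{f∈F} P_{b∼Uniform({0,1}^κ)}( S_b^{(>)}(f, 12ε/16) ≥ 4769/10000 and S_{1−b}^{(>)}(f, 12ε/16) < 331/10000 ). -/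
/-!
Replace `f ∈ ℱ` by its discretization `g ∈ F`. Off the exceptional blocks every block mean moves by
at most `ε/16`, so every gap between two block means moves by at most `2ε/16`. Hence a gap
`> 15ε/16` for `f` stays `> 12ε/16` for `g`, and a gap `≤ 2ε/16` stays `≤ 12ε/16`. The exceptional
blocks cost a fraction `2/625 = 32/10000` in each count, which accounts for `4801 - 32 = 4769` and
`10000 - 9701 + 32 = 331`. A union bound over `g ∈ F` concludes.
-/

open MeasureTheory

/-- Sample mean of `f` on a block of `m` points. -/
noncomputable def blockMean {𝒳 : Type*} {m : ℕ} (f : 𝒳 → ℝ) (x : Fin m → 𝒳) : ℝ :=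
  (∑ j, f (x j)) / m

open scoped Classical in
/-- The fraction of indices `i ∈ {1,…,κ}` satisfying the predicate `P`. -/
noncomputable def frac {κ : ℕ} (P : Fin κ → Prop) : ℝ :=
  ((Finset.univ.filter P).card : ℝ) / κ

/-- Inclusion of the index set `{0,1}` into `{0,1,2}`. -/
def inc2 : Fin 2 → Fin 3 := Fin.castLE (by norm_num)

/-- `ℱ` admits an `(ε, m)`-discretization `F` on the three samples `X 0, X 1, X 2`. -/
def IsEpsDiscretization {𝒳 : Type*} (ε : ℝ) (m κ : ℕ)
    (X : Fin 3 → Fin κ → Fin m → 𝒳) (ℱ : Set (𝒳 → ℝ)) (F : Finset (𝒳 → ℝ)) : Prop :=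
  ∀ f ∈ ℱ, ∃ g ∈ F, ∃ I : Finset (Fin κ), (I.card : ℝ) ≤ 2 * κ / 625 ∧
    ∀ i : Fin κ, i ∉ I → ∀ l : Fin 3,
      ∑ j : Fin m, |f (X l i j) - g (X l i j)| / m ≤ ε

section Frac

variable {κ : ℕ} {P Q : Fin κ → Prop}

open scoped Classical in
lemma frac_le_frac_add_card_div (I : Finset (Fin κ)) (h : ∀ i ∉ I, P i → Q i) :
    frac P ≤ frac Q + (I.card : ℝ) / κ := by
  have hsub : Finset.univ.filter P ⊆ Finset.univ.filter Q ∪ I := by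
    intro i hi
    by_cases hiI : i ∈ I <;> simp_all
  have hcard : (Finset.univ.filter P).card ≤ (Finset.univ.filter Q).card + I.card :=
    (Finset.card_le_card hsub).trans (Finset.card_union_le _ _)
  rw [frac, frac, ← add_div]
  gcongr
  exact_mod_cast hcard

open scoped Classical in
lemma frac_add_frac_le_one (h : ∀ i, P i → ¬Q i) : frac P + frac Q ≤ 1 := by
  have hdisj : Disjoint (Finset.univ.filter P) (Finset.univ.filter Q) :=
    Finset.disjoint_filter.2 fun i _ => h i
  have hcard : (Finset.univ.filter P).card + (Finset.univ.filter Q).card ≤ κ := by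
    rw [← Finset.card_union_of_disjoint hdisj]
    exact card_finset_fin_le _
  rw [frac, frac, ← add_div]
  exact div_le_one_of_le₀ (mod_cast hcard) (Nat.cast_nonneg κ)

end Frac

section MeanGap

variable {𝒳 : Type*} {m : ℕ}

/-- The distance between the sample means of `f` on the blocks `x` and `y`; the quantities
`S^{(>)}` and `S^{(≤)}` count the blocks on which it exceeds, or does not exceed, a threshold. -/
noncomputable def meanGap (f : 𝒳 → ℝ) (x y : Fin m → 𝒳) : ℝ :=
  |blockMean f x - blockMean f y|

lemma abs_blockMean_sub_le (f g : 𝒳 → ℝ) (x : Fin m → 𝒳) :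
    |blockMean f x - blockMean g x| ≤ ∑ j, |f (x j) - g (x j)| / m := by
  unfold blockMean
  rw [← sub_div, ← Finset.sum_sub_distrib, abs_div, Nat.abs_cast, ← Finset.sum_div]
  gcongr
  exact Finset.abs_sum_le_sum_abs _ _

lemma abs_meanGap_sub_le (f g : 𝒳 → ℝ) (x y : Fin m → 𝒳) :
    |meanGap f x y - meanGap g x y| ≤
      |blockMean f x - blockMean g x| + |blockMean f y - blockMean g y| :=
  calc |meanGap f x y - meanGap g x y|
      ≤ |(blockMean f x - blockMean f y) - (blockMean g x - blockMean g y)| :=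
        abs_abs_sub_abs_le_abs_sub _ _
    _ = |(blockMean f x - blockMean g x) - (blockMean f y - blockMean g y)| := by
        rw [sub_sub_sub_comm]
    _ ≤ |blockMean f x - blockMean g x| + |blockMean f y - blockMean g y| := abs_sub _ _

end MeanGap

lemma measure_biUnion_finset_le_card_mul_iSup {ι Ω : Type*} [MeasurableSpace Ω] (μ : Measure Ω)
    (s : Finset ι) (E : ι → Set Ω) :
    μ (⋃ i ∈ s, E i) ≤ s.card * ⨆ i ∈ s, μ (E i) := by
  rw [← nsmul_eq_mul]
  exact (measure_biUnion_finset_le s E).trans <|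
    Finset.sum_le_card_nsmul _ _ _ fun i hi => le_iSup₂_of_le i hi le_rfl

section Discretization

variable {𝒳 : Type*} {m κ : ℕ} {δ : ℝ} {X : Fin 3 → Fin κ → Fin m → 𝒳} {ℱ : Set (𝒳 → ℝ)}
  {F : Finset (𝒳 → ℝ)}

lemma IsEpsDiscretization.exists_abs_meanGap_sub_le (hF : IsEpsDiscretization δ m κ X ℱ F)
    {f : 𝒳 → ℝ} (hf : f ∈ ℱ) :
    ∃ g ∈ F, ∃ I : Finset (Fin κ), (I.card : ℝ) / κ ≤ 2 / 625 ∧ ∀ i ∉ I, ∀ k l : Fin 3,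
      |meanGap f (X k i) (X l i) - meanGap g (X k i) (X l i)| ≤ 2 * δ := by
  obtain ⟨g, hg, I, hI, hfg⟩ := hF f hf
  refine ⟨g, hg, I, div_le_of_le_mul₀ (Nat.cast_nonneg κ) (by norm_num) (by linarith), ?_⟩
  intro i hi k l
  have hmean (l : Fin 3) : |blockMean f (X l i) - blockMean g (X l i)| ≤ δ :=
    (abs_blockMean_sub_le f g (X l i)).trans (hfg i hi l)
  linarith [abs_meanGap_sub_le f g (X k i) (X l i), hmean k, hmean l]

variable {r s t p p' q q' : ℝ}

lemma IsEpsDiscretization.exists_frac_meanGap (hF : IsEpsDiscretization δ m κ X ℱ F)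
    (hsr : s + 2 * δ ≤ r) (hts : t + 2 * δ ≤ s) (hp : p' + 2 / 625 ≤ p)
    (hq : 1 + 2 / 625 ≤ q + q') (c c' : Fin κ → Fin 3) {f : 𝒳 → ℝ} (hf : f ∈ ℱ)
    (hfar : p ≤ frac fun i => r < meanGap f (X (c i) i) (X 2 i))
    (hnear : q < frac fun i => meanGap f (X (c' i) i) (X 2 i) ≤ t) :
    ∃ g ∈ F, p' ≤ (frac fun i => s < meanGap g (X (c i) i) (X 2 i)) ∧
      (frac fun i => s < meanGap g (X (c' i) i) (X 2 i)) < q' := by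
  obtain ⟨g, hg, I, hI, hfg⟩ := hF.exists_abs_meanGap_sub_le hf
  have hfar_le : (frac fun i => r < meanGap f (X (c i) i) (X 2 i)) ≤
      (frac fun i => s < meanGap g (X (c i) i) (X 2 i)) + (I.card : ℝ) / κ :=
    frac_le_frac_add_card_div I fun i hi h => by
      linarith [(abs_le.1 (hfg i hi (c i) 2)).2]
  have hnear_le : (frac fun i => meanGap f (X (c' i) i) (X 2 i) ≤ t) ≤
      (frac fun i => meanGap g (X (c' i) i) (X 2 i) ≤ s) + (I.card : ℝ) / κ :=
    frac_le_frac_add_card_div I fun i hi h => by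
      linarith [(abs_le.1 (hfg i hi (c' i) 2)).1]
  have hcompl : (frac fun i => meanGap g (X (c' i) i) (X 2 i) ≤ s) +
      (frac fun i => s < meanGap g (X (c' i) i) (X 2 i)) ≤ 1 :=
    frac_add_frac_le_one fun _ => not_lt_of_ge
  exact ⟨g, hg, by linarith, by linarith⟩

theorem mom_discretization_general {Ω : Type*} [MeasurableSpace Ω] (μ : Measure Ω)
    (c c' : Ω → Fin κ → Fin 3) (hF : IsEpsDiscretization δ m κ X ℱ F)
    (hsr : s + 2 * δ ≤ r) (hts : t + 2 * δ ≤ s) (hp : p' + 2 / 625 ≤ p)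
    (hq : 1 + 2 / 625 ≤ q + q') :
    μ {ω | ∃ f ∈ ℱ, p ≤ (frac fun i => r < meanGap f (X (c ω i) i) (X 2 i)) ∧
        q < frac fun i => meanGap f (X (c' ω i) i) (X 2 i) ≤ t}
      ≤ F.card * ⨆ f ∈ F, μ {ω | p' ≤ (frac fun i => s < meanGap f (X (c ω i) i) (X 2 i)) ∧
        (frac fun i => s < meanGap f (X (c' ω i) i) (X 2 i)) < q'} := by
  refine (measure_mono ?_).trans (measure_biUnion_finset_le_card_mul_iSup μ F _)
  rintro ω ⟨f, hf, hfar, hnear⟩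
  obtain ⟨g, hg, hg_far, hg_near⟩ :=
    hF.exists_frac_meanGap hsr hts hp hq (c ω) (c' ω) hf hfar hnear
  exact Set.mem_biUnion hg ⟨hg_far, hg_near⟩

end Discretization

/-- Discretization lemma: given an `(ε/16, m)`-discretization `F` of `ℱ` on fixed samples
`X 0, X 1, X 2`, the probability (over uniform `b ∈ {0,1}^κ`) that some `f ∈ ℱ` has
`S_b^{(>)}(f, 15ε/16) ≥ 4801/10000` and `S_{1-b}^{(≤)}(f, 2ε/16) > 9701/10000` is at most
`|F|` times the sup over `f ∈ F` of the probability that `S_b^{(>)}(f, 12ε/16) ≥ 4769/10000`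
and `S_{1-b}^{(>)}(f, 12ε/16) < 331/10000`. -/
theorem mom_discretization
    {𝒳 : Type*} (m κ : ℕ) (ε : ℝ) (hε : 0 < ε)
    (X : Fin 3 → Fin κ → Fin m → 𝒳) (ℱ : Set (𝒳 → ℝ)) (F : Finset (𝒳 → ℝ))
    (hF : IsEpsDiscretization (ε / 16) m κ X ℱ F) :
    (PMF.uniformOfFintype (Fin κ → Fin 2)).toMeasure
      {b | ∃ f ∈ ℱ,
        4801 / 10000 ≤
          (frac fun i =>
            15 * ε / 16 < |blockMean f (X (inc2 (b i)) i) - blockMean f (X 2 i)|) ∧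
        9701 / 10000 <
          frac fun i =>
            |blockMean f (X (inc2 (1 - b i)) i) - blockMean f (X 2 i)| ≤ 2 * ε / 16}
    ≤ (F.card : ENNReal) *
      ⨆ f ∈ F, (PMF.uniformOfFintype (Fin κ → Fin 2)).toMeasure
        {b | 4769 / 10000 ≤
            (frac fun i =>
              12 * ε / 16 < |blockMean f (X (inc2 (b i)) i) - blockMean f (X 2 i)|) ∧
          (frac fun i =>
              12 * ε / 16 < |blockMean f (X (inc2 (1 - b i)) i) - blockMean f (X 2 i)|)
            < 331 / 10000} := by
  simpa only [meanGap] using mom_discretization_general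
    (PMF.uniformOfFintype (Fin κ → Fin 2)).toMeasure
    (fun b i => inc2 (b i)) (fun b i => inc2 (1 - b i)) hF
    (r := 15 * ε / 16) (s := 12 * ε / 16) (t := 2 * ε / 16)
    (p := 4801 / 10000) (p' := 4769 / 10000) (q := 9701 / 10000) (q' := 331 / 10000)
    (by linarith) (by linarith) (by norm_num) (by norm_num)
end

section
/- Let m, κ ∈ ℕ, ε > 0, and X₀, X₁, X₂ ∈ (𝒳^m)^κ be fixed. Then for any function f : 𝒳 → ℝ, P_{b∼Uniform({0,1}^κ)}( S_b^{(>)}(f, 12ε/16) ≥ 4769/10000 and S_{1−b}^{(>)}(f, 12ε/16) < 331/10000 ) ≤ exp(−κ/50). -/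
/-!
Replacing each `bᵢ` by `1 - bᵢ` preserves its uniform distribution, so
`κ (S_b - S_{1-b})` is a sum of `κ` independent variables of mean zero, each a difference of two
indicators and hence with values in `[-1, 1]`. On the event it is at least
`κ (4769 - 331) / 10000`, and Hoeffding's inequality bounds the probability of that by
`exp (-κ (4438 / 10000)² / 2) ≤ exp (-κ / 50)`.
-/

open MeasureTheory

section Hoeffding

open ProbabilityTheory

lemma hasSubgaussianMGF_sub_comp_measurePreserving {Ω : Type*} [MeasurableSpace Ω]
    {μ : Measure Ω} [IsProbabilityMeasure μ] {σ : Ω → Ω} (hσ : MeasurePreserving σ μ μ)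
    {g : Ω → ℝ} (hg : Measurable g) (hg01 : ∀ ω, g ω ∈ Set.Icc 0 1) :
    HasSubgaussianMGF (fun ω => g ω - g (σ ω)) 1 μ := by
  have hgσ : Measurable fun ω => g (σ ω) := hg.comp hσ.measurable
  have hmem : ∀ ω, g ω - g (σ ω) ∈ Set.Icc (-1) 1 := fun ω => by
    constructor <;> linarith [(hg01 ω).1, (hg01 ω).2, (hg01 (σ ω)).1, (hg01 (σ ω)).2]
  have hmean : ∫ ω, g ω - g (σ ω) ∂μ = 0 := by
    rw [integral_sub (.of_mem_Icc 0 1 hg.aemeasurable (.of_forall hg01))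
      (.of_mem_Icc 0 1 hgσ.aemeasurable (.of_forall fun ω => hg01 (σ ω))), sub_eq_zero]
    conv_lhs => rw [← hσ.map_eq, integral_map hσ.aemeasurable hg.aestronglyMeasurable]
  have hparam : (‖(1 : ℝ) - -1‖₊ / 2) ^ 2 = 1 := by
    rw [← NNReal.coe_inj]
    norm_num
  exact hparam ▸ hasSubgaussianMGF_of_mem_Icc_of_integral_eq_zero (hg.sub hgσ).aemeasurable
    (.of_forall hmem) hmean

lemma measureReal_pi_sum_sub_comp_ge_le {ι : Type*} [Fintype ι] {Ω : ι → Type*}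
    [∀ i, MeasurableSpace (Ω i)] {μ : ∀ i, Measure (Ω i)} [∀ i, IsProbabilityMeasure (μ i)]
    {σ : ∀ i, Ω i → Ω i} (hσ : ∀ i, MeasurePreserving (σ i) (μ i) (μ i))
    {g : ∀ i, Ω i → ℝ} (hg : ∀ i, Measurable (g i)) (hg01 : ∀ i x, g i x ∈ Set.Icc 0 1)
    {t : ℝ} (ht : 0 ≤ t) :
    (Measure.pi μ).real {ω | t ≤ ∑ i, (g i (ω i) - g i (σ i (ω i)))}
      ≤ Real.exp (-t ^ 2 / (2 * Fintype.card ι)) := by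
  have hindep : iIndepFun (fun i (ω : ∀ i, Ω i) => g i (ω i) - g i (σ i (ω i))) (Measure.pi μ) :=
    iIndepFun_pi fun i => ((hg i).sub ((hg i).comp (hσ i).measurable)).aemeasurable
  have hsubG (i : ι) :
      HasSubgaussianMGF (fun ω : ∀ i, Ω i => g i (ω i) - g i (σ i (ω i))) 1 (Measure.pi μ) :=
    .of_map (measurable_pi_apply i).aemeasurable <| by
      rw [(measurePreserving_eval μ i).map_eq]
      exact hasSubgaussianMGF_sub_comp_measurePreserving (hσ i) (hg i) (hg01 i)
  simpa using HasSubgaussianMGF.measure_sum_ge_le_of_iIndepFun hindep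
    (s := Finset.univ) (fun i _ => hsubG i) ht

end Hoeffding

lemma toMeasure_uniformOfFintype_singleton {α : Type*} [Fintype α] [Nonempty α]
    [MeasurableSpace α] [MeasurableSingletonClass α] (a : α) :
    (PMF.uniformOfFintype α).toMeasure {a} = (Fintype.card α : ENNReal)⁻¹ := by
  rw [PMF.toMeasure_apply_singleton _ _ (measurableSet_singleton a), PMF.uniformOfFintype_apply]

lemma toMeasure_uniformOfFintype_pi {ι : Type*} [Fintype ι] [DecidableEq ι] {α : ι → Type*}
    [∀ i, Fintype (α i)] [∀ i, Nonempty (α i)] [∀ i, MeasurableSpace (α i)]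
    [∀ i, MeasurableSingletonClass (α i)] :
    (PMF.uniformOfFintype (∀ i, α i)).toMeasure
      = Measure.pi fun i => (PMF.uniformOfFintype (α i)).toMeasure := by
  refine Measure.ext_of_singleton fun ω => ?_
  rw [Measure.pi_singleton]
  simp only [toMeasure_uniformOfFintype_singleton, Fintype.card_pi, Nat.cast_prod]
  exact ENNReal.prod_inv_distrib fun i _ j _ _ => .inr (ENNReal.natCast_ne_top _)

lemma measurePreserving_uniformOfFintype {α : Type*} [Fintype α] [Nonempty α]
    [MeasurableSpace α] [MeasurableSingletonClass α] (σ : Equiv.Perm α) :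
    MeasurePreserving σ (PMF.uniformOfFintype α).toMeasure
      (PMF.uniformOfFintype α).toMeasure := by
  have hσ : Measurable σ := measurable_of_finite σ
  refine ⟨hσ, Measure.ext_of_singleton fun a => ?_⟩
  rw [Measure.map_apply hσ (measurableSet_singleton a), ← Equiv.image_symm_eq_preimage,
    Set.image_singleton, toMeasure_uniformOfFintype_singleton,
    toMeasure_uniformOfFintype_singleton]

open scoped Classical in
lemma natCast_mul_frac {κ : ℕ} (P : Fin κ → Prop) :
    κ * frac P = ∑ i, if P i then 1 else 0 := by
  rw [frac, Finset.sum_boole]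
  exact mul_div_cancel_of_imp' fun hκ => by
    obtain rfl : κ = 0 := by exact_mod_cast hκ
    simp

theorem mom_permutation_general {α : Type*} [Fintype α] [Nonempty α] [MeasurableSpace α]
    [MeasurableSingletonClass α] {κ : ℕ} (q : Fin κ → α → Prop) (σ : Equiv.Perm α) {s t : ℝ}
    (hst : s ≤ t) :
    (PMF.uniformOfFintype (Fin κ → α)).toMeasure
      {b | t ≤ (frac fun i => q i (b i)) ∧ (frac fun i => q i (σ (b i))) < s}
    ≤ ENNReal.ofReal (Real.exp (-(κ * (t - s) ^ 2) / 2)) := by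
  classical
  let g (i : Fin κ) (a : α) : ℝ := if q i a then 1 else 0
  have hg01 (i : Fin κ) (a : α) : g i a ∈ Set.Icc 0 1 := by
    by_cases h : q i a <;> simp [g, h]
  have hevent :
      {b : Fin κ → α | t ≤ (frac fun i => q i (b i)) ∧ (frac fun i => q i (σ (b i))) < s}
        ⊆ {b | κ * (t - s) ≤ ∑ i, (g i (b i) - g i (σ (b i)))} := by
    rintro b ⟨hb, hσb⟩
    rw [Set.mem_ofPred_eq, Finset.sum_sub_distrib, ← natCast_mul_frac, ← natCast_mul_frac,
      ← mul_sub]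
    gcongr
  have hexponent : -(κ * (t - s)) ^ 2 / (2 * Fintype.card (Fin κ)) = -(κ * (t - s) ^ 2) / 2 := by
    rcases eq_or_ne κ 0 with rfl | hκ
    · simp
    · rw [Fintype.card_fin]
      field_simp
  refine (measure_mono hevent).trans ?_
  rw [toMeasure_uniformOfFintype_pi, ← ofReal_measureReal, ← hexponent]
  exact ENNReal.ofReal_le_ofReal <| measureReal_pi_sum_sub_comp_ge_le
    (fun _ => measurePreserving_uniformOfFintype σ) (fun i => measurable_of_finite (g i)) hg01
    (mul_nonneg κ.cast_nonneg (sub_nonneg.mpr hst))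

/-- Permutation lemma: for any fixed samples `X 0, X 1, X 2` and any function `f`, the
probability over uniform `b ∈ {0,1}^κ` that `S_b^{(>)}(f, 12ε/16) ≥ 4769/10000` while
`S_{1-b}^{(>)}(f, 12ε/16) < 331/10000` is at most `exp(-κ/50)`. -/
theorem mom_permutation
    {𝒳 : Type*} (m κ : ℕ) (ε : ℝ) (hε : 0 < ε)
    (X : Fin 3 → Fin κ → Fin m → 𝒳) (f : 𝒳 → ℝ) :
    (PMF.uniformOfFintype (Fin κ → Fin 2)).toMeasure
      {b | 4769 / 10000 ≤
          (frac fun i =>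
            12 * ε / 16 < |blockMean f (X (inc2 (b i)) i) - blockMean f (X 2 i)|) ∧
        (frac fun i =>
            12 * ε / 16 < |blockMean f (X (inc2 (1 - b i)) i) - blockMean f (X 2 i)|)
          < 331 / 10000}
    ≤ ENNReal.ofReal (Real.exp (-(κ : ℝ) / 50)) :=
  (mom_permutation_general (fun i c => 12 * ε / 16 <
    |blockMean f (X (inc2 c) i) - blockMean f (X 2 i)|) (Equiv.subLeft 1) (by norm_num)).trans <|
    ENNReal.ofReal_le_ofReal <| Real.exp_le_exp.mpr <| by linarith [Nat.cast_nonneg (α := ℝ) κ]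
end

section
/- Let 1 ≤ p ≤ 2 and let X₁,…,X_m be i.i.d. real-valued random variables with distribution 𝒟. Let μ̂ = (1/m)·Σ_{i=1}^m X_i, μ = E[X₁], and suppose v_p ≥ E[|X₁ − μ|^p] with v_p < ∞. Then E[|μ̂ − μ|^p] ≤ 2·v_p / m^{p−1}. -/
/-!
For exponents `p ≤ 2`, taking the power `p / 2` of the parallelogram law gives
`‖a + b‖ ^ p + ‖a - b‖ ^ p ≤ 2 * (‖a‖ ^ p + ‖b‖ ^ p)`. If `Y` has zero conditional mean given `X`,
then `X` is the conditional expectation of `X - Y`, so `E ‖X‖ ^ p ≤ E ‖X - Y‖ ^ p` by Jensen.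
Applying the first inequality to `X` and `Y` therefore leaves
`E ‖X + Y‖ ^ p ≤ E ‖X‖ ^ p + 2 * E ‖Y‖ ^ p`: each new independent centred summand costs at most
twice its own `p`-th moment.
-/

open MeasureTheory ProbabilityTheory

section Moments

variable {Ω E : Type*} {m mΩ : MeasurableSpace Ω} {P : Measure Ω} [NormedAddCommGroup E] {p : ℝ}

lemma integrable_norm_rpow_iff_memLp_ofReal {X : Ω → E} (hX : AEStronglyMeasurable X P)
    (hp : 0 < p) : Integrable (fun ω ↦ ‖X ω‖ ^ p) P ↔ MemLp X (.ofReal p) P := by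
  simpa only [ENNReal.toReal_ofReal hp.le] using
    integrable_norm_rpow_iff hX (ENNReal.ofReal_pos.2 hp).ne' ENNReal.ofReal_ne_top

lemma integral_norm_rpow_le_integral_norm_sub_rpow_of_condExp_eq_zero [NormedSpace ℝ E]
    [CompleteSpace E] [IsFiniteMeasure P] (hm : m ≤ mΩ) (hp : 1 ≤ p) {X Y : Ω → E}
    (hXm : AEStronglyMeasurable[m] X P) (hX : MemLp X (.ofReal p) P) (hY : MemLp Y (.ofReal p) P)
    (hYm : P[Y | m] =ᵐ[P] 0) :
    ∫ ω, ‖X ω‖ ^ p ∂P ≤ ∫ ω, ‖X ω - Y ω‖ ^ p ∂P := by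
  have one_le : 1 ≤ ENNReal.ofReal p := ENNReal.one_le_ofReal.2 hp
  have hcond : P[X - Y | m] =ᵐ[P] X := by
    filter_upwards [condExp_sub (hX.integrable one_le) (hY.integrable one_le) m,
      condExp_of_aestronglyMeasurable' hm hXm (hX.integrable one_le), hYm] with ω hsub hXω hYω
    rw [hsub, Pi.sub_apply, hXω, hYω, Pi.zero_apply, sub_zero]
  have hint : Integrable (fun ω ↦ ‖(X - Y) ω‖ ^ p) P :=
    (integrable_norm_rpow_iff_memLp_ofReal (hX.sub hY).1 (by linarith)).2 (hX.sub hY)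
  calc ∫ ω, ‖X ω‖ ^ p ∂P = ∫ ω, ‖P[X - Y | m] ω‖ ^ p ∂P :=
        integral_congr_ae <| hcond.symm.fun_comp fun x ↦ ‖x‖ ^ p
    _ ≤ ∫ ω, ‖X ω - Y ω‖ ^ p ∂P := integral_norm_condExp_rpow_le hp hint

variable [InnerProductSpace ℝ E]

lemma norm_add_rpow_add_norm_sub_rpow_le (hp₀ : 0 ≤ p) (hp₂ : p ≤ 2) (a b : E) :
    ‖a + b‖ ^ p + ‖a - b‖ ^ p ≤ 2 * (‖a‖ ^ p + ‖b‖ ^ p) := by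
  have rpow_eq (x : E) : ‖x‖ ^ p = (‖x‖ ^ 2) ^ (p / 2) := by
    rw [← Real.rpow_natCast_mul (norm_nonneg x), Nat.cast_ofNat, mul_div_cancel₀ p two_ne_zero]
  have midpoint_eq : (1 / 2 : ℝ) • ‖a + b‖ ^ 2 + (1 / 2 : ℝ) • ‖a - b‖ ^ 2 = ‖a‖ ^ 2 + ‖b‖ ^ 2 := by
    rw [← smul_add, parallelogram_law_with_norm ℝ a b, smul_eq_mul]
    ring
  have concave : (1 / 2 : ℝ) • (‖a + b‖ ^ 2) ^ (p / 2) + (1 / 2 : ℝ) • (‖a - b‖ ^ 2) ^ (p / 2)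
      ≤ (‖a‖ ^ 2 + ‖b‖ ^ 2) ^ (p / 2) := by
    rw [← midpoint_eq]
    exact (Real.concaveOn_rpow (by linarith) (by linarith)).2 (sq_nonneg ‖a + b‖)
      (sq_nonneg ‖a - b‖) one_half_pos.le one_half_pos.le (add_halves 1)
  have subadditive : (‖a‖ ^ 2 + ‖b‖ ^ 2) ^ (p / 2) ≤ (‖a‖ ^ 2) ^ (p / 2) + (‖b‖ ^ 2) ^ (p / 2) :=
    Real.rpow_add_le_add_rpow (sq_nonneg _) (sq_nonneg _) (by linarith) (by linarith)
  rw [smul_eq_mul, smul_eq_mul] at concave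
  simp only [rpow_eq]
  linarith

variable [CompleteSpace E]

lemma integral_norm_add_rpow_le_of_condExp_eq_zero [IsFiniteMeasure P] (hm : m ≤ mΩ)
    (hp₁ : 1 ≤ p) (hp₂ : p ≤ 2) {X Y : Ω → E} (hXm : AEStronglyMeasurable[m] X P)
    (hX : MemLp X (.ofReal p) P) (hY : MemLp Y (.ofReal p) P) (hYm : P[Y | m] =ᵐ[P] 0) :
    ∫ ω, ‖X ω + Y ω‖ ^ p ∂P ≤ ∫ ω, ‖X ω‖ ^ p ∂P + 2 * ∫ ω, ‖Y ω‖ ^ p ∂P := by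
  have integrable_rpow {Z : Ω → E} (hZ : MemLp Z (.ofReal p) P) :
      Integrable (fun ω ↦ ‖Z ω‖ ^ p) P :=
    (integrable_norm_rpow_iff_memLp_ofReal hZ.1 (by linarith)).2 hZ
  have jensen : ∫ ω, ‖X ω‖ ^ p ∂P ≤ ∫ ω, ‖X ω - Y ω‖ ^ p ∂P :=
    integral_norm_rpow_le_integral_norm_sub_rpow_of_condExp_eq_zero hm hp₁ hXm hX hY hYm
  have clarkson : ∫ ω, ‖X ω + Y ω‖ ^ p ∂P + ∫ ω, ‖X ω - Y ω‖ ^ p ∂P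
      ≤ 2 * (∫ ω, ‖X ω‖ ^ p ∂P + ∫ ω, ‖Y ω‖ ^ p ∂P) := by
    have hadd := integrable_rpow (hX.add hY)
    have hsub := integrable_rpow (hX.sub hY)
    simp only [Pi.add_apply, Pi.sub_apply] at hadd hsub
    rw [← integral_add hadd hsub, ← integral_add (integrable_rpow hX) (integrable_rpow hY),
      ← integral_const_mul]
    exact integral_mono (hadd.add hsub)
      (((integrable_rpow hX).add (integrable_rpow hY)).const_mul 2)
      fun ω ↦ norm_add_rpow_add_norm_sub_rpow_le (by linarith) hp₂ (X ω) (Y ω)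
  linarith

variable [MeasurableSpace E] [BorelSpace E] [SecondCountableTopology E]

lemma integral_norm_add_rpow_le_of_indepFun [IsFiniteMeasure P] (hp₁ : 1 ≤ p) (hp₂ : p ≤ 2)
    {X Y : Ω → E} (hX : MemLp X (.ofReal p) P) (hY : MemLp Y (.ofReal p) P)
    (hXY : IndepFun X Y P) (hY₀ : P[Y] = 0) :
    ∫ ω, ‖X ω + Y ω‖ ^ p ∂P ≤ ∫ ω, ‖X ω‖ ^ p ∂P + 2 * ∫ ω, ‖Y ω‖ ^ p ∂P := by
  wlog hmeas : Measurable X ∧ Measurable Y generalizing X Y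
  · obtain ⟨X', hX', hXX'⟩ := hX.1.aemeasurable
    obtain ⟨Y', hY', hYY'⟩ := hY.1.aemeasurable
    have integral_congr {Z Z' : Ω → E} (h : Z =ᵐ[P] Z') :
        ∫ ω, ‖Z ω‖ ^ p ∂P = ∫ ω, ‖Z' ω‖ ^ p ∂P :=
      integral_congr_ae (h.fun_comp fun x ↦ ‖x‖ ^ p)
    rw [integral_congr hXX', integral_congr hYY', integral_congr (hXX'.fun_add hYY')]
    exact this (hX.ae_eq hXX') (hY.ae_eq hYY') (hXY.congr hXX' hYY')
      (by rw [← integral_congr_ae hYY', hY₀]) ⟨hX', hY'⟩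
  obtain ⟨hXmeas, hYmeas⟩ := hmeas
  have hcond : P[Y | MeasurableSpace.comap X inferInstance] =ᵐ[P] fun _ ↦ 0 := by
    simpa only [hY₀] using condExp_indep_eq hYmeas.comap_le hXmeas.comap_le
      (comap_measurable Y).stronglyMeasurable hXY.symm
  exact integral_norm_add_rpow_le_of_condExp_eq_zero hXmeas.comap_le hp₁ hp₂
    (comap_measurable X).aestronglyMeasurable hX hY hcond

lemma integral_norm_sum_rpow_le_of_iIndepFun {ι : Type*} (hp₁ : 1 ≤ p) (hp₂ : p ≤ 2)
    {X : ι → Ω → E} (hX : ∀ i, MemLp (X i) (.ofReal p) P) (hindep : iIndepFun X P)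
    (hX₀ : ∀ i, P[X i] = 0) (s : Finset ι) :
    ∫ ω, ‖∑ i ∈ s, X i ω‖ ^ p ∂P ≤ 2 * ∑ i ∈ s, ∫ ω, ‖X i ω‖ ^ p ∂P := by
  have := hindep.isProbabilityMeasure
  induction s using Finset.cons_induction with
  | empty => simp [Real.zero_rpow (by linarith : p ≠ 0)]
  | cons j s hj ih =>
    have hsum_indep : IndepFun (∑ i ∈ s, X i) (X j) P :=
      hindep.indepFun_finsetSum_of_notMem₀ (fun i ↦ (hX i).1.aemeasurable) hj
    have hsum_memLp : MemLp (∑ i ∈ s, X i) (.ofReal p) P := memLp_finsetSum' s fun i _ ↦ hX i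
    have hstep := integral_norm_add_rpow_le_of_indepFun hp₁ hp₂ hsum_memLp (hX j) hsum_indep (hX₀ j)
    simp only [Finset.sum_apply, add_comm _ (X j _)] at hstep
    simp only [Finset.sum_cons, mul_add]
    linarith

end Moments

lemma inv_card_smul_sum_sub {𝕜 ι E : Type*} [DivisionRing 𝕜] [CharZero 𝕜] [Fintype ι] [Nonempty ι]
    [AddCommGroup E] [Module 𝕜 E] (x : ι → E) (c : E) :
    (Fintype.card ι : 𝕜)⁻¹ • ∑ i, x i - c = (Fintype.card ι : 𝕜)⁻¹ • ∑ i, (x i - c) := by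
  have hcard : (Fintype.card ι : 𝕜) ≠ 0 := Nat.cast_ne_zero.2 Fintype.card_ne_zero
  rw [Finset.sum_sub_distrib, Finset.sum_const, Finset.card_univ, smul_sub,
    ← Nat.cast_smul_eq_nsmul 𝕜, inv_smul_smul₀ hcard]

theorem von_bahr_esseen_sample_mean_general {ι Ω E : Type*} [Fintype ι] [Nonempty ι]
    {mΩ : MeasurableSpace Ω} {P : Measure Ω} [NormedAddCommGroup E] [InnerProductSpace ℝ E]
    [CompleteSpace E] [MeasurableSpace E] [BorelSpace E] [SecondCountableTopology E]
    {X : ι → Ω → E} {p : ℝ} (hp₁ : 1 ≤ p) (hp₂ : p ≤ 2) (hX : ∀ i, MemLp (X i) (.ofReal p) P)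
    (hindep : iIndepFun X P) {c : E} (hmean : ∀ i, P[X i] = c) {v : ℝ}
    (hv : ∀ i, ∫ ω, ‖X i ω - c‖ ^ p ∂P ≤ v) :
    ∫ ω, ‖(Fintype.card ι : ℝ)⁻¹ • ∑ i, X i ω - c‖ ^ p ∂P
      ≤ 2 * v / (Fintype.card ι : ℝ) ^ (p - 1) := by
  have := hindep.isProbabilityMeasure
  have hcard : (0 : ℝ) < Fintype.card ι := Nat.cast_pos.2 Fintype.card_pos
  have hcentred (i : ι) : ∫ ω, (X i ω - c) ∂P = 0 := by
    rw [integral_sub ((hX i).integrable (ENNReal.one_le_ofReal.2 hp₁)) (integrable_const c), hmean,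
      integral_const, probReal_univ, one_smul, sub_self]
  have hsum : ∫ ω, ‖∑ i, (X i ω - c)‖ ^ p ∂P ≤ 2 * ∑ i, ∫ ω, ‖X i ω - c‖ ^ p ∂P :=
    integral_norm_sum_rpow_le_of_iIndepFun hp₁ hp₂ (fun i ↦ (hX i).sub (memLp_const c))
      (hindep.comp (fun _ x ↦ x - c) fun _ ↦ by fun_prop) hcentred Finset.univ
  have hmoments : ∑ i, ∫ ω, ‖X i ω - c‖ ^ p ∂P ≤ Fintype.card ι * v := by
    rw [← nsmul_eq_mul, ← Finset.card_univ]
    exact Finset.sum_le_card_nsmul _ _ v fun i _ ↦ hv i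
  calc ∫ ω, ‖(Fintype.card ι : ℝ)⁻¹ • ∑ i, X i ω - c‖ ^ p ∂P
      = (∫ ω, ‖∑ i, (X i ω - c)‖ ^ p ∂P) / (Fintype.card ι : ℝ) ^ p := by
        simp only [inv_card_smul_sum_sub, norm_smul, norm_inv, Real.norm_natCast,
          inv_mul_eq_div, Real.div_rpow (norm_nonneg _) hcard.le, integral_div]
    _ ≤ 2 * (Fintype.card ι * v) / (Fintype.card ι : ℝ) ^ p := by
        gcongr
        linarith
    _ = 2 * v / (Fintype.card ι : ℝ) ^ (p - 1) := by
        rw [Real.rpow_sub_one hcard.ne']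
        field_simp

/-- Von Bahr–Esseen type inequality: for `1 ≤ p ≤ 2` and i.i.d. real random variables
`X₁, …, X_m` with distribution `𝒟`, mean `μ` and `p`-th central moment at most `v_p`,
the sample mean `μ̂` satisfies `E[|μ̂ - μ|^p] ≤ 2 v_p / m^{p-1}`. -/
theorem von_bahr_esseen_sample_mean
    (𝒟 : Measure ℝ) [IsProbabilityMeasure 𝒟]
    (p : ℝ) (hp1 : 1 ≤ p) (hp2 : p ≤ 2)
    (hint : Integrable (fun x => x) 𝒟)
    (v : ℝ)
    (hvint : Integrable (fun x => |x - ∫ y, y ∂𝒟| ^ p) 𝒟)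
    (hv : ∫ x, |x - ∫ y, y ∂𝒟| ^ p ∂𝒟 ≤ v)
    (m : ℕ) (hm : 0 < m) :
    ∫ X, |(∑ i, X i) / m - ∫ y, y ∂𝒟| ^ p ∂(Measure.pi fun _ : Fin m => 𝒟)
      ≤ 2 * v / (m : ℝ) ^ (p - 1) := by
  have : NeZero m := ⟨hm.ne'⟩
  have hcoord (i : Fin m) : HasLaw (Function.eval i) 𝒟 (Measure.pi fun _ : Fin m ↦ 𝒟) :=
    (measurePreserving_eval (fun _ : Fin m ↦ 𝒟) i).hasLaw
  have hcentred : MemLp (fun x ↦ x - ∫ y, y ∂𝒟) (.ofReal p) 𝒟 :=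
    (integrable_norm_rpow_iff_memLp_ofReal (by fun_prop) (by linarith)).1 hvint
  have hmemLp : MemLp (fun x ↦ x) (.ofReal p) 𝒟 := by
    simpa [Pi.add_def] using hcentred.add (memLp_const (∫ y, y ∂𝒟))
  simpa [div_eq_inv_mul] using von_bahr_esseen_sample_mean_general hp1 hp2
    (fun i ↦ hmemLp.comp_measurePreserving (measurePreserving_eval _ i))
    (iIndepFun_pi fun _ ↦ aemeasurable_id) (fun i ↦ (hcoord i).integral_eq)
    fun i ↦ ((hcoord i).integral_comp hvint.1).trans_le hv
end

section
/- Let k ∈ ℕ, let 𝒟 be a distribution over ℝ^d with mean μ = E_{X∼𝒟}[X] and σ² = E_{X∼𝒟}[‖X − μ‖²] < ∞. Then the class ℱ_k of normalized k-means loss functions admits a 𝒟-discretization with threshold function κ₀(δ) = 2·8000²·ln(e/δ), threshold ε₀ = 1, and size function N(ε, m) = 8·(72·10⁴·8000·e/ε)^{140·k·d·ln(6k)}. -/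
open MeasureTheory

/-- Squared distance from a point `x` to the nearest of the `k` centers `Q`. -/
noncomputable def dQsq {d k : ℕ} (Q : Fin k → EuclideanSpace ℝ (Fin d))
    (x : EuclideanSpace ℝ (Fin d)) : ℝ :=
  ⨅ i, ‖x - Q i‖ ^ 2

/-- The normalized `k`-means loss `f_Q(x) = 2 d(x,Q)² / (σ² + E[d(X,Q)²])`. -/
noncomputable def normalizedKMeansLoss {d k : ℕ} (𝒟 : Measure (EuclideanSpace ℝ (Fin d)))
    (Q : Fin k → EuclideanSpace ℝ (Fin d)) (x : EuclideanSpace ℝ (Fin d)) : ℝ :=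
  2 * dQsq Q x / ((∫ y, ‖y - ∫ z, z ∂𝒟‖ ^ 2 ∂𝒟) + ∫ y, dQsq Q y ∂𝒟)

/-- The class `ℱ_k` of normalized `k`-means loss functions. -/
def kmeansClass (d k : ℕ) (𝒟 : Measure (EuclideanSpace ℝ (Fin d))) :
    Set (EuclideanSpace ℝ (Fin d) → ℝ) :=
  {f | ∃ Q : Fin k → EuclideanSpace ℝ (Fin d), f = normalizedKMeansLoss 𝒟 Q}

/-- `ℱ` admits a `𝒟`-discretization with threshold function `κ₀`, threshold `ε₀` and
size function `N`. -/
def AdmitsDDiscretization {𝒳 : Type*} [MeasurableSpace 𝒳] (𝒟 : Measure 𝒳)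
    [IsProbabilityMeasure 𝒟] (ℱ : Set (𝒳 → ℝ))
    (κ₀ : ℝ → ℝ) (ε₀ : ℝ) (N : ℝ → ℕ → ℝ) : Prop :=
  ∀ ε δ : ℝ, 0 < ε → ε < ε₀ → 0 < δ → δ < 1 → ∀ m κ : ℕ, 1 ≤ m → κ₀ δ ≤ (κ : ℝ) →
    ENNReal.ofReal (1 - δ) ≤
      (Measure.pi fun _ : Fin 3 => Measure.pi fun _ : Fin κ => Measure.pi fun _ : Fin m => 𝒟)
        {X | ∃ F : Finset (𝒳 → ℝ), IsEpsDiscretization ε m κ X ℱ F ∧ (F.card : ℝ) ≤ N ε m}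

/-!
Translate the mean to `0`, let `σ²` be the variance, and divide the points by `σ`: a normalized loss
becomes `y ↦ ⨅ i, 2 * ‖a • y - w i‖ ^ 2` with a scale `a ≤ 1`. The squared distance from the mean to
the nearest center is at most twice the normalizer, so `‖w i‖ ^ 2 ≤ 2` for some `i`, and the minimum
does not change if the loss of each center is capped at `4 * a ^ 2 * ‖y‖ ^ 2 + 8`.

Centers of norm at most `4` are covered by a finite net. For a far center `w` put `s = ‖w‖ / a`. On
`‖y‖ ≤ s / 4` the cap is attained, and on `‖y‖ > s / θ` the center is negligible against `y`, so its
exact position matters only for `s / 4 < ‖y‖ ≤ s / θ`. Both radii are recorded through the mass of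
the corresponding balls, for the empirical measure weighted with `1 + ‖y‖ ^ 2`. Two values of `s`
which share a point of such a shell differ by a factor of at most `4 / θ`, so besides the direction
of `w` it suffices to record `log s` modulo `log (4 / θ)`. Hence the number of cells depends neither
on the number of blocks nor on their length.

Two centers of one cell have close losses off a set of small weighted mass, which spoils only a few
blocks. The remaining bad blocks are those with a large empirical second moment; there are few of
them by Markov's inequality on each block and Chernoff's bound over the blocks.
-/

/-! ### Finite partitions -/

/-- `HasPartition r N`: the type `S` can be cut into at most `N` cells in such a way that any two
points of the same cell are related by `r`. The bound `N` is real, so that the counts of the parts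
of a construction can be multiplied out without rounding. -/
def HasPartition {S : Type*} (r : S → S → Prop) (N : ℝ) : Prop :=
  ∃ (n : ℕ) (L : S → Fin n), (n : ℝ) ≤ N ∧ ∀ s t, L s = L t → r s t

namespace HasPartition

variable {S : Type*} {r r' : S → S → Prop} {M N : ℝ}

theorem of_label {τ : Type*} [Fintype τ] (L : S → τ) (hN : (Fintype.card τ : ℝ) ≤ N)
    (h : ∀ s t, L s = L t → r s t) : HasPartition r N :=
  ⟨Fintype.card τ, Fintype.equivFin τ ∘ L, hN,
    fun s t hst => h s t ((Fintype.equivFin τ).injective hst)⟩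

theorem nonneg (h : HasPartition r N) : 0 ≤ N := by
  obtain ⟨n, -, hn, -⟩ := h
  exact n.cast_nonneg.trans hn

theorem mono (h : HasPartition r M) (hrr' : ∀ s t, r s t → r' s t) (hMN : M ≤ N) :
    HasPartition r' N := by
  obtain ⟨n, L, hn, hL⟩ := h
  exact ⟨n, L, hn.trans hMN, fun s t hst => hrr' s t (hL s t hst)⟩

theorem and (h : HasPartition r M) (h' : HasPartition r' N) :
    HasPartition (fun s t => r s t ∧ r' s t) (M * N) := by
  have hM := h.nonneg
  obtain ⟨m, L, hm, hL⟩ := h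
  obtain ⟨n, L', hn, hL'⟩ := h'
  refine of_label (fun s => (L s, L' s)) ?_ fun s t hst => ?_
  · simp only [Fintype.card_prod, Fintype.card_fin, Nat.cast_mul]
    gcongr
  · exact ⟨hL s t (congrArg Prod.fst hst), hL' s t (congrArg Prod.snd hst)⟩

theorem forall_and {ι : Type*} [Fintype ι] {r : ι → S → S → Prop}
    (h : ∀ i, HasPartition (r i) N) :
    HasPartition (fun s t => ∀ i, r i s t) (N ^ Fintype.card ι) := by
  classical
  choose n L hn hL using h
  refine of_label (fun s i => L i s) ?_ fun s t hst i => hL i s t (congrFun hst i)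
  calc (Fintype.card (∀ i, Fin (n i)) : ℝ) = ∏ i, (n i : ℝ) := by simp
    _ ≤ ∏ _i : ι, N := by gcongr with i; exact hn i
    _ = N ^ Fintype.card ι := by simp

theorem split (p : S → Prop) (h : HasPartition (fun s t : {s // p s} => r s t) M)
    (h' : HasPartition (fun s t : {s // ¬ p s} => r s t) N) : HasPartition r (M + N) := by
  classical
  obtain ⟨m, L, hm, hL⟩ := h
  obtain ⟨n, L', hn, hL'⟩ := h'
  refine of_label (fun s => if hs : p s then Sum.inl (L ⟨s, hs⟩) else Sum.inr (L' ⟨s, hs⟩)) ?_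
    fun s t hst => ?_
  · simp only [Fintype.card_sum, Fintype.card_fin, Nat.cast_add]
    gcongr
  · by_cases hs : p s <;> by_cases ht : p t <;> simp only [hs, ht, dite_true, dite_false,
      Sum.inl.injEq, Sum.inr.injEq, reduceCtorEq] at hst
    · exact hL ⟨s, hs⟩ ⟨t, ht⟩ hst
    · exact hL' ⟨s, hs⟩ ⟨t, ht⟩ hst

theorem exists_representatives (h : HasPartition r N) :
    ∃ R : Finset S, (R.card : ℝ) ≤ N ∧ ∀ s, ∃ t ∈ R, r s t := by
  classical
  obtain ⟨n, L, hn, hL⟩ := h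
  have pick (j : Set.range L) : ∃ s, L s = j := j.2
  choose g hg using pick
  refine ⟨Finset.univ.image g, hn.trans' (Nat.cast_le.2 ?_), fun s =>
    ⟨g ⟨L s, s, rfl⟩, Finset.mem_image_of_mem _ (Finset.mem_univ _),
      hL _ _ (hg ⟨L s, s, rfl⟩).symm⟩⟩
  calc (Finset.univ.image g).card ≤ Fintype.card (Set.range L) := Finset.card_image_le
    _ ≤ Fintype.card (Fin n) := Fintype.card_subtype_le _
    _ = n := Fintype.card_fin n

end HasPartition

theorem hasPartition_abs_sub_le {S : Type*} {f : S → ℝ} {M θ : ℝ} (hθ : 0 < θ) (hM : 0 ≤ M)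
    (hf : ∀ s, f s ∈ Set.Icc 0 M) :
    HasPartition (fun s t => |f s - f t| ≤ θ) (M / θ + 1) := by
  have hfloor (s : S) : ⌊f s / θ⌋₊ < ⌊M / θ⌋₊ + 1 :=
    Nat.lt_succ_of_le (Nat.floor_le_floor (by gcongr; exact (hf s).2))
  refine .of_label (fun s => (⟨⌊f s / θ⌋₊, hfloor s⟩ : Fin (⌊M / θ⌋₊ + 1))) ?_ fun s t hst => ?_
  · rw [Fintype.card_fin, Nat.cast_add_one]
    gcongr
    exact Nat.floor_le (by positivity)
  · have hnonneg (u : S) : 0 ≤ f u / θ := div_nonneg (hf u).1 hθ.le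
    have hlt : |f s / θ - f t / θ| < 1 := by
      refine Int.abs_sub_lt_one_of_floor_eq_floor ?_
      rw [← Int.natCast_floor_eq_floor (hnonneg s), ← Int.natCast_floor_eq_floor (hnonneg t)]
      exact congrArg Nat.cast (Fin.mk.inj_iff.1 hst)
    rw [← sub_div, abs_div, abs_of_pos hθ, div_lt_one hθ] at hlt
    exact hlt.le

/-- The label rounds `f` to a multiple of `θ` and keeps the multiple modulo some `K > L / θ`: two
values with the same label are within `θ` of each other or more than `L` apart. -/
theorem hasPartition_abs_sub_le_of_abs_sub_le {S : Type*} (f : S → ℝ) {L θ : ℝ} (hθ : 0 < θ)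
    (hL : 0 ≤ L) :
    HasPartition (fun s t => |f s - f t| ≤ L → |f s - f t| ≤ θ) (L / θ + 2) := by
  set K : ℕ := ⌈L / θ⌉₊ + 1 with hK
  refine .of_label (fun s => (⌊f s / θ⌋ : ZMod K)) ?_ fun s t hst hle => ?_
  · rw [ZMod.card, hK, Nat.cast_add_one]
    linarith [Nat.ceil_lt_add_one (show 0 ≤ L / θ by positivity)]
  · have hdvd : (K : ℤ) ∣ ⌊f t / θ⌋ - ⌊f s / θ⌋ := (ZMod.intCast_eq_intCast_iff_dvd_sub _ _ _).1 hst
    have hdiff : |f t / θ - f s / θ| ≤ L / θ := by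
      rw [← sub_div, abs_div, abs_of_pos hθ, abs_sub_comm]
      gcongr
    have hlt : |⌊f t / θ⌋ - ⌊f s / θ⌋| < (K : ℤ) := by
      have hKle : L / θ + 1 ≤ (K : ℝ) := by
        rw [hK, Nat.cast_add_one]
        linarith [Nat.le_ceil (L / θ)]
      rify
      rw [abs_le] at hdiff
      rw [abs_lt]
      constructor <;> linarith [Int.floor_le (f s / θ), Int.lt_floor_add_one (f s / θ),
        Int.floor_le (f t / θ), Int.lt_floor_add_one (f t / θ)]
    have heq : ⌊f t / θ⌋ - ⌊f s / θ⌋ = 0 := Int.eq_zero_of_abs_lt_dvd hdvd hlt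
    have hone := Int.abs_sub_lt_one_of_floor_eq_floor (sub_eq_zero.1 heq).symm
    rw [← sub_div, abs_div, abs_of_pos hθ, div_lt_one hθ] at hone
    exact hone.le

/-! ### Nets of balls -/

section Net

variable {E : Type*} [NormedAddCommGroup E] [NormedSpace ℝ E] [FiniteDimensional ℝ E]

/-- Volume comparison: the balls of radius `δ / 2` around the points of `s` are disjoint and lie in
the ball of radius `R + δ / 2`. -/
theorem card_le_of_separated_of_norm_le {R δ : ℝ} (hR : 0 ≤ R) (hδ : 0 < δ) (s : Finset E)
    (hs : ∀ c ∈ s, ‖c‖ ≤ R) (hsep : (s : Set E).Pairwise fun c c' => δ ≤ dist c c') :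
    (s.card : ℝ) ≤ (1 + 2 * R / δ) ^ Module.finrank ℝ E := by
  borelize E
  let μ : Measure E := Measure.addHaar
  have hδ2 : 0 < δ / 2 := by positivity
  have hρ : 0 < R + δ / 2 := by positivity
  have hdisj : (s : Set E).PairwiseDisjoint fun c => Metric.ball c (δ / 2) :=
    fun c hc c' hc' hcc' => Metric.ball_disjoint_ball (by linarith [hsep hc hc' hcc'])
  have hsub : (⋃ c ∈ s, Metric.ball c (δ / 2)) ⊆ Metric.ball 0 (R + δ / 2) :=
    Set.iUnion₂_subset fun c hc => Metric.ball_subset_ball' (by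
      rw [dist_zero_right]
      linarith [hs c hc])
  have hμ {r : ℝ} (hr : 0 < r) (c : E) :
      μ.real (Metric.ball c r) = r ^ Module.finrank ℝ E * μ.real (Metric.ball 0 1) := by
    rw [measureReal_def, μ.addHaar_ball_of_pos c hr, ENNReal.toReal_mul,
      ENNReal.toReal_ofReal (by positivity), measureReal_def]
  have hvol : s.card * (δ / 2) ^ Module.finrank ℝ E * μ.real (Metric.ball 0 1) ≤
      (R + δ / 2) ^ Module.finrank ℝ E * μ.real (Metric.ball 0 1) := by
    calc s.card * (δ / 2) ^ Module.finrank ℝ E * μ.real (Metric.ball 0 1)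
        = μ.real (⋃ c ∈ s, Metric.ball c (δ / 2)) := by
          rw [measureReal_biUnion_finset hdisj fun c _ => measurableSet_ball]
          simp only [hμ hδ2, Finset.sum_const, nsmul_eq_mul, mul_assoc]
      _ ≤ μ.real (Metric.ball 0 (R + δ / 2)) := measureReal_mono hsub
      _ = (R + δ / 2) ^ Module.finrank ℝ E * μ.real (Metric.ball 0 1) :=
          hμ hρ _
  have hball : 0 < μ.real (Metric.ball 0 1) :=
    ENNReal.toReal_pos (Metric.measure_ball_pos μ 0 one_pos).ne' measure_ball_lt_top.ne
  rw [show 1 + 2 * R / δ = (R + δ / 2) / (δ / 2) by field_simp; ring, div_pow,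
    le_div_iff₀ (by positivity)]
  exact le_of_mul_le_mul_right hvol hball

open Metric in
theorem packingNumber_closedBall_le {R : ℝ} (hR : 0 ≤ R) {δ : NNReal} (hδ : 0 < δ) :
    packingNumber δ (closedBall (0 : E) R) ≤ ⌊(1 + 2 * R / δ) ^ Module.finrank ℝ E⌋₊ := by
  refine iSup₂_le fun C hC => iSup_le fun hsep => ?_
  by_contra! hlt
  obtain ⟨t, htC, ht⟩ := Set.exists_subset_encard_eq (Order.add_one_le_of_lt hlt)
  have htfin : t.Finite := Set.finite_of_encard_eq_coe (by exact_mod_cast ht)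
  lift t to Finset E using htfin
  have hle := card_le_of_separated_of_norm_le hR (NNReal.coe_pos.2 hδ) t
    (fun c hc => mem_closedBall_zero_iff.1 (hC (htC hc))) fun c hc c' hc' hcc' => by
      have hlt' : (δ : ENNReal) < edist c c' := hsep (htC hc) (htC hc') hcc'
      rw [edist_nndist, ENNReal.coe_lt_coe] at hlt'
      exact_mod_cast hlt'.le
  rw [Set.encard_coe_eq_coe_finsetCard] at ht
  have hcard : t.card = ⌊(1 + 2 * R / δ) ^ Module.finrank ℝ E⌋₊ + 1 := by exact_mod_cast ht
  exact absurd (Nat.le_floor hle) (by lia)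

open Metric in
theorem hasPartition_norm_sub_le {S : Type*} {f : S → E} {R θ : ℝ} (hR : 0 ≤ R) (hθ : 0 < θ)
    (hf : ∀ s, ‖f s‖ ≤ R) :
    HasPartition (fun s t => ‖f s - f t‖ ≤ θ) ((1 + 4 * R / θ) ^ Module.finrank ℝ E) := by
  lift θ to NNReal using hθ.le
  have hpack := packingNumber_closedBall_le (E := E) hR (half_pos (NNReal.coe_pos.1 hθ))
  have htop : packingNumber (θ / 2) (closedBall (0 : E) R) ≠ ⊤ :=
    ne_top_of_le_ne_top (by simp) hpack
  set T := maximalSeparatedSet (θ / 2) (closedBall (0 : E) R)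
  rw [← encard_maximalSeparatedSet htop] at hpack
  have hTfin : T.Finite := Set.finite_of_encard_le_coe hpack
  have := hTfin.fintype
  have hcover (s : S) : ∃ c : T, dist (f s) c ≤ θ / 2 := by
    obtain ⟨c, hc, hsc⟩ := isCover_maximalSeparatedSet htop (mem_closedBall_zero_iff.2 (hf s))
    exact ⟨⟨c, hc⟩, by exact_mod_cast edist_le_coe.1 hsc⟩
  choose c hc using hcover
  refine .of_label c ?_ fun s t hst => ?_
  · rw [← T.coe_fintypeCard, Nat.cast_le, Nat.le_floor_iff (by positivity)] at hpack
    refine hpack.trans_eq ?_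
    rw [show 4 * R / θ = 2 * R / (θ / 2 : NNReal) by push_cast; field_simp; ring]
  · rw [← dist_eq_norm]
    calc dist (f s) (f t) ≤ dist (f s) (c s) + dist (f t) (c s) := dist_triangle_right _ _ _
      _ ≤ θ / 2 + θ / 2 := add_le_add (hc s) (hst ▸ hc t)
      _ = θ := add_halves _

end Net

/-! ### The capped loss of one center -/

section CappedLoss

variable {E : Type*} [NormedAddCommGroup E]

theorem abs_norm_sq_sub_norm_sq_le (u v : E) :
    |‖u‖ ^ 2 - ‖v‖ ^ 2| ≤ ‖u - v‖ * (‖u‖ + ‖v‖) := by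
  rw [sq_sub_sq, abs_mul, abs_of_nonneg (by positivity), mul_comm]
  gcongr
  exact abs_norm_sub_norm_le u v

variable [NormedSpace ℝ E]

theorem norm_sub_le_of_norm_inv_smul_sub_le {w w' : E} {θ : ℝ}
    (h : ‖‖w‖⁻¹ • w - ‖w'‖⁻¹ • w'‖ ≤ θ) : ‖w - w'‖ ≤ |‖w‖ - ‖w'‖| + ‖w‖ * θ := by
  have hpolar (v : E) : ‖v‖ • ‖v‖⁻¹ • v = v := by
    rcases eq_or_ne v 0 with rfl | hv
    · simp
    · exact smul_inv_smul₀ (norm_ne_zero_iff.2 hv) v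
  calc ‖w - w'‖
      = ‖(‖w‖ - ‖w'‖) • ‖w'‖⁻¹ • w' + ‖w‖ • (‖w‖⁻¹ • w - ‖w'‖⁻¹ • w')‖ := by
        rw [sub_smul, smul_sub, hpolar, hpolar]
        congr 1
        abel
    _ ≤ |‖w‖ - ‖w'‖| * ‖‖w'‖⁻¹ • w'‖ + ‖w‖ * θ := by
        refine (norm_add_le _ _).trans ?_
        rw [norm_smul, norm_smul _ (‖w‖⁻¹ • w - _), Real.norm_eq_abs, norm_norm]
        gcongr
    _ ≤ |‖w‖ - ‖w'‖| + ‖w‖ * θ := by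
        gcongr
        refine mul_le_of_le_one_right (abs_nonneg _) ?_
        rw [norm_smul, norm_inv, norm_norm]
        exact inv_mul_le_one

/-- The loss `2 ‖a • y - w‖ ^ 2` caused at the point `y` by a single center `w` at scale `a`, cut
off at a level which does not depend on the center. If some center has `‖w‖ ^ 2 ≤ 2` then the
cut-off does not change the minimum over all centers. -/
noncomputable def cappedLoss (a : ℝ) (w y : E) : ℝ :=
  min (4 * a ^ 2 * ‖y‖ ^ 2 + 8) (2 * ‖a • y - w‖ ^ 2)

theorem cappedLoss_nonneg (a : ℝ) (w y : E) : 0 ≤ cappedLoss a w y :=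
  le_min (by positivity) (by positivity)

theorem cappedLoss_le {a : ℝ} (ha : a ∈ Set.Icc 0 1) (w y : E) :
    cappedLoss a w y ≤ 8 * (1 + ‖y‖ ^ 2) := by
  refine (min_le_left _ _).trans ?_
  have := mul_le_of_le_one_left (sq_nonneg ‖y‖) (pow_le_one₀ ha.1 ha.2 (n := 2))
  linarith [sq_nonneg ‖y‖]

theorem cappedLoss_eq_cap {a : ℝ} (ha : 0 < a) {w y : E} (hw : 4 ≤ ‖w‖)
    (hy : ‖y‖ ≤ ‖w‖ / a / 4) : cappedLoss a w y = 4 * a ^ 2 * ‖y‖ ^ 2 + 8 := by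
  have hay : ‖a • y‖ ≤ ‖w‖ / 4 := by
    rw [norm_smul, Real.norm_of_nonneg ha.le]
    calc a * ‖y‖ ≤ a * (‖w‖ / a / 4) := by gcongr
      _ = ‖w‖ / 4 := by field_simp
  have hdist : 3 / 4 * ‖w‖ ≤ ‖a • y - w‖ := by
    rw [norm_sub_rev]
    linarith [norm_sub_norm_le w (a • y)]
  refine min_eq_left ?_
  calc 4 * a ^ 2 * ‖y‖ ^ 2 + 8 = 4 * ‖a • y‖ ^ 2 + 8 := by
        rw [norm_smul, Real.norm_eq_abs, mul_pow, sq_abs, mul_assoc]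
    _ ≤ 4 * (‖w‖ / 4) ^ 2 + ‖w‖ ^ 2 / 2 := by
        gcongr
        nlinarith
    _ ≤ 2 * (3 / 4 * ‖w‖) ^ 2 := by linarith [sq_nonneg ‖w‖]
    _ ≤ 2 * ‖a • y - w‖ ^ 2 := by gcongr

variable {a a' θ : ℝ}

theorem abs_cappedLoss_sub_le_eight (ha : a ∈ Set.Icc 0 1) (ha' : a' ∈ Set.Icc 0 1) (w w' y : E) :
    |cappedLoss a w y - cappedLoss a' w' y| ≤ 8 * (1 + ‖y‖ ^ 2) :=
  abs_sub_le_of_nonneg_of_le (cappedLoss_nonneg a w y) (cappedLoss_le ha w y)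
    (cappedLoss_nonneg a' w' y) (cappedLoss_le ha' w' y)

theorem abs_cap_sub_cap_le (ha : a ∈ Set.Icc 0 1) (ha' : a' ∈ Set.Icc 0 1) (haa' : |a - a'| ≤ θ)
    (r : ℝ) : |4 * a ^ 2 * r ^ 2 + 8 - (4 * a' ^ 2 * r ^ 2 + 8)| ≤ 8 * θ * r ^ 2 := by
  have hsq : |a ^ 2 - a' ^ 2| ≤ 2 * θ := by
    rw [sq_sub_sq, abs_mul, abs_of_nonneg (add_nonneg ha.1 ha'.1)]
    exact mul_le_mul (by linarith [ha.2, ha'.2]) haa' (abs_nonneg _) zero_le_two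
  calc |4 * a ^ 2 * r ^ 2 + 8 - (4 * a' ^ 2 * r ^ 2 + 8)|
      = 4 * |a ^ 2 - a' ^ 2| * r ^ 2 := by
        rw [show 4 * a ^ 2 * r ^ 2 + 8 - (4 * a' ^ 2 * r ^ 2 + 8)
          = 4 * (a ^ 2 - a' ^ 2) * r ^ 2 by ring]
        simp only [abs_mul, Nat.abs_ofNat, abs_pow, sq_abs]
    _ ≤ 4 * (2 * θ) * r ^ 2 := by gcongr
    _ = 8 * θ * r ^ 2 := by ring

theorem abs_cappedLoss_sub_le_max (ha : a ∈ Set.Icc 0 1) (ha' : a' ∈ Set.Icc 0 1)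
    (haa' : |a - a'| ≤ θ) {w w' y : E} {p q : ℝ} (hp : ‖(a • y - w) - (a' • y - w')‖ ≤ p)
    (hq : ‖a • y - w‖ + ‖a' • y - w'‖ ≤ q) :
    |cappedLoss a w y - cappedLoss a' w' y| ≤ max (8 * θ * ‖y‖ ^ 2) (2 * (p * q)) := by
  refine (abs_min_sub_min_le_max _ _ _ _).trans (max_le_max ?_ ?_)
  · exact abs_cap_sub_cap_le ha ha' haa' ‖y‖
  · rw [← mul_sub, abs_mul, abs_two]
    gcongr
    exact (abs_norm_sq_sub_norm_sq_le _ _).trans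
      (mul_le_mul hp hq (by positivity) ((norm_nonneg _).trans hp))

theorem norm_smul_sub_sub_smul_sub_le (haa' : |a - a'| ≤ θ) {w w' : E} {p : ℝ}
    (hww' : ‖w - w'‖ ≤ p) (y : E) : ‖(a • y - w) - (a' • y - w')‖ ≤ θ * ‖y‖ + p := by
  rw [sub_sub_sub_comm, ← sub_smul]
  refine (norm_sub_le _ _).trans (add_le_add ?_ hww')
  rw [norm_smul, Real.norm_eq_abs]
  gcongr

theorem norm_smul_sub_le (ha : a ∈ Set.Icc 0 1) (w y : E) : ‖a • y - w‖ ≤ ‖y‖ + ‖w‖ := by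
  refine (norm_sub_le _ _).trans (add_le_add_left ?_ _)
  rw [norm_smul, Real.norm_of_nonneg ha.1]
  exact mul_le_of_le_one_left (norm_nonneg y) ha.2

theorem abs_cappedLoss_sub_le_of_norm_le_four (ha : a ∈ Set.Icc 0 1) (ha' : a' ∈ Set.Icc 0 1)
    (haa' : |a - a'| ≤ θ) {w w' : E} (hw : ‖w‖ ≤ 4) (hw' : ‖w'‖ ≤ 4) (hww' : ‖w - w'‖ ≤ θ)
    (y : E) : |cappedLoss a w y - cappedLoss a' w' y| ≤ 340 * θ * (1 + ‖y‖ ^ 2) := by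
  have hθ : 0 ≤ θ := (norm_nonneg _).trans hww'
  refine (abs_cappedLoss_sub_le_max ha ha' haa' (norm_smul_sub_sub_smul_sub_le haa' hww' y)
    (add_le_add (norm_smul_sub_le ha w y) (norm_smul_sub_le ha' w' y))).trans (max_le ?_ ?_)
  · nlinarith [mul_nonneg hθ (sq_nonneg ‖y‖)]
  · calc 2 * ((θ * ‖y‖ + θ) * (‖y‖ + ‖w‖ + (‖y‖ + ‖w'‖)))
        ≤ 2 * ((θ * ‖y‖ + θ) * (‖y‖ + 4 + (‖y‖ + 4))) := by gcongr
      _ = θ * (4 * (‖y‖ + 1) * (‖y‖ + 4)) := by ring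
      _ ≤ θ * (340 * (1 + ‖y‖ ^ 2)) :=
          mul_le_mul_of_nonneg_left (by nlinarith [sq_nonneg (‖y‖ - 1)]) hθ
      _ = 340 * θ * (1 + ‖y‖ ^ 2) := by ring

theorem abs_cappedLoss_sub_le_of_norm_sub_le (ha : a ∈ Set.Icc 0 1) (ha' : a' ∈ Set.Icc 0 1)
    (haa' : |a - a'| ≤ θ) {w w' y : E} (hw : ‖w‖ ≤ 4 * ‖y‖) (hw' : ‖w'‖ ≤ 4 * ‖y‖)
    (hww' : ‖w - w'‖ ≤ 16 * θ * ‖y‖) :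
    |cappedLoss a w y - cappedLoss a' w' y| ≤ 340 * θ * ‖y‖ ^ 2 := by
  have hθ : 0 ≤ θ := (abs_nonneg _).trans haa'
  refine (abs_cappedLoss_sub_le_max ha ha' haa' (norm_smul_sub_sub_smul_sub_le haa' hww' y)
    (add_le_add (norm_smul_sub_le ha w y) (norm_smul_sub_le ha' w' y))).trans (max_le ?_ ?_)
  · gcongr
    norm_num
  · calc 2 * ((θ * ‖y‖ + 16 * θ * ‖y‖) * (‖y‖ + ‖w‖ + (‖y‖ + ‖w'‖)))
        ≤ 2 * ((θ * ‖y‖ + 16 * θ * ‖y‖) * (‖y‖ + 4 * ‖y‖ + (‖y‖ + 4 * ‖y‖))) := by gcongr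
      _ = 340 * θ * ‖y‖ ^ 2 := by ring

theorem abs_sub_le_of_abs_log_sub_log_le {s s' : ℝ} (hs : 0 < s) (hs' : 0 < s') (hθ : θ ≤ 1)
    (h : |Real.log s - Real.log s'| ≤ θ) : |s - s'| ≤ 2 * θ * s := by
  rw [abs_sub_comm] at h
  have hexp : s' = s * Real.exp (Real.log s' - Real.log s) := by
    rw [Real.exp_sub, Real.exp_log hs, Real.exp_log hs']
    field_simp
  calc |s - s'| = s * |Real.exp (Real.log s' - Real.log s) - 1| := by
        rw [abs_sub_comm]
        nth_rw 1 [hexp]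
        rw [← mul_sub_one, abs_mul, abs_of_pos hs]
    _ ≤ s * (2 * θ) := by
        gcongr
        exact (Real.abs_exp_sub_one_le (h.trans hθ)).trans (by gcongr)
    _ = 2 * θ * s := mul_comm _ _

theorem abs_log_sub_log_le {s s' r : ℝ} (hθ : 0 < θ) (hs : r ∈ Set.Ioc (s / 4) (s / θ))
    (hs' : r ∈ Set.Ioc (s' / 4) (s' / θ)) (hr : 0 < r) :
    |Real.log s - Real.log s'| ≤ Real.log (4 / θ) := by
  have hlog {t : ℝ} (ht : r ∈ Set.Ioc (t / 4) (t / θ)) :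
      Real.log t ∈ Set.Icc (Real.log (θ * r)) (Real.log (4 * r)) := by
    have hle : θ * r ≤ t := by
      rw [mul_comm]
      exact (le_div_iff₀ hθ).1 ht.2
    exact ⟨Real.log_le_log (by positivity) hle,
      Real.log_le_log (hle.trans_lt' (by positivity)) (by linarith [ht.1])⟩
  refine (abs_sub_le_of_le_of_le (hlog hs).1 (hlog hs).2 (hlog hs').1 (hlog hs').2).trans_eq ?_
  rw [Real.log_mul hθ.ne' hr.ne', Real.log_mul four_ne_zero hr.ne',
    Real.log_div four_ne_zero hθ.ne']
  ring

theorem norm_sub_le_of_abs_log_sub_log_le (ha : a ∈ Set.Ioc 0 1) (ha' : a' ∈ Set.Ioc 0 1)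
    (haa' : |a - a'| ≤ θ) (hθ : θ ≤ 1) {w w' : E} (hw : 0 < ‖w‖) (hw' : 0 < ‖w'‖)
    (hdir : ‖‖w‖⁻¹ • w - ‖w'‖⁻¹ • w'‖ ≤ θ)
    (hlog : |Real.log (‖w‖ / a) - Real.log (‖w'‖ / a')| ≤ θ) :
    ‖w - w'‖ ≤ 4 * θ * (‖w‖ / a) := by
  have hθ0 : 0 ≤ θ := (abs_nonneg _).trans haa'
  have hs := abs_sub_le_of_abs_log_sub_log_le (div_pos hw ha.1) (div_pos hw' ha'.1) hθ hlog
  have hnorm : |‖w‖ - ‖w'‖| ≤ 3 * θ * (‖w‖ / a) := by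
    calc |‖w‖ - ‖w'‖| = |(a - a') * (‖w‖ / a) + a' * (‖w‖ / a - ‖w'‖ / a')| := by
          congr 1
          have := ha.1.ne'
          have := ha'.1.ne'
          field_simp
          ring
      _ ≤ |a - a'| * (‖w‖ / a) + a' * |‖w‖ / a - ‖w'‖ / a'| := by
          refine (abs_add_le _ _).trans_eq ?_
          rw [abs_mul, abs_mul, abs_of_pos ha'.1, abs_of_pos (div_pos hw ha.1)]
      _ ≤ θ * (‖w‖ / a) + 1 * (2 * θ * (‖w‖ / a)) := by
          have := ha.1.le
          gcongr
          exact ha'.2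
      _ = 3 * θ * (‖w‖ / a) := by ring
  have hle : ‖w‖ ≤ ‖w‖ / a := le_div_self hw.le ha.1 ha.2
  calc ‖w - w'‖ ≤ |‖w‖ - ‖w'‖| + ‖w‖ * θ := norm_sub_le_of_norm_inv_smul_sub_le hdir
    _ ≤ 3 * θ * (‖w‖ / a) + ‖w‖ / a * θ := by gcongr
    _ = 4 * θ * (‖w‖ / a) := by ring

/-- For `‖y‖ ≤ s / 4`, where `s = ‖w‖ / a`, the cap is attained; for `‖y‖ > s / θ` the center is
negligible; in between both `s` and `s'` are comparable to `‖y‖`, so `hlog` applies. -/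
theorem abs_cappedLoss_sub_le_of_four_lt_norm (ha : a ∈ Set.Ioc 0 1) (ha' : a' ∈ Set.Ioc 0 1)
    (haa' : |a - a'| ≤ θ) (hθ : θ ∈ Set.Ioc 0 1) {w w' : E} (hw : 4 < ‖w‖) (hw' : 4 < ‖w'‖)
    (hdir : ‖‖w‖⁻¹ • w - ‖w'‖⁻¹ • w'‖ ≤ θ)
    (hlog : |Real.log (‖w‖ / a) - Real.log (‖w'‖ / a')| ≤ Real.log (4 / θ) →
      |Real.log (‖w‖ / a) - Real.log (‖w'‖ / a')| ≤ θ) {y : E}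
    (hinner : ‖y‖ ≤ ‖w‖ / a / 4 ↔ ‖y‖ ≤ ‖w'‖ / a' / 4)
    (houter : ‖y‖ ≤ ‖w‖ / a / θ ↔ ‖y‖ ≤ ‖w'‖ / a' / θ) :
    |cappedLoss a w y - cappedLoss a' w' y| ≤ 340 * θ * ‖y‖ ^ 2 := by
  have hIcc := Set.Ioc_subset_Icc_self ha
  have hIcc' := Set.Ioc_subset_Icc_self ha'
  have hθ0 := hθ.1
  have hs : ‖w‖ ≤ ‖w‖ / a := le_div_self (norm_nonneg w) ha.1 ha.2
  have hs' : ‖w'‖ ≤ ‖w'‖ / a' := le_div_self (norm_nonneg w') ha'.1 ha'.2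
  by_cases hy : ‖y‖ ≤ ‖w‖ / a / 4
  · rw [cappedLoss_eq_cap ha.1 hw.le hy, cappedLoss_eq_cap ha'.1 hw'.le (hinner.1 hy)]
    refine (abs_cap_sub_cap_le hIcc hIcc' haa' ‖y‖).trans ?_
    gcongr
    norm_num
  have hy' := mt hinner.2 hy
  rw [not_le] at hy hy'
  refine abs_cappedLoss_sub_le_of_norm_sub_le hIcc hIcc' haa' (by linarith) (by linarith) ?_
  by_cases hfar : ‖y‖ ≤ ‖w‖ / a / θ
  · have hclose := hlog (abs_log_sub_log_le hθ.1 ⟨hy, hfar⟩ ⟨hy', houter.1 hfar⟩ (by linarith))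
    calc ‖w - w'‖ ≤ 4 * θ * (‖w‖ / a) := norm_sub_le_of_abs_log_sub_log_le ha ha' haa' hθ.2
          (by linarith) (by linarith) hdir hclose
      _ ≤ 4 * θ * (4 * ‖y‖) := by gcongr; linarith
      _ = 16 * θ * ‖y‖ := by ring
  · have hfar' := mt houter.2 hfar
    rw [not_le, div_lt_iff₀ hθ.1] at hfar hfar'
    calc ‖w - w'‖ ≤ ‖w‖ + ‖w'‖ := norm_sub_le _ _
      _ ≤ ‖y‖ * θ + ‖y‖ * θ := by gcongr <;> linarith
      _ ≤ 16 * θ * ‖y‖ := by linarith [mul_nonneg hθ.1.le (norm_nonneg y)]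

end CappedLoss

/-! ### Partitioning the centers -/

section Partition

open Metric

section Shells

variable {E : Type*} [NormedAddCommGroup E] [MeasurableSpace E] [BorelSpace E]

theorem measureReal_symmDiff_closedBall (ν : Measure E) [IsFiniteMeasure ν] (x : E) (r r' : ℝ) :
    ν.real (symmDiff (closedBall x r) (closedBall x r')) =
      |ν.real (closedBall x r) - ν.real (closedBall x r')| := by
  wlog h : r ≤ r' generalizing r r'
  · rw [symmDiff_comm, abs_sub_comm]
    exact this r' r (le_of_not_ge h)
  · have hsub : closedBall x r ⊆ closedBall x r' := closedBall_subset_closedBall h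
    rw [symmDiff_of_le hsub, measureReal_sdiff hsub measurableSet_closedBall, abs_sub_comm,
      abs_of_nonneg (sub_nonneg.2 (measureReal_mono hsub))]

theorem hasPartition_measureReal_symmDiff_closedBall_le (ν : Measure E) [IsFiniteMeasure ν]
    {M η : ℝ} (hν : ν.real Set.univ ≤ M) (hη : 0 < η) {S : Type*} (r : S → ℝ) :
    HasPartition (fun s t => ν.real (symmDiff (closedBall 0 (r s)) (closedBall 0 (r t))) ≤ η)
      (M / η + 1) := by
  simp only [measureReal_symmDiff_closedBall]
  exact hasPartition_abs_sub_le hη (measureReal_nonneg.trans hν) fun s =>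
    ⟨measureReal_nonneg, (measureReal_mono (Set.subset_univ _)).trans hν⟩

end Shells

variable {E : Type*} [NormedAddCommGroup E] [NormedSpace ℝ E] [MeasurableSpace E]

/-- The pairs `(a, w)` and `(a', w')`, each a scale and a center, have capped losses which are close
away from an exceptional set of `ν`-mass at most `2 * η`. -/
def CappedLossClose (ν : Measure E) (θ η a a' : ℝ) (w w' : E) : Prop :=
  ∃ A, MeasurableSet A ∧ ν.real A ≤ 2 * η ∧
    ∀ y ∉ A, |cappedLoss a w y - cappedLoss a' w' y| ≤ 340 * θ * (1 + ‖y‖ ^ 2)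

/-- The number of cells needed for one center in dimension `d`: the scale is rounded, then either
the center itself, if its norm is at most `4`, or its direction, the `ν`-masses of two balls, and
the logarithm of `‖w‖ / a` modulo `log (4 / θ)`. -/
noncomputable def centerCellCount (d : ℕ) (M θ η : ℝ) : ℝ :=
  (1 / θ + 1) * ((1 + 16 / θ) ^ d +
    (1 + 4 / θ) ^ d * ((M / η + 1) * (M / η + 1) * (Real.log (4 / θ) / θ + 2)))

variable [FiniteDimensional ℝ E] {S : Type*} {ν : Measure E} {M θ η : ℝ}
  {a : S → ℝ} {w : S → E}

theorem hasPartition_cappedLossClose_of_norm_le_four (hη : 0 ≤ η) (hθ : 0 < θ)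
    (ha : ∀ s, a s ∈ Set.Ioc 0 1) (hw : ∀ s, ‖w s‖ ≤ 4) :
    HasPartition
      (fun s t => |a s - a t| ≤ θ → CappedLossClose ν θ η (a s) (a t) (w s) (w t))
      ((1 + 16 / θ) ^ Module.finrank ℝ E) := by
  refine (hasPartition_norm_sub_le zero_le_four hθ hw).mono (fun s t hst hast => ?_) (by norm_num)
  exact ⟨∅, .empty, by simpa, fun y _ => abs_cappedLoss_sub_le_of_norm_le_four
    (Set.Ioc_subset_Icc_self (ha s)) (Set.Ioc_subset_Icc_self (ha t)) hast (hw s) (hw t) hst y⟩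

variable [BorelSpace E] [IsFiniteMeasure ν]

theorem hasPartition_cappedLossClose_of_four_lt_norm (hν : ν.real Set.univ ≤ M) (hη : 0 < η)
    (hθ : θ ∈ Set.Ioc 0 1) (ha : ∀ s, a s ∈ Set.Ioc 0 1) (hw : ∀ s, 4 < ‖w s‖) :
    HasPartition
      (fun s t => |a s - a t| ≤ θ → CappedLossClose ν θ η (a s) (a t) (w s) (w t))
      ((1 + 4 / θ) ^ Module.finrank ℝ E *
        ((M / η + 1) * (M / η + 1) * (Real.log (4 / θ) / θ + 2))) := by
  have hdir : HasPartition (fun s t => ‖‖w s‖⁻¹ • w s - ‖w t‖⁻¹ • w t‖ ≤ θ)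
      ((1 + 4 / θ) ^ Module.finrank ℝ E) := by
    refine (hasPartition_norm_sub_le zero_le_one hθ.1 fun s => ?_).mono (fun s t hst => hst)
      (by norm_num)
    rw [norm_smul, norm_inv, norm_norm]
    exact inv_mul_le_one
  have hmass (c : ℝ) := hasPartition_measureReal_symmDiff_closedBall_le ν hν hη
    fun s => ‖w s‖ / a s / c
  have hlog := hasPartition_abs_sub_le_of_abs_sub_le (fun s => Real.log (‖w s‖ / a s)) hθ.1
    (Real.log_nonneg (by rw [le_div_iff₀ hθ.1]; linarith [hθ.2]) : 0 ≤ Real.log (4 / θ))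
  refine (hdir.and (((hmass 4).and (hmass θ)).and hlog)).mono ?_ le_rfl
  rintro s t ⟨hdir, ⟨hinner, houter⟩, hlog⟩ hast
  refine ⟨_, (measurableSet_closedBall.symmDiff measurableSet_closedBall).union
    (measurableSet_closedBall.symmDiff measurableSet_closedBall),
    (measureReal_union_le _ _).trans ((add_le_add hinner houter).trans_eq (two_mul η).symm),
    fun y hy => ?_⟩
  simp only [Set.mem_union, not_or, Set.mem_symmDiff, mem_closedBall_zero_iff] at hy
  have := hθ.1
  calc |cappedLoss (a s) (w s) y - cappedLoss (a t) (w t) y| ≤ 340 * θ * ‖y‖ ^ 2 :=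
        abs_cappedLoss_sub_le_of_four_lt_norm (ha s) (ha t) hast hθ (hw s) (hw t) hdir hlog
          (by tauto) (by tauto)
    _ ≤ 340 * θ * (1 + ‖y‖ ^ 2) := by
        gcongr
        exact le_add_of_nonneg_left zero_le_one

theorem hasPartition_cappedLossClose (hν : ν.real Set.univ ≤ M) (hη : 0 < η)
    (hθ : θ ∈ Set.Ioc 0 1) (ha : ∀ s, a s ∈ Set.Ioc 0 1) :
    HasPartition (fun s t => CappedLossClose ν θ η (a s) (a t) (w s) (w t))
      (centerCellCount (Module.finrank ℝ E) M θ η) := by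
  have hscale := hasPartition_abs_sub_le hθ.1 zero_le_one fun s => Set.Ioc_subset_Icc_self (ha s)
  have hcenter : HasPartition
      (fun s t => |a s - a t| ≤ θ → CappedLossClose ν θ η (a s) (a t) (w s) (w t)) _ :=
    .split (fun s => ‖w s‖ ≤ 4)
      (hasPartition_cappedLossClose_of_norm_le_four hη.le hθ.1 (fun s => ha s) fun s => s.2)
      (hasPartition_cappedLossClose_of_four_lt_norm hν hη hθ (fun s => ha s)
        fun s => not_le.1 s.2)
  exact (hscale.and hcenter).mono (fun _ _ hst => hst.2 hst.1) le_rfl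

end Partition

/-! ### Several centers and many blocks -/

section ScaledLoss

variable {E ι : Type*} [NormedAddCommGroup E] [NormedSpace ℝ E] [Finite ι] [Nonempty ι]

theorem abs_ciInf_sub_ciInf_le {f g : ι → ℝ} {b : ℝ} (h : ∀ i, |f i - g i| ≤ b) :
    |(⨅ i, f i) - ⨅ i, g i| ≤ b := by
  have hf := (Set.finite_range f).bddBelow
  have hg := (Set.finite_range g).bddBelow
  rw [abs_sub_le_iff, sub_le_comm, sub_le_comm (b := ⨅ i, f i)]
  exact ⟨le_ciInf fun i => by linarith [ciInf_le hf i, (abs_le.1 (h i)).2],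
    le_ciInf fun i => by linarith [ciInf_le hg i, (abs_le.1 (h i)).1]⟩

/-- The loss of the centers `w i` at the point `y`, at scale `a`. Up to a change of coordinates,
every normalized `k`-means loss has this form with `a ≤ 1`. -/
noncomputable def scaledLoss {ι : Type*} (a : ℝ) (w : ι → E) (y : E) : ℝ :=
  ⨅ i, 2 * ‖a • y - w i‖ ^ 2

theorem scaledLoss_eq_iInf_cappedLoss {w : ι → E} (hw : ∃ i, ‖w i‖ ^ 2 ≤ 2) (a : ℝ) (y : E) :
    scaledLoss a w y = ⨅ i, cappedLoss a (w i) y := by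
  have hb := (Set.finite_range fun i => 2 * ‖a • y - w i‖ ^ 2).bddBelow
  have hb' := (Set.finite_range fun i => cappedLoss a (w i) y).bddBelow
  refine le_antisymm (le_ciInf fun i => le_min ?_ (ciInf_le hb i))
    (le_ciInf fun i => (ciInf_le hb' i).trans (min_le_right _ _))
  obtain ⟨j, hj⟩ := hw
  calc scaledLoss a w y ≤ 2 * ‖a • y - w j‖ ^ 2 := ciInf_le hb j
    _ ≤ 2 * (‖a • y‖ + ‖w j‖) ^ 2 := by gcongr; exact norm_sub_le _ _
    _ ≤ 4 * ‖a • y‖ ^ 2 + 4 * ‖w j‖ ^ 2 := by linarith [sq_nonneg (‖a • y‖ - ‖w j‖)]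
    _ ≤ 4 * a ^ 2 * ‖y‖ ^ 2 + 8 := by
        rw [norm_smul, mul_pow, Real.norm_eq_abs, sq_abs]
        linarith

theorem abs_scaledLoss_sub_le_eight {a a' : ℝ} (ha : a ∈ Set.Icc 0 1) (ha' : a' ∈ Set.Icc 0 1)
    {w w' : ι → E} (hw : ∃ i, ‖w i‖ ^ 2 ≤ 2) (hw' : ∃ i, ‖w' i‖ ^ 2 ≤ 2) (y : E) :
    |scaledLoss a w y - scaledLoss a' w' y| ≤ 8 * (1 + ‖y‖ ^ 2) := by
  rw [scaledLoss_eq_iInf_cappedLoss hw, scaledLoss_eq_iInf_cappedLoss hw']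
  exact abs_ciInf_sub_ciInf_le fun i => abs_cappedLoss_sub_le_eight ha ha' _ _ _

theorem exists_measurableSet_abs_scaledLoss_sub_le [MeasurableSpace E] {ν : Measure E}
    {ι : Type*} [Fintype ι] [Nonempty ι] {θ η a a' : ℝ} {w w' : ι → E}
    (hw : ∃ i, ‖w i‖ ^ 2 ≤ 2) (hw' : ∃ i, ‖w' i‖ ^ 2 ≤ 2)
    (h : ∀ i, CappedLossClose ν θ η a a' (w i) (w' i)) :
    ∃ A, MeasurableSet A ∧ ν.real A ≤ 2 * η * Fintype.card ι ∧
      ∀ y ∉ A, |scaledLoss a w y - scaledLoss a' w' y| ≤ 340 * θ * (1 + ‖y‖ ^ 2) := by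
  choose A hAmeas hA hclose using h
  refine ⟨⋃ i, A i, .iUnion hAmeas, ?_, fun y hy => ?_⟩
  · calc ν.real (⋃ i, A i) ≤ ∑ i, ν.real (A i) := measureReal_iUnion_fintype_le _
      _ ≤ ∑ _i : ι, 2 * η := by gcongr with i; exact hA i
      _ = 2 * η * Fintype.card ι := by simp [mul_comm]
  · rw [scaledLoss_eq_iInf_cappedLoss hw, scaledLoss_eq_iInf_cappedLoss hw']
    rw [Set.mem_iUnion, not_exists] at hy
    exact abs_ciInf_sub_ciInf_le fun i => hclose i y (hy i)

end ScaledLoss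

section Block

theorem measureReal_finsetSum_apply {α β : Type*} [MeasurableSpace α] (ν : β → Measure α)
    [∀ b, IsFiniteMeasure (ν b)] (J : Finset β) (A : Set α) :
    (∑ b ∈ J, ν b).real A = ∑ b ∈ J, (ν b).real A := by
  rw [measureReal_def, Measure.coe_finsetSum, Finset.sum_apply,
    ENNReal.toReal_sum fun b _ => measure_ne_top _ _]
  rfl

variable {E : Type*} [NormedAddCommGroup E] [MeasurableSpace E] {m : ℕ}

/-- The empirical measure of a block of points, weighted with `1 + ‖·‖ ^ 2`: losses may grow
quadratically, so this is the measure that controls their block averages. -/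
noncomputable def blockMeasure (y : Fin m → E) : Measure E :=
  ∑ j, ENNReal.ofReal ((1 + ‖y j‖ ^ 2) / m) • Measure.dirac (y j)

instance (y : Fin m → E) : IsFiniteMeasure (blockMeasure y) := by
  unfold blockMeasure
  have (j : Fin m) := (Measure.dirac (y j)).smul_finite
    (ENNReal.ofReal_ne_top (r := (1 + ‖y j‖ ^ 2) / m))
  infer_instance

theorem blockMeasure_real_apply (y : Fin m → E) {A : Set E} (hA : MeasurableSet A) :
    (blockMeasure y).real A = ∑ j, (1 + ‖y j‖ ^ 2) / m * A.indicator 1 (y j) := by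
  have (j : Fin m) := (Measure.dirac (y j)).smul_finite
    (ENNReal.ofReal_ne_top (r := (1 + ‖y j‖ ^ 2) / m))
  rw [blockMeasure, measureReal_finsetSum_apply]
  refine Finset.sum_congr rfl fun j _ => ?_
  rw [measureReal_ennreal_smul_apply, ENNReal.toReal_ofReal (by positivity), measureReal_def,
    Measure.dirac_apply' _ hA]
  by_cases hj : y j ∈ A <;> simp [hj]

theorem blockMeasure_real_univ_le (y : Fin m → E) {V : ℝ} (hy : ∑ j, ‖y j‖ ^ 2 / m ≤ V) :
    (blockMeasure y).real Set.univ ≤ 1 + V := by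
  rw [blockMeasure_real_apply y .univ]
  simp only [Set.indicator_univ, Pi.one_apply, mul_one, add_div, Finset.sum_add_distrib]
  gcongr
  simp [mul_inv_le_one]

theorem sum_abs_div_le_blockMeasure (y : Fin m → E) {A : Set E} (hA : MeasurableSet A) {h : E → ℝ}
    {c c' : ℝ} (hc : 0 ≤ c) (hh : ∀ x, |h x| ≤ c' * (1 + ‖x‖ ^ 2))
    (hhA : ∀ x ∉ A, |h x| ≤ c * (1 + ‖x‖ ^ 2)) :
    ∑ j, |h (y j)| / m ≤ c * (blockMeasure y).real Set.univ + c' * (blockMeasure y).real A := by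
  rw [blockMeasure_real_apply y .univ, blockMeasure_real_apply y hA, Finset.mul_sum,
    Finset.mul_sum, ← Finset.sum_add_distrib]
  gcongr with j
  have hbound : |h (y j)| ≤ (c + c' * A.indicator 1 (y j)) * (1 + ‖y j‖ ^ 2) := by
    by_cases hj : y j ∈ A
    · rw [Set.indicator_of_mem hj, Pi.one_apply, mul_one, add_mul]
      exact (hh _).trans (le_add_of_nonneg_left (by positivity))
    · rw [Set.indicator_of_notMem hj, mul_zero, add_zero]
      exact hhA _ hj
  refine (div_le_div_of_nonneg_right hbound m.cast_nonneg).trans_eq ?_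
  rw [Set.indicator_univ, Pi.one_apply]
  ring

variable {β : Type*}

open Classical in
theorem exists_finset_sum_abs_div_le {y : β → Fin m → E} {J : Finset β} {W τ p : ℝ}
    (hW : ∀ b ∈ J, (blockMeasure (y b)).real Set.univ ≤ W) {A : Set E}
    (hA : MeasurableSet A) (hp : (∑ b ∈ J, blockMeasure (y b)).real A ≤ p) {h : E → ℝ} {c c' : ℝ}
    (hc : 0 ≤ c) (hc' : 0 ≤ c') (hh : ∀ x, |h x| ≤ c' * (1 + ‖x‖ ^ 2))
    (hhA : ∀ x ∉ A, |h x| ≤ c * (1 + ‖x‖ ^ 2)) :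
    ∃ I : Finset β, I.card * τ ≤ p ∧
      ∀ b ∈ J, b ∉ I → ∑ j, |h (y b j)| / m ≤ c * W + c' * τ := by
  refine ⟨J.filter fun b => τ < (blockMeasure (y b)).real A, le_trans ?_ hp, fun b hb hbI => ?_⟩
  · rw [← nsmul_eq_mul, measureReal_finsetSum_apply]
    calc (J.filter fun b => τ < (blockMeasure (y b)).real A).card • τ
        ≤ ∑ b ∈ J with τ < (blockMeasure (y b)).real A, (blockMeasure (y b)).real A :=
        Finset.card_nsmul_le_sum _ _ _ fun b hb => (Finset.mem_filter.1 hb).2.le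
      _ ≤ ∑ b ∈ J, (blockMeasure (y b)).real A :=
        Finset.sum_le_sum_of_subset_of_nonneg (Finset.filter_subset _ _)
          fun b _ _ => measureReal_nonneg
  · have hbA : (blockMeasure (y b)).real A ≤ τ := by
      simpa [hb] using hbI
    refine (sum_abs_div_le_blockMeasure (y b) hA hc hh hhA).trans ?_
    gcongr
    exact hW b hb

variable [NormedSpace ℝ E] [FiniteDimensional ℝ E] [BorelSpace E]

theorem hasPartition_exists_finset_sum_abs_scaledLoss_sub_le {ι S : Type*} [Fintype ι] [Nonempty ι]
    {y : β → Fin m → E} {J : Finset β} {W θ η τ : ℝ} (hη : 0 < η)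
    (hθ : θ ∈ Set.Ioc 0 1) (hW : ∀ b ∈ J, (blockMeasure (y b)).real Set.univ ≤ W) {a : S → ℝ}
    {w : S → ι → E} (ha : ∀ s, a s ∈ Set.Ioc 0 1) (hw : ∀ s, ∃ i, ‖w s i‖ ^ 2 ≤ 2) :
    HasPartition
      (fun s t => ∃ I : Finset β, I.card * τ ≤ 2 * η * Fintype.card ι ∧ ∀ b ∈ J, b ∉ I →
        ∑ j, |scaledLoss (a s) (w s) (y b j) - scaledLoss (a t) (w t) (y b j)| / m ≤
          340 * θ * W + 8 * τ)
      (centerCellCount (Module.finrank ℝ E) (J.card * W) θ η ^ Fintype.card ι) := by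
  have hmass : (∑ b ∈ J, blockMeasure (y b)).real Set.univ ≤ J.card * W := by
    rw [measureReal_finsetSum_apply, ← nsmul_eq_mul]
    exact Finset.sum_le_card_nsmul _ _ _ hW
  refine (HasPartition.forall_and fun i =>
    hasPartition_cappedLossClose (w := fun s => w s i) hmass hη hθ ha).mono
    (fun s t hst => ?_) le_rfl
  obtain ⟨A, hAmeas, hA, hclose⟩ := exists_measurableSet_abs_scaledLoss_sub_le (hw s) (hw t) hst
  exact exists_finset_sum_abs_div_le hW hAmeas hA
    (h := fun x => scaledLoss (a s) (w s) x - scaledLoss (a t) (w t) x)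
    (mul_nonneg (by norm_num) hθ.1.le) (by norm_num)
    (abs_scaledLoss_sub_le_eight (Set.Ioc_subset_Icc_self (ha s))
      (Set.Ioc_subset_Icc_self (ha t)) (hw s) (hw t)) hclose

end Block

/-! ### The number of cells -/

theorem centerCellCount_le {M θ η B c : ℝ} (hθ : θ ∈ Set.Ioc 0 1) (hc : 1 ≤ c)
    (hM : 0 ≤ M / η) (hMB : M / η + 1 ≤ c * B) (hB : 1 + 16 / θ ≤ B) (d : ℕ) :
    centerCellCount d M θ η ≤ c ^ 2 * B ^ (d + 6) := by
  have hθ0 := hθ.1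
  have hinv : 1 ≤ 1 / θ := (one_le_div hθ0).2 hθ.2
  have hmul (r : ℝ) : r / θ = r * (1 / θ) := by ring
  have hB2 : 2 ≤ B := by linarith [hmul 16]
  have hlog0 : 0 ≤ Real.log (4 / θ) := Real.log_nonneg (by linarith [hmul 4])
  have hlog : Real.log (4 / θ) / θ + 2 ≤ B ^ 2 := by
    calc Real.log (4 / θ) / θ + 2 ≤ 4 / θ / θ + 2 := by
          gcongr
          exact Real.log_le_self (by positivity)
      _ = 4 * (1 / θ) ^ 2 + 2 := by ring
      _ ≤ (1 + 16 * (1 / θ)) ^ 2 := by nlinarith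
      _ ≤ B ^ 2 := by rw [← hmul]; gcongr
  have hc2 : 1 ≤ c ^ 2 * B ^ 4 :=
    one_le_mul_of_one_le_of_one_le (one_le_pow₀ hc) (one_le_pow₀ (by linarith))
  calc centerCellCount d M θ η
      ≤ B * (B ^ d + B ^ d * (c * B * (c * B) * B ^ 2)) := by
        unfold centerCellCount
        gcongr
        · linarith [hmul 16]
        · linarith [hmul 16, hmul 4]
    _ = B * B ^ d * (1 + c ^ 2 * B ^ 4) := by ring
    _ ≤ B * B ^ d * (B * (c ^ 2 * B ^ 4)) := by gcongr; nlinarith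
    _ = c ^ 2 * B ^ (d + 6) := by ring

theorem sq_mul_pow_pow_le_rpow {B : ℝ} (hB : Real.exp 1 ≤ B) {d k : ℕ} (hd : 1 ≤ d) (hk : 1 ≤ k) :
    ((k : ℝ) ^ 2 * B ^ (d + 6)) ^ k ≤ B ^ (140 * (k : ℝ) * d * Real.log (6 * k)) := by
  have hd1 : (1 : ℝ) ≤ d := by exact_mod_cast hd
  have hk1 : (1 : ℝ) ≤ k := by exact_mod_cast hk
  have hB0 : 0 < B := (Real.exp_pos 1).trans_le hB
  have hkB : (k : ℝ) ≤ B ^ Real.log k := by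
    calc (k : ℝ) = Real.exp 1 ^ Real.log k := by
          rw [Real.exp_one_rpow, Real.exp_log (by linarith)]
      _ ≤ B ^ Real.log k := by gcongr
  have hlog1 : 1 ≤ Real.log (6 * k) := by
    rw [Real.le_log_iff_exp_le (by linarith)]
    linarith [Real.exp_one_lt_d9]
  have hlog : Real.log k ≤ Real.log (6 * k) := Real.log_le_log (by linarith) (by linarith)
  calc ((k : ℝ) ^ 2 * B ^ (d + 6)) ^ k
      ≤ ((B ^ Real.log k) ^ 2 * B ^ (d + 6)) ^ k := by gcongr
    _ = B ^ ((Real.log k * 2 + (d + 6)) * k) := by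
        rw [Real.rpow_mul hB0.le, Real.rpow_add hB0, Real.rpow_mul hB0.le]
        norm_cast
    _ ≤ B ^ (140 * (k : ℝ) * d * Real.log (6 * k)) := by
        refine Real.rpow_le_rpow_of_exponent_le (by linarith [Real.add_one_le_exp 1]) ?_
        have hdlog : Real.log (6 * k) ≤ d * Real.log (6 * k) :=
          le_mul_of_one_le_left (by linarith) hd1
        have hd_le : (d : ℝ) ≤ d * Real.log (6 * k) := le_mul_of_one_le_right (by linarith) hlog1
        calc (Real.log k * 2 + (d + 6)) * k ≤ 140 * (d * Real.log (6 * k)) * k := by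
              gcongr; linarith
          _ = 140 * (k : ℝ) * d * Real.log (6 * k) := by ring

theorem centerCellCount_pow_le {ε κ M : ℝ} (hε : ε ∈ Set.Ioo 0 1) (hκ : 0 < κ)
    (hM : M ∈ Set.Icc 0 (15003 * κ)) {d k : ℕ} (hd : 1 ≤ d) (hk : 1 ≤ k) :
    centerCellCount d M (ε / (4 * 10 ^ 6)) (κ * ε / (40000 * k)) ^ k ≤
      (72 * 10 ^ 4 * 8000 * Real.exp 1 / ε) ^ (140 * (k : ℝ) * d * Real.log (6 * k)) := by
  have hε0 := hε.1
  have hk1 : (1 : ℝ) ≤ k := by exact_mod_cast hk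
  have hexp : 2 ≤ Real.exp 1 := by linarith [Real.add_one_le_exp 1]
  set B := 72 * 10 ^ 4 * 8000 * Real.exp 1 / ε with hB
  have hM0 : 0 ≤ M / (κ * ε / (40000 * k)) := div_nonneg hM.1 (by positivity)
  have hMB : M / (κ * ε / (40000 * k)) + 1 ≤ k * B := by
    calc M / (κ * ε / (40000 * k)) + 1
        ≤ 15003 * κ / (κ * ε / (40000 * k)) + k / ε := by
          gcongr
          · exact hM.2
          · rw [one_le_div hε0]
            linarith [hε.2]
      _ = k * (600120001 / ε) := by field_simp; ring
      _ ≤ k * B := by rw [hB]; gcongr; linarith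
  have hθB : 1 + 16 / (ε / (4 * 10 ^ 6)) ≤ B := by
    calc 1 + 16 / (ε / (4 * 10 ^ 6)) ≤ 1 / ε + 16 / (ε / (4 * 10 ^ 6)) := by
          gcongr
          exact (one_le_div hε0).2 hε.2.le
      _ = 64000001 / ε := by field_simp; norm_num
      _ ≤ B := by rw [hB]; gcongr; linarith
  have hBexp : Real.exp 1 ≤ B := by
    rw [hB, le_div_iff₀ hε0]
    nlinarith [hε.2]
  have hcount := centerCellCount_le ⟨by positivity, by linarith [hε.2]⟩ hk1 hM0 hMB hθB d
  refine (pow_le_pow_left₀ ?_ hcount k).trans (sq_mul_pow_pow_le_rpow hBexp hd hk)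
  have : 0 ≤ Real.log (4 / (ε / (4 * 10 ^ 6))) :=
    Real.log_nonneg (by rw [one_le_div (by positivity)]; linarith [hε.2])
  unfold centerCellCount
  positivity

/-! ### Most blocks have a small empirical mean -/

section Probability

open ProbabilityTheory

variable {Ω : Type*} [MeasurableSpace Ω]

theorem measureReal_mul_integral_lt_le (μ : Measure Ω) [IsFiniteMeasure μ] {Z : Ω → ℝ}
    (hZ0 : 0 ≤ Z) (hZ : Integrable Z μ) {C : ℝ} (hC : 0 < C) :
    μ.real {x | C * ∫ z, Z z ∂μ < Z x} ≤ 1 / C := by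
  rcases (integral_nonneg hZ0).eq_or_lt with h0 | hpos
  · have hae : Z =ᵐ[μ] 0 := (integral_eq_zero_iff_of_nonneg hZ0 hZ).1 h0.symm
    have hnull : μ {x | C * ∫ z, Z z ∂μ < Z x} = 0 :=
      measure_mono_null (fun x hx => (by simpa [← h0] using hx : 0 < Z x).ne') hae
    rw [measureReal_def, hnull, ENNReal.toReal_zero]
    positivity
  · have hmarkov := mul_meas_ge_le_integral_of_nonneg (ae_of_all μ hZ0) hZ (C * ∫ z, Z z ∂μ)
    have hmono : μ.real {x | C * ∫ z, Z z ∂μ < Z x} ≤ μ.real {x | C * ∫ z, Z z ∂μ ≤ Z x} :=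
      measureReal_mono (Set.ofPred_subset_ofPred.2 fun x => le_of_lt)
    refine hmono.trans ?_
    rw [le_div_iff₀ hC]
    refine le_of_mul_le_mul_left ?_ hpos
    linarith

section BlockMean

variable {P : Measure Ω} [IsProbabilityMeasure P] {φ : Ω → ℝ}

theorem integrable_pi_sum_div (hφ : Integrable φ P) (m : ℕ) :
    Integrable (fun x : Fin m → Ω => ∑ j, φ (x j) / m) (Measure.pi fun _ => P) :=
  integrable_finsetSum _ fun j _ =>
    ((measurePreserving_eval (fun _ => P) j).integrable_comp_of_integrable hφ).div_const _

theorem integral_pi_sum_div (hφ : Integrable φ P) {m : ℕ} (hm : m ≠ 0) :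
    ∫ x : Fin m → Ω, ∑ j, φ (x j) / m ∂(Measure.pi fun _ => P) = ∫ z, φ z ∂P := by
  have hm' : (m : ℝ) ≠ 0 := Nat.cast_ne_zero.2 hm
  have heval (j : Fin m) : ∫ x : Fin m → Ω, φ (x j) ∂(Measure.pi fun _ => P) = ∫ z, φ z ∂P :=
    integral_comp_eval (μ := fun _ => P) hφ.aestronglyMeasurable
  have hint (j : Fin m) (_ : j ∈ Finset.univ) :
      Integrable (fun x : Fin m → Ω => φ (x j)) (Measure.pi fun _ => P) :=
    (measurePreserving_eval (fun _ => P) j).integrable_comp_of_integrable hφ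
  simp only [← Finset.sum_div]
  rw [integral_div, integral_finsetSum _ hint]
  simp only [heval, Finset.sum_const, Finset.card_univ, Fintype.card_fin, nsmul_eq_mul]
  field_simp

theorem measureReal_pi_mul_integral_lt_sum_div_le (hφ0 : 0 ≤ φ) (hφ : Integrable φ P) {m : ℕ}
    (hm : m ≠ 0) {C : ℝ} (hC : 0 < C) :
    (Measure.pi fun _ : Fin m => P).real {x | C * ∫ z, φ z ∂P < ∑ j, φ (x j) / m} ≤ 1 / C := by
  rw [← integral_pi_sum_div hφ hm]
  exact measureReal_mul_integral_lt_le _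
    (fun x => Finset.sum_nonneg fun j _ => div_nonneg (hφ0 _) m.cast_nonneg)
    (integrable_pi_sum_div hφ m) hC

end BlockMean

section Chernoff

variable {P : Measure Ω} [IsProbabilityMeasure P] {B : Set Ω}

theorem mgf_indicator_one (hB : MeasurableSet B) (t : ℝ) :
    mgf (B.indicator 1) P t = 1 + P.real B * (Real.exp t - 1) := by
  have hexp : (fun x => Real.exp (t * B.indicator 1 x)) =
      fun x => 1 + B.indicator (fun _ => Real.exp t - 1) x := by
    funext x
    by_cases hx : x ∈ B <;> simp [hx]
  rw [mgf, hexp, integral_add (integrable_const _) ((integrable_const _).indicator hB),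
    integral_indicator_const _ hB, smul_eq_mul]
  simp

variable {ι : Type*} [Fintype ι]

theorem mgf_pi_sum_indicator (hB : MeasurableSet B) (t : ℝ) :
    mgf (fun x : ι → Ω => ∑ i, B.indicator 1 (x i)) (Measure.pi fun _ => P) t =
      (1 + P.real B * (Real.exp t - 1)) ^ Fintype.card ι := by
  have hmeas : Measurable (B.indicator (1 : Ω → ℝ)) := measurable_one.indicator hB
  have hindep : iIndepFun (fun (i : ι) (x : ι → Ω) => B.indicator (1 : Ω → ℝ) (x i))
      (Measure.pi fun _ => P) :=
    iIndepFun_pi (X := fun _ => B.indicator 1) fun _ => hmeas.aemeasurable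
  have heval (i : ι) : mgf (fun x : ι → Ω => B.indicator 1 (x i)) (Measure.pi fun _ => P) t =
      mgf (B.indicator 1) P t :=
    integral_comp_eval (μ := fun _ : ι => P) (f := fun x => Real.exp (t * B.indicator 1 x))
      (by fun_prop)
  rw [← Finset.sum_fn, hindep.mgf_sum fun i => hmeas.comp (measurable_pi_apply i)]
  simp only [heval, mgf_indicator_one hB, Finset.prod_const, Finset.card_univ]

theorem measureReal_pi_lt_sum_indicator_le (hB : MeasurableSet B) {p : ℝ} (hp : P.real B ≤ p)
    (s : ℝ) :
    (Measure.pi fun _ : ι => P).real {x | s < ∑ i, B.indicator 1 (x i)} ≤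
      Real.exp (p * (Real.exp 1 - 1) * Fintype.card ι - s) := by
  have hmeas : Measurable fun x : ι → Ω => ∑ i, B.indicator (1 : Ω → ℝ) (x i) :=
    Finset.measurable_sum _ fun i _ =>
      (measurable_one.indicator hB).comp (measurable_pi_apply i)
  have hle (x : ι → Ω) : ∑ i, B.indicator (1 : Ω → ℝ) (x i) ≤ Fintype.card ι := by
    refine (Finset.sum_le_card_nsmul _ _ 1 fun i _ => ?_).trans_eq (by simp)
    exact Set.indicator_le_self' (fun _ _ => zero_le_one) _
  have hint := integrable_exp_mul_of_le (μ := Measure.pi fun _ : ι => P) 1 _ zero_le_one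
    hmeas.aemeasurable (ae_of_all _ hle)
  have hexp : 0 ≤ Real.exp 1 - 1 := by linarith [Real.add_one_le_exp 1]
  calc (Measure.pi fun _ : ι => P).real {x | s < ∑ i, B.indicator 1 (x i)}
      ≤ (Measure.pi fun _ : ι => P).real {x | s ≤ ∑ i, B.indicator 1 (x i)} :=
        measureReal_mono (Set.ofPred_subset_ofPred.2 fun x => le_of_lt)
    _ ≤ Real.exp (-1 * s) * (1 + P.real B * (Real.exp 1 - 1)) ^ Fintype.card ι := by
        rw [← mgf_pi_sum_indicator hB]
        exact measure_ge_le_exp_mul_mgf s zero_le_one hint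
    _ ≤ Real.exp (-1 * s) * Real.exp (p * (Real.exp 1 - 1)) ^ Fintype.card ι := by
        gcongr
        rw [add_comm]
        exact (Real.add_one_le_exp _).trans (by gcongr)
    _ = Real.exp (p * (Real.exp 1 - 1) * Fintype.card ι - s) := by
        rw [← Real.exp_nat_mul, ← Real.exp_add]
        ring_nf

end Chernoff

theorem three_mul_exp_le {δ κ : ℝ} (hδ : δ ∈ Set.Ioo 0 1)
    (hκ : 2 * 8000 ^ 2 * Real.log (Real.exp 1 / δ) ≤ κ) :
    3 * Real.exp (1 / 5000 * (Real.exp 1 - 1) * κ - 0.0008 * κ) ≤ δ := by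
  rw [Real.log_div (Real.exp_pos 1).ne' hδ.1.ne', Real.log_exp] at hκ
  have hlog := Real.log_neg hδ.1 hδ.2
  have hκ0 : 0 ≤ κ := by linarith
  have hexp2 : 3 ≤ Real.exp 2 := by linarith [Real.add_one_le_exp 2]
  calc 3 * Real.exp (1 / 5000 * (Real.exp 1 - 1) * κ - 0.0008 * κ)
      ≤ Real.exp 2 * Real.exp (Real.log δ - 2) := by
        refine mul_le_mul hexp2 (Real.exp_le_exp.2 ?_) (Real.exp_nonneg _) (Real.exp_nonneg _)
        have : (Real.exp 1 - 1) * κ ≤ 2 * κ := by gcongr; linarith [Real.exp_one_lt_d9]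
        linarith
    _ = δ := by rw [← Real.exp_add, add_sub_cancel, Real.exp_log hδ.1]

theorem one_sub_mul_le_measureReal_pi {P : Measure Ω} [IsProbabilityMeasure P] {A : Set Ω}
    (hA : MeasurableSet A) (n : ℕ) :
    1 - n * P.real Aᶜ ≤ (Measure.pi fun _ : Fin n => P).real (Set.univ.pi fun _ => A) := by
  have hbernoulli := one_add_mul_sub_le_pow (a := P.real A)
    (by linarith [measureReal_nonneg (μ := P) (s := A)]) n
  rw [measureReal_def (Measure.pi _), Measure.pi_pi, Finset.prod_const, ENNReal.toReal_pow,
    ← measureReal_def, Finset.card_univ, Fintype.card_fin, probReal_compl_eq_one_sub hA]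
  linarith

theorem ofReal_one_sub_le_measure_pi_forall_sum_indicator_le (P : Measure Ω)
    [IsProbabilityMeasure P] {φ : Ω → ℝ} (hφ0 : 0 ≤ φ) (hφm : Measurable φ) (hφ : Integrable φ P)
    {m κ : ℕ} (hm : m ≠ 0) {δ : ℝ} (hδ : δ ∈ Set.Ioo 0 1)
    (hκ : 2 * 8000 ^ 2 * Real.log (Real.exp 1 / δ) ≤ κ) :
    ENNReal.ofReal (1 - δ) ≤
      (Measure.pi fun _ : Fin 3 => Measure.pi fun _ : Fin κ => Measure.pi fun _ : Fin m => P)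
        {X | ∀ l, ∑ i, {x : Fin m → Ω | 5000 * ∫ z, φ z ∂P < ∑ j, φ (x j) / m}.indicator 1 (X l i)
          ≤ 0.0008 * (κ : ℝ)} := by
  set B : Set (Fin m → Ω) := {x | 5000 * ∫ z, φ z ∂P < ∑ j, φ (x j) / m}
  have hB : MeasurableSet B := measurableSet_lt measurable_const (by fun_prop)
  set A : Set (Fin κ → Fin m → Ω) := {x | ∑ i, B.indicator 1 (x i) ≤ 0.0008 * (κ : ℝ)} with hAdef
  have hA : MeasurableSet A := measurableSet_le
    (Finset.measurable_sum _ fun i _ =>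
      (measurable_one.indicator hB).comp (measurable_pi_apply i)) measurable_const
  have hbad : (Measure.pi fun _ : Fin κ => Measure.pi fun _ : Fin m => P).real Aᶜ ≤
      Real.exp (1 / 5000 * (Real.exp 1 - 1) * κ - 0.0008 * κ) := by
    have hcompl : Aᶜ = {x | 0.0008 * (κ : ℝ) < ∑ i, B.indicator 1 (x i)} := by
      ext x
      simp [hAdef]
    rw [hcompl]
    exact (measureReal_pi_lt_sum_indicator_le hB
      (measureReal_pi_mul_integral_lt_sum_div_le hφ0 hφ hm (by norm_num)) _).trans_eq (by simp)
  have hprod : {X : Fin 3 → Fin κ → Fin m → Ω | ∀ l, X l ∈ A} = Set.univ.pi fun _ => A := by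
    ext X
    simp
  change _ ≤ (Measure.pi fun _ => _) {X : Fin 3 → Fin κ → Fin m → Ω | ∀ l, X l ∈ A}
  rw [hprod, ENNReal.ofReal_le_iff_le_toReal (measure_ne_top _ _), ← measureReal_def]
  refine (one_sub_mul_le_measureReal_pi hA 3).trans' ?_
  push_cast
  linarith [three_mul_exp_le hδ hκ]

end Probability

/-! ### Normalized losses -/

theorem HasPartition.exists_isEpsDiscretization {S 𝒳 : Type*} {ε N : ℝ} {m κ : ℕ}
    {X : Fin 3 → Fin κ → Fin m → 𝒳} {f : S → 𝒳 → ℝ}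
    (h : HasPartition (fun s t => ∃ I : Finset (Fin κ), (I.card : ℝ) ≤ 2 * κ / 625 ∧
      ∀ i ∉ I, ∀ l, ∑ j, |f s (X l i j) - f t (X l i j)| / m ≤ ε) N) :
    ∃ F : Finset (𝒳 → ℝ), IsEpsDiscretization ε m κ X (Set.range f) F ∧ (F.card : ℝ) ≤ N := by
  classical
  obtain ⟨R, hR, hclose⟩ := h.exists_representatives
  refine ⟨R.image f, ?_, (Nat.cast_le.2 Finset.card_image_le).trans hR⟩
  rintro _ ⟨s, rfl⟩
  obtain ⟨t, ht, hst⟩ := hclose s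
  exact ⟨f t, Finset.mem_image_of_mem f ht, hst⟩

section SqDistToCenters

variable {E ι : Type*} [NormedAddCommGroup E]

/-- The squared distance to the nearest of the centers `Q i`: the function `dQsq` in an arbitrary
normed group. -/
noncomputable def sqDistToCenters (Q : ι → E) (x : E) : ℝ :=
  ⨅ i, ‖x - Q i‖ ^ 2

theorem sqDistToCenters_nonneg (Q : ι → E) (x : E) : 0 ≤ sqDistToCenters Q x :=
  Real.iInf_nonneg fun _ => sq_nonneg _

theorem sqDistToCenters_eq_zero_of_isEmpty_or_subsingleton (h : IsEmpty ι ∨ Subsingleton E)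
    (Q : ι → E) : sqDistToCenters Q = 0 := by
  funext x
  rcases h with _ | _
  · exact Real.iInf_of_isEmpty _
  · simp [sqDistToCenters, Subsingleton.elim _ (0 : E)]

theorem sqDistToCenters_le_two_mul_add [Finite ι] [Nonempty ι] (Q : ι → E) (x y : E) :
    sqDistToCenters Q x ≤ 2 * ‖y - x‖ ^ 2 + 2 * sqDistToCenters Q y := by
  obtain ⟨i, hi⟩ := exists_eq_ciInf_of_finite (f := fun i => ‖y - Q i‖ ^ 2)
  calc sqDistToCenters Q x ≤ ‖x - Q i‖ ^ 2 := ciInf_le (Set.finite_range _).bddBelow i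
    _ ≤ (‖y - x‖ + ‖y - Q i‖) ^ 2 := by
        gcongr
        rw [norm_sub_rev y x]
        exact norm_sub_le_norm_sub_add_norm_sub x y (Q i)
    _ ≤ 2 * ‖y - x‖ ^ 2 + 2 * ‖y - Q i‖ ^ 2 := by
        linarith [sq_nonneg (‖y - x‖ - ‖y - Q i‖)]
    _ = 2 * ‖y - x‖ ^ 2 + 2 * sqDistToCenters Q y := by rw [hi, sqDistToCenters]

variable [MeasurableSpace E]

/-- `∫ ‖y - μ‖ ^ 2 + ∫ d(y, Q) ^ 2`, the denominator of the normalized loss, with an arbitrary base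
point `μ` in place of the mean. -/
noncomputable def lossNormalizer (𝒟 : Measure E) (μ : E) (Q : ι → E) : ℝ :=
  (∫ y, ‖y - μ‖ ^ 2 ∂𝒟) + ∫ y, sqDistToCenters Q y ∂𝒟

/-- The normalized loss of the centers `Q`; `normalizedKMeansLoss` is the case where the base point
`μ` is the mean of `𝒟`. -/
noncomputable def normalizedLoss (𝒟 : Measure E) (μ : E) (Q : ι → E) (x : E) : ℝ :=
  2 * sqDistToCenters Q x / lossNormalizer 𝒟 μ Q

theorem integral_sq_norm_sub_le_lossNormalizer (𝒟 : Measure E) (μ : E) (Q : ι → E) :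
    ∫ y, ‖y - μ‖ ^ 2 ∂𝒟 ≤ lossNormalizer 𝒟 μ Q :=
  le_add_of_nonneg_right (integral_nonneg (sqDistToCenters_nonneg Q))

theorem lossNormalizer_nonneg (𝒟 : Measure E) (μ : E) (Q : ι → E) : 0 ≤ lossNormalizer 𝒟 μ Q :=
  (integral_nonneg fun _ => sq_nonneg _).trans (integral_sq_norm_sub_le_lossNormalizer 𝒟 μ Q)

theorem normalizedLoss_eq_scaledLoss [NormedSpace ℝ E] {𝒟 : Measure E} {μ : E} {Q : ι → E}
    {a : ℝ} {x y : E} (hy : a • y = (√(lossNormalizer 𝒟 μ Q))⁻¹ • (x - μ)) :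
    normalizedLoss 𝒟 μ Q x =
      scaledLoss a (fun i => (√(lossNormalizer 𝒟 μ Q))⁻¹ • (Q i - μ)) y := by
  have hsq := Real.sq_sqrt (lossNormalizer_nonneg 𝒟 μ Q)
  simp only [scaledLoss, hy, ← smul_sub, sub_sub_sub_cancel_right, norm_smul, mul_pow, norm_inv,
    Real.norm_eq_abs, inv_pow, sq_abs, hsq, ← mul_assoc]
  rw [← Real.mul_iInf_of_nonneg
    (mul_nonneg zero_le_two (inv_nonneg.2 (lossNormalizer_nonneg 𝒟 μ Q))), normalizedLoss,
    sqDistToCenters]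
  ring

variable [BorelSpace E] [Finite ι] [Nonempty ι] {𝒟 : Measure E}
  [IsProbabilityMeasure 𝒟] {μ : E}

theorem integrable_sqDistToCenters (hμ : Integrable (fun x => ‖x - μ‖ ^ 2) 𝒟) (Q : ι → E) :
    Integrable (sqDistToCenters Q) 𝒟 := by
  have hmeas : Measurable (sqDistToCenters Q) :=
    .iInf fun i => (measurable_id.sub_const (Q i)).norm.pow_const 2
  refine ((hμ.const_mul 2).add (integrable_const (2 * sqDistToCenters Q μ))).mono'
    hmeas.aestronglyMeasurable (.of_forall fun x => ?_)
  rw [Real.norm_eq_abs, abs_of_nonneg (sqDistToCenters_nonneg Q x)]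
  simpa only [norm_sub_rev, Pi.add_apply] using sqDistToCenters_le_two_mul_add Q x μ

theorem sqDistToCenters_le_two_mul_lossNormalizer (hμ : Integrable (fun x => ‖x - μ‖ ^ 2) 𝒟)
    (Q : ι → E) : sqDistToCenters Q μ ≤ 2 * lossNormalizer 𝒟 μ Q := by
  have hQ := integrable_sqDistToCenters hμ Q
  calc sqDistToCenters Q μ = ∫ _x, sqDistToCenters Q μ ∂𝒟 := by simp
    _ ≤ ∫ x, (2 * ‖x - μ‖ ^ 2 + 2 * sqDistToCenters Q x) ∂𝒟 :=
        integral_mono (integrable_const _) ((hμ.const_mul 2).add (hQ.const_mul 2))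
          fun x => sqDistToCenters_le_two_mul_add Q μ x
    _ = 2 * lossNormalizer 𝒟 μ Q := by
        rw [integral_add (hμ.const_mul 2) (hQ.const_mul 2), integral_const_mul,
          integral_const_mul, ← mul_add, lossNormalizer]

variable [NormedSpace ℝ E]

theorem exists_sq_norm_inv_sqrt_lossNormalizer_smul_le
    (hμ : Integrable (fun x => ‖x - μ‖ ^ 2) 𝒟) (Q : ι → E) :
    ∃ i, ‖(√(lossNormalizer 𝒟 μ Q))⁻¹ • (Q i - μ)‖ ^ 2 ≤ 2 := by
  obtain ⟨i, hi⟩ := exists_eq_ciInf_of_finite (f := fun i => ‖μ - Q i‖ ^ 2)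
  have hD := lossNormalizer_nonneg 𝒟 μ Q
  refine ⟨i, ?_⟩
  rw [norm_smul, mul_pow, norm_inv, Real.norm_eq_abs, inv_pow, sq_abs, Real.sq_sqrt hD,
    norm_sub_rev, hi]
  calc (lossNormalizer 𝒟 μ Q)⁻¹ * sqDistToCenters Q μ
      ≤ (lossNormalizer 𝒟 μ Q)⁻¹ * (2 * lossNormalizer 𝒟 μ Q) := by
        gcongr
        exact sqDistToCenters_le_two_mul_lossNormalizer hμ Q
    _ = 2 * ((lossNormalizer 𝒟 μ Q)⁻¹ * lossNormalizer 𝒟 μ Q) := by ring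
    _ ≤ 2 := by linarith [inv_mul_le_one (a := lossNormalizer 𝒟 μ Q)]

/-- If `𝒟` has second moment zero about `μ`, then `x = μ` is the only point that matters, and the
scale `1` serves. -/
theorem exists_normalizedLoss_eq_scaledLoss (hμ : Integrable (fun x => ‖x - μ‖ ^ 2) 𝒟)
    (Q : ι → E) :
    ∃ a ∈ Set.Ioc 0 1, ∃ w : ι → E, (∃ i, ‖w i‖ ^ 2 ≤ 2) ∧
      ∀ x, (∫ y, ‖y - μ‖ ^ 2 ∂𝒟 = 0 → x = μ) →
        normalizedLoss 𝒟 μ Q x = scaledLoss a w ((√(∫ y, ‖y - μ‖ ^ 2 ∂𝒟))⁻¹ • (x - μ)) := by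
  have hw := exists_sq_norm_inv_sqrt_lossNormalizer_smul_le hμ Q
  rcases (integral_nonneg fun y => sq_nonneg ‖y - μ‖ : 0 ≤ ∫ y, ‖y - μ‖ ^ 2 ∂𝒟).eq_or_lt with
    h0 | hpos
  · refine ⟨1, ⟨one_pos, le_rfl⟩, _, hw, fun x hx => normalizedLoss_eq_scaledLoss ?_⟩
    simp [hx h0.symm]
  · have hle := integral_sq_norm_sub_le_lossNormalizer 𝒟 μ Q
    have hσ := Real.sqrt_pos.2 hpos
    have hD := Real.sqrt_pos.2 (hpos.trans_le hle)
    refine ⟨√(∫ y, ‖y - μ‖ ^ 2 ∂𝒟) / √(lossNormalizer 𝒟 μ Q),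
      ⟨div_pos hσ hD, (div_le_one hD).2 (Real.sqrt_le_sqrt hle)⟩, _, hw,
      fun x _ => normalizedLoss_eq_scaledLoss ?_⟩
    rw [smul_smul, div_mul_eq_mul_div, mul_inv_cancel₀ hσ.ne', one_div]

end SqDistToCenters

theorem sum_sq_norm_inv_sqrt_smul_sub_div_le {E : Type*} [NormedAddCommGroup E] [NormedSpace ℝ E]
    {m : ℕ} {x : Fin m → E} {μ : E} {C V : ℝ} (hC : 0 ≤ C) (hV : 0 ≤ V)
    (hx : ∑ j, ‖x j - μ‖ ^ 2 / m ≤ C * V) :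
    ∑ j, ‖(√V)⁻¹ • (x j - μ)‖ ^ 2 / m ≤ C := by
  simp only [norm_smul, mul_pow, norm_inv, Real.norm_eq_abs, inv_pow, sq_abs, Real.sq_sqrt hV,
    mul_div_assoc, ← Finset.mul_sum]
  calc V⁻¹ * ∑ j, ‖x j - μ‖ ^ 2 / m ≤ V⁻¹ * (C * V) := by gcongr
    _ = C * (V⁻¹ * V) := by ring
    _ ≤ C := mul_le_of_le_one_right hC inv_mul_le_one

theorem eq_of_sum_sq_norm_sub_div_nonpos {E : Type*} [NormedAddCommGroup E] {m : ℕ} {x : Fin m → E}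
    {μ : E} (hx : ∑ j, ‖x j - μ‖ ^ 2 / m ≤ 0) (j : Fin m) : x j = μ := by
  have hm : (m : ℝ) ≠ 0 := Nat.cast_ne_zero.2 j.pos.ne'
  have hterm (i : Fin m) : 0 ≤ ‖x i - μ‖ ^ 2 / m := by positivity
  have hj := (Finset.sum_eq_zero_iff_of_nonneg fun i _ => hterm i).1
    (hx.antisymm (Finset.sum_nonneg fun i _ => hterm i)) j (Finset.mem_univ j)
  simpa [hm, sub_eq_zero] using hj

section Discretization

variable {E ι : Type*} [NormedAddCommGroup E] [NormedSpace ℝ E] [FiniteDimensional ℝ E]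
  [MeasurableSpace E] [BorelSpace E] [Fintype ι] {𝒟 : Measure E} [IsProbabilityMeasure 𝒟] {μ : E}
  {m : ℕ}

theorem hasPartition_exists_finset_sum_abs_normalizedLoss_sub_le [Nonempty ι]
    (hμ : Integrable (fun x => ‖x - μ‖ ^ 2) 𝒟) {β : Type*} {x : β → Fin m → E} {J : Finset β}
    {C θ η τ : ℝ} (hC : 0 ≤ C) (hη : 0 < η) (hθ : θ ∈ Set.Ioc 0 1)
    (hx : ∀ b ∈ J, ∑ j, ‖x b j - μ‖ ^ 2 / m ≤ C * ∫ z, ‖z - μ‖ ^ 2 ∂𝒟) :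
    HasPartition
      (fun Q Q' : ι → E => ∃ I : Finset β, I.card * τ ≤ 2 * η * Fintype.card ι ∧
        ∀ b ∈ J, b ∉ I → ∑ j, |normalizedLoss 𝒟 μ Q (x b j) - normalizedLoss 𝒟 μ Q' (x b j)| / m ≤
          340 * θ * (1 + C) + 8 * τ)
      (centerCellCount (Module.finrank ℝ E) (J.card * (1 + C)) θ η ^ Fintype.card ι) := by
  choose a ha w hw hloss using exists_normalizedLoss_eq_scaledLoss (ι := ι) hμ
  have hV : 0 ≤ ∫ z, ‖z - μ‖ ^ 2 ∂𝒟 := integral_nonneg fun _ => sq_nonneg _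
  have hdegenerate (b : β) (hb : b ∈ J) (j : Fin m) (h0 : ∫ z, ‖z - μ‖ ^ 2 ∂𝒟 = 0) : x b j = μ :=
    eq_of_sum_sq_norm_sub_div_nonpos (by simpa only [h0, mul_zero] using hx b hb) j
  have hW (b : β) (hb : b ∈ J) :
      (blockMeasure fun j => (√(∫ z, ‖z - μ‖ ^ 2 ∂𝒟))⁻¹ • (x b j - μ)).real Set.univ ≤ 1 + C :=
    blockMeasure_real_univ_le _ (sum_sq_norm_inv_sqrt_smul_sub_div_le hC hV (hx b hb))
  refine (hasPartition_exists_finset_sum_abs_scaledLoss_sub_le (τ := τ) hη hθ hW ha hw).mono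
    (fun Q Q' => ?_) le_rfl
  rintro ⟨I, hI, hclose⟩
  refine ⟨I, hI, fun b hb hbI => ?_⟩
  simpa only [hloss _ _ (hdegenerate b hb _)] using hclose b hb hbI

theorem exists_finset_forall_notMem_imp_prod {α β : Type*} [Fintype α] [Fintype β] [DecidableEq α]
    [DecidableEq β] (J I : Finset (α × β)) :
    ∃ I' : Finset β, I'.card ≤ Jᶜ.card + I.card ∧ ∀ b ∉ I', ∀ a, (a, b) ∈ J ∧ (a, b) ∉ I := by
  refine ⟨(Jᶜ ∪ I).image Prod.snd,
    Finset.card_image_le.trans (Finset.card_union_le _ _), fun b hb a => ?_⟩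
  have hab : (a, b) ∉ Jᶜ ∪ I := fun h => hb (Finset.mem_image_of_mem Prod.snd h)
  simpa using hab

open Classical in
theorem card_filter_apply_mem_eq_sum_indicator {α β γ : Type*} [Fintype α] [Fintype β]
    (X : α → β → γ) (B : Set γ) :
    ((Finset.univ.filter fun p : α × β => X p.1 p.2 ∈ B).card : ℝ) =
      ∑ a, ∑ b, B.indicator 1 (X a b) := by
  rw [← Finset.sum_boole, Fintype.sum_prod_type]
  rfl

theorem exists_isEpsDiscretization_range_normalizedLoss_of_nonempty [Nonempty ι] [Nontrivial E]
    (hμ : Integrable (fun x => ‖x - μ‖ ^ 2) 𝒟) {ε : ℝ} (hε : ε ∈ Set.Ioo 0 1) {κ : ℕ} (hκ : 0 < κ)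
    {X : Fin 3 → Fin κ → Fin m → E}
    (hX : ∀ l, ∑ i, {x : Fin m → E | 5000 * ∫ z, ‖z - μ‖ ^ 2 ∂𝒟 <
      ∑ j, ‖x j - μ‖ ^ 2 / m}.indicator 1 (X l i) ≤ 0.0008 * (κ : ℝ)) :
    ∃ F : Finset (E → ℝ),
      IsEpsDiscretization ε m κ X (Set.range (normalizedLoss (ι := ι) 𝒟 μ)) F ∧
      (F.card : ℝ) ≤ (72 * 10 ^ 4 * 8000 * Real.exp 1 / ε) ^
        (140 * (Fintype.card ι : ℝ) * Module.finrank ℝ E * Real.log (6 * Fintype.card ι)) := by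
  classical
  set B := {x : Fin m → E | 5000 * ∫ z, ‖z - μ‖ ^ 2 ∂𝒟 < ∑ j, ‖x j - μ‖ ^ 2 / m}
  set J := (Finset.univ.filter fun p : Fin 3 × Fin κ => X p.1 p.2 ∈ B)ᶜ with hJdef
  have hε0 := hε.1
  have hκ0 : (0 : ℝ) < κ := Nat.cast_pos.2 hκ
  have hk0 : (0 : ℝ) < Fintype.card ι := Nat.cast_pos.2 Fintype.card_pos
  have hJc : (Jᶜ.card : ℝ) ≤ 0.0024 * κ := by
    rw [hJdef, compl_compl, card_filter_apply_mem_eq_sum_indicator]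
    refine (Finset.sum_le_sum fun l _ => hX l).trans_eq ?_
    rw [Fin.sum_const, nsmul_eq_mul]
    ring
  have hJ : (J.card : ℝ) ≤ 3 * κ := by
    have hcard : J.card ≤ 3 * κ := (Finset.card_le_univ J).trans_eq (by simp)
    exact_mod_cast hcard
  have hgood : ∀ p ∈ J, ∑ j, ‖X p.1 p.2 j - μ‖ ^ 2 / m ≤ 5000 * ∫ z, ‖z - μ‖ ^ 2 ∂𝒟 :=
    fun p hp => by simpa [hJdef, B] using hp
  refine ((hasPartition_exists_finset_sum_abs_normalizedLoss_sub_le (ι := ι) (τ := ε / 16) hμ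
    (by norm_num) (by positivity) ⟨by positivity, by linarith [hε.2]⟩ hgood).mono
    (fun Q Q' => ?_) (centerCellCount_pow_le hε hκ0 ⟨by positivity, by linarith⟩
      Module.finrank_pos Fintype.card_pos)).exists_isEpsDiscretization
  rintro ⟨I, hI, hclose⟩
  obtain ⟨I', hI', hmem⟩ := exists_finset_forall_notMem_imp_prod J I
  refine ⟨I', ?_, fun i hi l => (hclose (l, i) (hmem i hi l).1 (hmem i hi l).2).trans (by linarith)⟩
  have hIcard : (I.card : ℝ) ≤ 0.0008 * κ := by
    refine le_of_mul_le_mul_right (hI.trans_eq ?_) (show 0 < ε / 16 by positivity)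
    field_simp
    norm_num
  calc (I'.card : ℝ) ≤ Jᶜ.card + I.card := by exact_mod_cast hI'
    _ ≤ 2 * κ / 625 := by linarith

theorem one_le_div_rpow_log {ε : ℝ} (hε : ε ∈ Set.Ioo 0 1) (d k : ℕ) :
    1 ≤ (72 * 10 ^ 4 * 8000 * Real.exp 1 / ε) ^ (140 * (k : ℝ) * d * Real.log (6 * k)) := by
  have hlog : 0 ≤ Real.log (6 * k) := by exact_mod_cast Real.log_natCast_nonneg (6 * k)
  refine Real.one_le_rpow ?_ (by positivity)
  rw [le_div_iff₀ hε.1]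
  linarith [hε.2, Real.add_one_le_exp 1]

theorem exists_isEpsDiscretization_range_normalizedLoss
    (hμ : Integrable (fun x => ‖x - μ‖ ^ 2) 𝒟) {ε : ℝ} (hε : ε ∈ Set.Ioo 0 1) {κ : ℕ} (hκ : 0 < κ)
    {X : Fin 3 → Fin κ → Fin m → E}
    (hX : ∀ l, ∑ i, {x : Fin m → E | 5000 * ∫ z, ‖z - μ‖ ^ 2 ∂𝒟 <
      ∑ j, ‖x j - μ‖ ^ 2 / m}.indicator 1 (X l i) ≤ 0.0008 * (κ : ℝ)) :
    ∃ F : Finset (E → ℝ),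
      IsEpsDiscretization ε m κ X (Set.range (normalizedLoss (ι := ι) 𝒟 μ)) F ∧
      (F.card : ℝ) ≤ (72 * 10 ^ 4 * 8000 * Real.exp 1 / ε) ^
        (140 * (Fintype.card ι : ℝ) * Module.finrank ℝ E * Real.log (6 * Fintype.card ι)) := by
  by_cases h : IsEmpty ι ∨ Subsingleton E
  · have hloss (Q : ι → E) : normalizedLoss 𝒟 μ Q = 0 := by
      funext x
      simp [normalizedLoss, sqDistToCenters_eq_zero_of_isEmpty_or_subsingleton h Q]
    refine (HasPartition.of_label (fun _ => ())
      (by simpa using one_le_div_rpow_log hε _ _) fun Q Q' _ => ?_).exists_isEpsDiscretization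
    exact ⟨∅, by rw [Finset.card_empty, Nat.cast_zero]; positivity, by simp [hloss, hε.1.le]⟩
  · rw [not_or, not_isEmpty_iff, not_subsingleton_iff_nontrivial] at h
    obtain ⟨_, _⟩ := h
    exact exists_isEpsDiscretization_range_normalizedLoss_of_nonempty hμ hε hκ hX

end Discretization

theorem kmeans_admits_D_discretization_general {E ι : Type*} [NormedAddCommGroup E]
    [NormedSpace ℝ E] [FiniteDimensional ℝ E] [MeasurableSpace E] [BorelSpace E] [Fintype ι]
    (𝒟 : Measure E) [IsProbabilityMeasure 𝒟] (μ : E) (hμ : Integrable (fun x => ‖x - μ‖ ^ 2) 𝒟) :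
    AdmitsDDiscretization 𝒟 (Set.range (normalizedLoss (ι := ι) 𝒟 μ))
      (fun δ => 2 * 8000 ^ 2 * Real.log (Real.exp 1 / δ)) 1
      (fun ε _m => 8 * (72 * 10 ^ 4 * 8000 * Real.exp 1 / ε) ^
        (140 * (Fintype.card ι : ℝ) * Module.finrank ℝ E * Real.log (6 * Fintype.card ι))) := by
  intro ε δ hε0 hε1 hδ0 hδ1 m κ hm hκδ
  have hκ : 0 < κ := by
    have hlog : 0 < Real.log (Real.exp 1 / δ) :=
      Real.log_pos ((one_lt_div hδ0).2 (by linarith [Real.add_one_le_exp 1]))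
    exact Nat.cast_pos.1 (hκδ.trans_lt' (by positivity))
  refine (ofReal_one_sub_le_measure_pi_forall_sum_indicator_le 𝒟 (fun x => sq_nonneg ‖x - μ‖)
    ((measurable_id.sub_const μ).norm.pow_const 2) hμ (Nat.one_le_iff_ne_zero.1 hm) ⟨hδ0, hδ1⟩
    hκδ).trans (measure_mono (Set.ofPred_subset_ofPred.2 fun X hX => ?_))
  obtain ⟨F, hF, hcard⟩ :=
    exists_isEpsDiscretization_range_normalizedLoss (ι := ι) hμ ⟨hε0, hε1⟩ hκ hX
  exact ⟨F, hF, by linarith [F.card.cast_nonneg (α := ℝ)]⟩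

/-- The class `ℱ_k` of normalized `k`-means losses admits a `𝒟`-discretization with
threshold function `κ₀(δ) = 2·8000²·ln(e/δ)`, threshold `ε₀ = 1` and size function
`N(ε, m) = 8·(72·10⁴·8000·e/ε)^{140 k d ln(6k)}`, whenever `σ² < ∞`. -/
theorem kmeans_admits_D_discretization (d k : ℕ)
    (𝒟 : Measure (EuclideanSpace ℝ (Fin d))) [IsProbabilityMeasure 𝒟]
    (hmean : Integrable (fun x => x) 𝒟)
    (hσ : Integrable (fun x => ‖x - ∫ z, z ∂𝒟‖ ^ 2) 𝒟) :
    AdmitsDDiscretization 𝒟 (kmeansClass d k 𝒟)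
      (fun δ => 2 * 8000 ^ 2 * Real.log (Real.exp 1 / δ)) 1
      (fun ε _m =>
        8 * (72 * 10 ^ 4 * 8000 * Real.exp 1 / ε) ^ (140 * (k : ℝ) * (d : ℝ) * Real.log (6 * (k : ℝ)))) := by
  have hclass : kmeansClass d k 𝒟 = Set.range (normalizedLoss 𝒟 (∫ z, z ∂𝒟)) :=
    Set.ext fun f => ⟨fun ⟨Q, hQ⟩ => ⟨Q, hQ.symm⟩, fun ⟨Q, hQ⟩ => ⟨Q, hQ.symm⟩⟩
  simpa only [hclass, Fintype.card_fin, finrank_euclideanSpace_fin] using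
    kmeans_admits_D_discretization_general (ι := Fin k) 𝒟 (∫ z, z ∂𝒟) hσ
end

section
/- Let ℓ : ℝ → [0,∞) be a continuous loss function, 0 < δ < 1, p ∈ (1,2], W > 0, and let 𝒟_X and 𝒟_Y be distributions over ℝ^d and ℝ respectively with E[‖X‖₁] < ∞ and E[|Y|] < ∞; let 𝒟 = 𝒟_X × 𝒟_Y and ℱ_W = {(x,y) ↦ ℓ(⟨w,x⟩ − y) : w ∈ ℝ^d, ‖w‖₂ ≤ W}. Suppose ∞ > v_p ≥ sup_{f∈ℱ_W} E_{(X,Y)∼𝒟}[f(X,Y)^p]. Then for ε > 0, if m ≥ (400·16^p·v_p/ε^p)^{1/(p−1)} and κ ≥ max{κ₀(δ/8), 10⁶·ln(2)/99, 50·ln(8·N(ε/16, m)/δ)}, where κ₀(δ) = 4·1250²·ln(e/δ), N(ε, m) = (6W/β(ε,m,𝒟))^d, β(ε,m,𝒟) = min(W/2, α_ℓ(J, ε)/(3750·(E[‖X‖₁] + E[|Y|])·m)), and J = (3W/2 + 1)·3750·(E[‖X‖₁] + E[|Y|])·m, then with probability at least 1 − δ over Z = (X,Y) ∼ (𝒟^m)^κ,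 for all f ∈ ℱ_W it holds that |MoM(f, Z) − E_{Z'∼𝒟}[f(Z')]| ≤ ε. -/
/-!
A finite net reduces uniform convergence to a union bound. Markov's inequality puts a whole block
into the region `‖x‖₁ + |y| ≤ 3750 (E‖X‖₁ + E|Y|) m`, except with probability `1 / 3750`; on
this region the modulus of continuity of `ℓ` turns a net of the ball `‖w‖₂ ≤ W`, whose size a volume
argument bounds, into a uniform net of the loss class. By truncation and Chebyshev's inequality a
block mean of `f` lies within `t = ε / 16` of `E f`, except with probability `1 / 100`. So a block
is reliable for a given function with probability at least `3 / 5`, and Hoeffding's inequality makes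
a majority of the `κ` blocks reliable for all functions of the net simultaneously.

If `g` is the net point of `f`, uniformly `t`-close on the region, then some block is reliable for
both, which gives `|E f - E g| ≤ 3 t`. A block reliable for `g` therefore has its mean of `f` within
`5 t` of `E f`, and the median inherits the bound `5 t ≤ ε` from the majority of the blocks.
-/

open MeasureTheory

/-- The median of `κ` real numbers: the `((κ+1)/2)`-th smallest if `κ` is odd and the
`(κ/2)`-th smallest if `κ` is even (both given by the zero-based index `(κ-1)/2`). -/
noncomputable def median {κ : ℕ} (a : Fin κ → ℝ) : ℝ :=
  ((List.ofFn a).mergeSort fun x y => decide (x ≤ y)).getD ((κ - 1) / 2) 0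

/-- The Median-of-Means estimator on a sample of `κ` blocks of `m` points. -/
noncomputable def mom {𝒳 : Type*} {m κ : ℕ} (f : 𝒳 → ℝ) (X : Fin κ → Fin m → 𝒳) : ℝ :=
  median fun i => blockMean f (X i)

/-- `α_ℓ(a,b)`: the largest positive real `α` such that any two points of `[-a,a]` at
distance at most `α` have `ℓ`-values at distance at most `b`. -/
noncomputable def alphaEll (ℓ : ℝ → ℝ) (a b : ℝ) : ℝ :=
  sSup {α : ℝ | 0 < α ∧ ∀ x y : ℝ, |x| ≤ a → |y| ≤ a → |x - y| ≤ α → |ℓ x - ℓ y| ≤ b}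

/-- The class `ℱ_W` of losses of norm-constrained linear predictors:
`(x, y) ↦ ℓ(⟨w, x⟩ - y)` for `‖w‖₂ ≤ W`. -/
def linRegClass (d : ℕ) (ℓ : ℝ → ℝ) (W : ℝ) : Set (EuclideanSpace ℝ (Fin d) × ℝ → ℝ) :=
  {f | ∃ w : EuclideanSpace ℝ (Fin d), ‖w‖ ≤ W ∧ f = fun z => ℓ ((∑ i, w i * z.1 i) - z.2)}

open ProbabilityTheory
open scoped Finset NNReal

/-! ### The median -/

lemma median_eq_apply_sort {κ : ℕ} (a : Fin κ → ℝ) (hκ : (κ - 1) / 2 < κ) :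
    median a = a (Tuple.sort a ⟨(κ - 1) / 2, hκ⟩) := by
  have hsorted : ((List.ofFn a).mergeSort fun x y => decide (x ≤ y)).Pairwise (· ≤ ·) := by
    simpa using List.pairwise_mergeSort (le := fun x y : ℝ => decide (x ≤ y))
      (by simpa using fun a b c => le_trans) (by simpa using le_total) (List.ofFn a)
  have hsort : (List.ofFn a).mergeSort (fun x y => decide (x ≤ y)) =
      List.ofFn (a ∘ Tuple.sort a) :=
    ((List.mergeSort_perm _ _).trans ((Tuple.sort a).ofFn_comp_perm a).symm).eq_of_pairwise'
      hsorted (Tuple.monotone_sort a).sortedLE_ofFn.pairwise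
  simp [median, hsort, hκ]

lemma le_two_mul_ncard_le_median {κ : ℕ} (a : Fin κ → ℝ) :
    κ ≤ 2 * {i | a i ≤ median a}.ncard := by
  rcases κ.eq_zero_or_pos with rfl | hpos
  · simp
  have hκ : (κ - 1) / 2 < κ := by omega
  have hsub : Tuple.sort a '' Set.Iic ⟨(κ - 1) / 2, hκ⟩ ⊆ {i | a i ≤ median a} := by
    rintro _ ⟨j, hj, rfl⟩
    simpa [median_eq_apply_sort a hκ] using Tuple.monotone_sort a hj
  have hcard := Set.ncard_le_ncard hsub
  rw [Set.ncard_image_of_injective _ (Tuple.sort a).injective, Set.ncard_eq_toFinset_card',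
    Set.toFinset_Iic, Fin.card_Iic] at hcard
  dsimp only at hcard
  omega

lemma le_two_mul_ncard_median_le {κ : ℕ} (a : Fin κ → ℝ) :
    κ ≤ 2 * {i | median a ≤ a i}.ncard := by
  rcases κ.eq_zero_or_pos with rfl | hpos
  · simp
  have hκ : (κ - 1) / 2 < κ := by omega
  have hsub : Tuple.sort a '' Set.Ici ⟨(κ - 1) / 2, hκ⟩ ⊆ {i | median a ≤ a i} := by
    rintro _ ⟨j, hj, rfl⟩
    simpa [median_eq_apply_sort a hκ] using Tuple.monotone_sort a hj
  have hcard := Set.ncard_le_ncard hsub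
  rw [Set.ncard_image_of_injective _ (Tuple.sort a).injective, Set.ncard_eq_toFinset_card',
    Set.toFinset_Ici, Fin.card_Ici] at hcard
  dsimp only at hcard
  omega

lemma median_mem_of_two_mul_ncard_notMem_lt {κ : ℕ} {a : Fin κ → ℝ} {s : Set ℝ}
    (hs : s.OrdConnected) (h : 2 * {i | a i ∉ s}.ncard < κ) : median a ∈ s := by
  have exists_mem (q : Fin κ → Prop) (hq : κ ≤ 2 * {i | q i}.ncard) : ∃ i, q i ∧ a i ∈ s := by
    by_contra! hnot
    have hle : {i | q i}.ncard ≤ {i | a i ∉ s}.ncard := Set.ncard_le_ncard hnot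
    omega
  obtain ⟨i, hi, his⟩ := exists_mem _ (le_two_mul_ncard_le_median a)
  obtain ⟨j, hj, hjs⟩ := exists_mem _ (le_two_mul_ncard_median_le a)
  exact hs.out his hjs ⟨hi, hj⟩

/-! ### Covering balls of normed spaces -/

section Covering

variable {E : Type*} [NormedAddCommGroup E] [NormedSpace ℝ E] [FiniteDimensional ℝ E]

-- The disjoint balls of radius `r / 2` around the points of `T` lie in the ball of radius
-- `R + r / 2`: compare volumes.
lemma card_le_of_isSeparated_of_subset_closedBall {x : E} {R : ℝ} (hR : 0 ≤ R) {r : ℝ≥0}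
    (hr : 0 < r) {T : Finset E} (hT : (T : Set E) ⊆ Metric.closedBall x R)
    (hsep : Metric.IsSeparated r (T : Set E)) :
    (#T : ℝ) ≤ ((2 * R + r) / r) ^ Module.finrank ℝ E := by
  borelize E
  let ν : Measure E := Measure.addHaar
  have hr' : (0 : ℝ) < r := hr
  have hdisj : (T : Set E).PairwiseDisjoint fun c => Metric.ball c (r / 2 : ℝ) := by
    intro c hc e he hce
    have hlt : (r : ENNReal) < edist c e := hsep hc he hce
    rw [edist_nndist, ENNReal.coe_lt_coe] at hlt
    exact Metric.ball_disjoint_ball (by rw [add_halves, dist_nndist]; exact_mod_cast hlt.le)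
  have hsub : (⋃ c ∈ T, Metric.ball c (r / 2 : ℝ)) ⊆ Metric.ball x (R + r / 2) :=
    Set.iUnion₂_subset fun c hc =>
      Metric.ball_subset_ball' (by linarith [Metric.mem_closedBall.1 (hT hc)])
  have hvol := measure_mono (μ := ν) hsub
  rw [measure_biUnion_finset hdisj fun c _ => measurableSet_ball] at hvol
  simp only [Measure.addHaar_ball_of_pos ν _ (half_pos hr'),
    Measure.addHaar_ball_of_pos ν _ (by positivity : 0 < R + (r : ℝ) / 2),
    Finset.sum_const, nsmul_eq_mul, ← mul_assoc] at hvol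
  have hcard := ENNReal.toReal_le_of_le_ofReal (by positivity) ((ENNReal.mul_le_mul_iff_left
    (Metric.measure_ball_pos _ _ zero_lt_one).ne' measure_ball_lt_top.ne).1 hvol)
  rw [ENNReal.toReal_mul, ENNReal.toReal_ofReal (by positivity), ENNReal.toReal_natCast] at hcard
  rwa [show (2 * R + r) / r = (R + r / 2) / (r / 2) by field_simp, div_pow,
    le_div_iff₀ (by positivity)]

lemma exists_isCover_closedBall_card_le (x : E) {R : ℝ} (hR : 0 ≤ R) {r : ℝ≥0} (hr : 0 < r) :
    ∃ T : Finset E, (T : Set E) ⊆ Metric.closedBall x R ∧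
      Metric.IsCover r (Metric.closedBall x R) (T : Set E) ∧
      (#T : ℝ) ≤ ((2 * R + r) / r) ^ Module.finrank ℝ E := by
  set B := Metric.closedBall x R
  have hpacking : Metric.packingNumber r B ≠ ⊤ := by
    obtain ⟨N, -, hN, hcover⟩ := Metric.exists_finite_isCover_of_isCompact (half_pos hr).ne'
      (isCompact_closedBall x R)
    have hle := (Metric.packingNumber_two_mul_le_externalCoveringNumber (r / 2) B).trans
      hcover.externalCoveringNumber_le_encard
    rw [mul_div_cancel₀ _ two_ne_zero] at hle
    exact ne_top_of_le_ne_top (by simpa using hN) hle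
  have hfin : (Metric.maximalSeparatedSet r B).Finite :=
    Set.encard_ne_top_iff.1 (by rwa [Metric.encard_maximalSeparatedSet hpacking])
  have hsub := Metric.maximalSeparatedSet_subset (ε := r) (A := B)
  refine ⟨hfin.toFinset, by simpa using hsub, ?_,
    card_le_of_isSeparated_of_subset_closedBall hR hr (x := x) (by simpa using hsub) ?_⟩
  · simpa using Metric.isCover_maximalSeparatedSet hpacking
  · simpa using Metric.isSeparated_maximalSeparatedSet (ε := r) (A := B)

end Covering

/-! ### Independent samples -/

section IndependentSamples

variable {Ω : Type*} [MeasurableSpace Ω] {μ : Measure Ω} [IsProbabilityMeasure μ]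

lemma pi_exists_mem_le (m : ℕ) (A : Set Ω) :
    (Measure.pi fun _ : Fin m => μ) {x | ∃ j, x j ∈ A} ≤ m * μ A := by
  have heval (j : Fin m) : (Measure.pi fun _ : Fin m => μ) ((fun x => x j) ⁻¹' A) ≤ μ A := by
    have hj := measurePreserving_eval (fun _ : Fin m => μ) j
    calc _ ≤ (Measure.pi fun _ : Fin m => μ).map (Function.eval j) A :=
          Measure.le_map_apply hj.aemeasurable A
      _ = μ A := by rw [hj.map_eq]
  calc _ = (Measure.pi fun _ : Fin m => μ) (⋃ j, (fun x => x j) ⁻¹' A) := by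
        simp only [← Set.ofPred_exists, Set.preimage]
    _ ≤ ∑ j : Fin m, (Measure.pi fun _ : Fin m => μ) ((fun x => x j) ⁻¹' A) :=
        measure_iUnion_fintype_le _ _
    _ ≤ ∑ _j : Fin m, μ A := Finset.sum_le_sum fun j _ => heval j
    _ = m * μ A := by simp

lemma measure_mul_integral_lt_le {h : Ω → ℝ} (h0 : 0 ≤ᵐ[μ] h) (hint : Integrable h μ) {c : ℝ}
    (hc : 0 < c) : μ {z | c * ∫ z, h z ∂μ < h z} ≤ ENNReal.ofReal (1 / c) := by
  rcases (integral_nonneg_of_ae h0).eq_or_lt with hzero | hpos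
  · have hae := (integral_eq_zero_iff_of_nonneg_ae h0 hint).1 hzero.symm
    have hnull : μ {z | c * ∫ z, h z ∂μ < h z} = 0 := by
      rw [← hzero, mul_zero]
      exact measure_mono_null (fun z (hz : 0 < h z) => hz.ne') (ae_iff.1 hae)
    simp [hnull]
  · have hmarkov := mul_meas_ge_le_integral_of_nonneg h0 hint (c * ∫ z, h z ∂μ)
    have hle : μ.real {z | c * ∫ z, h z ∂μ < h z} ≤ μ.real {z | c * ∫ z, h z ∂μ ≤ h z} :=
      measureReal_mono (Set.ofPred_subset_ofPred.2 fun z => le_of_lt)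
    rw [← ofReal_measureReal]
    refine ENNReal.ofReal_le_ofReal (hle.trans ?_)
    rw [le_div_iff₀ hc]
    refine le_of_mul_le_mul_right ?_ hpos
    linarith

lemma pi_exists_mul_integral_lt_le {h : Ω → ℝ} (h0 : 0 ≤ᵐ[μ] h) (hint : Integrable h μ) {c : ℝ}
    (hc : 0 < c) (m : ℕ) :
    (Measure.pi fun _ : Fin m => μ) {x | ∃ j, c * (∫ z, h z ∂μ) * m < h (x j)} ≤
      ENNReal.ofReal (1 / c) := by
  rcases m.eq_zero_or_pos with rfl | hm
  · simp
  have hm' : (0 : ℝ) < m := Nat.cast_pos.2 hm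
  calc _ ≤ m * μ {z | c * (∫ z, h z ∂μ) * m < h z} := pi_exists_mem_le m _
    _ = m * μ {z | c * m * ∫ z, h z ∂μ < h z} := by simp only [mul_right_comm]
    _ ≤ m * ENNReal.ofReal (1 / (c * m)) := by
        gcongr; exact measure_mul_integral_lt_le h0 hint (by positivity)
    _ = ENNReal.ofReal (1 / c) := by
        rw [← ENNReal.ofReal_natCast, ← ENNReal.ofReal_mul hm'.le]
        congr 1
        field_simp

lemma pi_real_mul_add_le_ncard_mem_le (κ : ℕ) {B : Set Ω} (hB : MeasurableSet B) {s : ℝ}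
    (hs : 0 ≤ s) :
    (Measure.pi fun _ : Fin κ => μ).real {Z | κ * (μ.real B + s) ≤ {i | Z i ∈ B}.ncard} ≤
      Real.exp (-(2 * κ * s ^ 2)) := by
  let X : Ω → ℝ := fun z => B.indicator 1 z - μ.real B
  have hX : Measurable X := (measurable_one.indicator hB).sub_const _
  have hsubG : HasSubgaussianMGF X ((‖(1 : ℝ) - 0‖₊ / 2) ^ 2) μ := by
    have hmem (z : Ω) : B.indicator (1 : Ω → ℝ) z ∈ Set.Icc (0 : ℝ) 1 :=
      ⟨Set.indicator_nonneg (by simp) z, Set.indicator_le_self' (by simp) z⟩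
    simpa [X, integral_indicator_one hB] using
      hasSubgaussianMGF_of_mem_Icc (measurable_one.indicator hB).aemeasurable (ae_of_all μ hmem)
  have hsubG_eval (i : Fin κ) : HasSubgaussianMGF (fun Z : Fin κ → Ω => X (Z i))
      ((‖(1 : ℝ) - 0‖₊ / 2) ^ 2) (Measure.pi fun _ : Fin κ => μ) :=
    .of_map (measurable_pi_apply i).aemeasurable
      (by rwa [(measurePreserving_eval (fun _ : Fin κ => μ) i).map_eq])
  have hsum (Z : Fin κ → Ω) : ∑ i, X (Z i) = {i | Z i ∈ B}.ncard - κ * μ.real B := by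
    classical
    simp [X, Finset.sum_sub_distrib, Set.indicator_apply, Set.ncard_eq_toFinset_card']
  have hHoeffding := HasSubgaussianMGF.measure_sum_ge_le_of_iIndepFun
    (iIndepFun_pi fun _ : Fin κ => hX.aemeasurable) (s := Finset.univ)
    (fun i _ => hsubG_eval i) (by positivity : 0 ≤ κ * s)
  calc _ = (Measure.pi fun _ : Fin κ => μ).real {Z | κ * s ≤ ∑ i, X (Z i)} := by
        simp only [hsum, mul_add, le_sub_iff_add_le']
    _ ≤ _ := hHoeffding
    _ = _ := by
        congr 1
        rcases κ.eq_zero_or_pos with rfl | hκ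
        · simp
        · have hκ' : (κ : ℝ) ≠ 0 := by positivity
          simp only [sub_zero, nnnorm_one, one_div, inv_pow, Finset.sum_const, Finset.card_univ,
            Fintype.card_fin, nsmul_eq_mul, NNReal.coe_mul, NNReal.coe_natCast, NNReal.coe_inv,
            NNReal.coe_pow, NNReal.coe_ofNat]
          field_simp

lemma pi_le_two_mul_ncard_mem_le (κ : ℕ) {B : Set Ω} (hB : μ B ≤ ENNReal.ofReal (2 / 5)) :
    (Measure.pi fun _ : Fin κ => μ) {Z | κ ≤ 2 * {i | Z i ∈ B}.ncard} ≤
      ENNReal.ofReal (Real.exp (-(κ / 50))) := by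
  set C := toMeasurable μ B
  have hC : μ.real C ≤ 2 / 5 :=
    ENNReal.toReal_le_of_le_ofReal (by norm_num) (by rwa [measure_toMeasurable])
  have hsub : {Z : Fin κ → Ω | κ ≤ 2 * {i | Z i ∈ B}.ncard} ⊆
      {Z | κ * (μ.real C + 1 / 10) ≤ {i | Z i ∈ C}.ncard} := by
    intro Z (hZ : κ ≤ 2 * _)
    have hBC : {i | Z i ∈ B}.ncard ≤ {i | Z i ∈ C}.ncard :=
      Set.ncard_le_ncard fun i hi => subset_toMeasurable μ B hi
    have hκ : (κ : ℝ) ≤ 2 * {i | Z i ∈ C}.ncard := by exact_mod_cast hZ.trans (by gcongr)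
    have := mul_le_mul_of_nonneg_left hC (Nat.cast_nonneg (α := ℝ) κ)
    rw [Set.mem_ofPred_eq]
    linarith
  rw [← ofReal_measureReal]
  refine ENNReal.ofReal_le_ofReal ((measureReal_mono hsub).trans ?_)
  calc _ ≤ _ := pi_real_mul_add_le_ncard_mem_le κ (measurableSet_toMeasurable μ B)
          (by norm_num : (0 : ℝ) ≤ 1 / 10)
    _ = Real.exp (-(κ / 50)) := by ring_nf

end IndependentSamples

/-! ### The weak law of large numbers under a `p`-th moment bound -/

section WeakLaw

variable {Ω : Type*} {f : Ω → ℝ} {p T : ℝ}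

lemma rpow_mul_abs_sub_truncation_le (hT : 0 < T) (hp : 1 ≤ p) (z : Ω) :
    T ^ (p - 1) * |f z - truncation f T z| ≤ |f z| ^ p := by
  rcases lt_or_ge |f z| T with h | h
  · simp only [truncation_eq_self h, sub_self, abs_zero, mul_zero]
    positivity
  · have hsub : |f z - truncation f T z| ≤ |f z| := by
      simp only [truncation, Function.comp_apply, Set.indicator]
      split_ifs <;> simp
    calc _ ≤ |f z| ^ (p - 1) * |f z| := by gcongr
      _ = |f z| ^ p := by rw [← Real.rpow_add_one (hT.trans_le h).ne', sub_add_cancel]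

lemma truncation_sq_le (hT : 0 ≤ T) (hp0 : 0 ≤ p) (hp2 : p ≤ 2) (z : Ω) :
    truncation f T z ^ 2 ≤ T ^ (2 - p) * |f z| ^ p := by
  have hbound : |truncation f T z| ≤ T :=
    (abs_truncation_le_bound f T z).trans_eq (abs_of_nonneg hT)
  calc truncation f T z ^ 2 = |truncation f T z| ^ (2 - p) * |truncation f T z| ^ p := by
        rw [← Real.rpow_add_of_nonneg (abs_nonneg _) (by linarith) hp0, sub_add_cancel,
          Real.rpow_two, sq_abs]
    _ ≤ T ^ (2 - p) * |f z| ^ p := by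
        exact mul_le_mul (Real.rpow_le_rpow (abs_nonneg _) hbound (by linarith))
          (Real.rpow_le_rpow (abs_nonneg _) (abs_truncation_le_abs_self f T z) hp0)
          (by positivity) (by positivity)

lemma blockMean_eq_smul_sum {m : ℕ} (f : Ω → ℝ) :
    blockMean f = (m : ℝ)⁻¹ • ∑ j, fun x : Fin m → Ω => f (x j) := by
  ext x
  simp [blockMean, div_eq_inv_mul]

variable [MeasurableSpace Ω] {μ : Measure Ω}

lemma integrable_of_integrable_abs_rpow [IsFiniteMeasure μ] (hf : AEStronglyMeasurable f μ)
    (hp : 1 ≤ p) (hint : Integrable (fun z => |f z| ^ p) μ) : Integrable f μ := by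
  have hp0 : 0 < p := by linarith
  have hLp : MemLp f (ENNReal.ofReal p) μ := by
    rw [← integrable_norm_rpow_iff hf (by simpa using hp0) ENNReal.ofReal_ne_top]
    simpa only [ENNReal.toReal_ofReal hp0.le, Real.norm_eq_abs] using hint
  exact hLp.integrable (by simpa using hp)

lemma rpow_mul_abs_integral_sub_truncation_le [IsFiniteMeasure μ] (hf : AEStronglyMeasurable f μ)
    (hT : 0 < T) (hp : 1 ≤ p) (hint : Integrable (fun z => |f z| ^ p) μ) :
    T ^ (p - 1) * |∫ z, f z ∂μ - ∫ z, truncation f T z ∂μ| ≤ ∫ z, |f z| ^ p ∂μ := by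
  have hfint := integrable_of_integrable_abs_rpow hf hp hint
  have hsub := hfint.sub (hf.integrable_truncation (A := T))
  calc _ = T ^ (p - 1) * |∫ z, (f z - truncation f T z) ∂μ| := by
        rw [integral_sub hfint hf.integrable_truncation]
    _ ≤ T ^ (p - 1) * ∫ z, |f z - truncation f T z| ∂μ := by
        gcongr; exact abs_integral_le_integral_abs
    _ = ∫ z, T ^ (p - 1) * |f z - truncation f T z| ∂μ := (integral_const_mul _ _).symm
    _ ≤ ∫ z, |f z| ^ p ∂μ :=
        integral_mono (hsub.abs.const_mul _) hint (rpow_mul_abs_sub_truncation_le hT hp)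

lemma variance_truncation_le [IsProbabilityMeasure μ] (hf : AEStronglyMeasurable f μ)
    (hT : 0 ≤ T) (hp0 : 0 ≤ p) (hp2 : p ≤ 2) (hint : Integrable (fun z => |f z| ^ p) μ) :
    Var[truncation f T; μ] ≤ T ^ (2 - p) * ∫ z, |f z| ^ p ∂μ := by
  calc Var[truncation f T; μ] ≤ ∫ z, truncation f T z ^ 2 ∂μ :=
        variance_le_expectation_sq hf.truncation
    _ ≤ ∫ z, T ^ (2 - p) * |f z| ^ p ∂μ :=
        integral_mono hf.memLp_truncation.integrable_sq (hint.const_mul _)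
          (truncation_sq_le hT hp0 hp2)
    _ = T ^ (2 - p) * ∫ z, |f z| ^ p ∂μ := integral_const_mul _ _

lemma rpow_mul_measureReal_le_abs_le (hT : 0 ≤ T) (hp : 0 < p)
    (hint : Integrable (fun z => |f z| ^ p) μ) :
    T ^ p * μ.real {z | T ≤ |f z|} ≤ ∫ z, |f z| ^ p ∂μ := by
  have hset : {z | T ≤ |f z|} = {z | T ^ p ≤ |f z| ^ p} := by
    simp only [Real.rpow_le_rpow_iff hT (abs_nonneg _) hp]
  rw [hset]
  exact mul_meas_ge_le_integral_of_nonneg (ae_of_all μ fun z => by positivity) hint _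

variable [IsProbabilityMeasure μ] {m : ℕ} {r t : ℝ}

lemma memLp_two_blockMean (hf : MemLp f 2 μ) :
    MemLp (blockMean f) 2 (Measure.pi fun _ : Fin m => μ) := by
  rw [blockMean_eq_smul_sum]
  exact (memLp_finsetSum' _ fun j _ => hf.comp_measurePreserving
    (measurePreserving_eval (fun _ : Fin m => μ) j)).const_smul _

lemma integral_blockMean (hm : m ≠ 0) (hf : Integrable f μ) :
    ∫ x, blockMean f x ∂(Measure.pi fun _ : Fin m => μ) = ∫ z, f z ∂μ := by
  have hm' : (m : ℝ) ≠ 0 := Nat.cast_ne_zero.2 hm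
  have hint (j : Fin m) : Integrable (fun x => f (x j)) (Measure.pi fun _ : Fin m => μ) :=
    (measurePreserving_eval (fun _ : Fin m => μ) j).integrable_comp_of_integrable hf
  have heval (j : Fin m) : ∫ x, f (x j) ∂(Measure.pi fun _ : Fin m => μ) = ∫ z, f z ∂μ :=
    integral_comp_eval (μ := fun _ : Fin m => μ) hf.aestronglyMeasurable
  simp only [blockMean, integral_div, integral_finsetSum _ fun j _ => hint j, heval]
  simp [hm']

lemma variance_blockMean (hf : MemLp f 2 μ) :
    Var[blockMean f; Measure.pi fun _ : Fin m => μ] = Var[f; μ] / m := by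
  rw [blockMean_eq_smul_sum, variance_smul,
    variance_sum_pi (μ := fun _ : Fin m => μ) (X := fun _ => f) fun _ => hf]
  rcases m.eq_zero_or_pos with rfl | hm
  · simp
  · have hm' : (m : ℝ) ≠ 0 := by positivity
    simp only [inv_pow, Finset.sum_const, Finset.card_univ, Fintype.card_fin, nsmul_eq_mul]
    field_simp

lemma pi_exists_mul_le_abs_le (hp : 1 ≤ p) (hm : m ≠ 0) (ht : 0 < t)
    (hint : Integrable (fun z => |f z| ^ p) μ)
    (hmoment : ∫ z, |f z| ^ p ∂μ ≤ r * ((m * t) ^ (p - 1) * t)) :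
    (Measure.pi fun _ : Fin m => μ) {x | ∃ j, m * t ≤ |f (x j)|} ≤ ENNReal.ofReal r := by
  set T := m * t
  have hT : 0 < T := by positivity
  have hmarkov := (rpow_mul_measureReal_le_abs_le hT.le (by linarith) hint).trans hmoment
  have hTp : T ^ p = T ^ (p - 1) * t * m := by
    rw [mul_assoc, mul_comm t, ← Real.rpow_add_one hT.ne', sub_add_cancel]
  refine (pi_exists_mem_le m {z | T ≤ |f z|}).trans ?_
  rw [← ofReal_measureReal, ← ENNReal.ofReal_natCast, ← ENNReal.ofReal_mul (by positivity)]
  refine ENNReal.ofReal_le_ofReal (le_of_mul_le_mul_left ?_ (by positivity : 0 < T ^ (p - 1) * t))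
  rw [hTp] at hmarkov
  linarith

lemma pi_le_abs_blockMean_truncation_sub_le (hf : AEStronglyMeasurable f μ) (hp0 : 0 ≤ p)
    (hp2 : p ≤ 2) (hm : m ≠ 0) (ht : 0 < t) (hint : Integrable (fun z => |f z| ^ p) μ)
    (hmoment : ∫ z, |f z| ^ p ∂μ ≤ r * ((m * t) ^ (p - 1) * t)) {c : ℝ} (hc : 0 < c) :
    (Measure.pi fun _ : Fin m => μ) {x | c * t ≤
        |blockMean (truncation f (m * t)) x - ∫ z, truncation f (m * t) z ∂μ|} ≤
      ENNReal.ofReal (r / c ^ 2) := by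
  set T := m * t with hTdef
  have hT : 0 < T := by positivity
  have hLp : MemLp (truncation f T) 2 μ := hf.memLp_truncation
  have hTT : T ^ (2 - p) * T ^ (p - 1) = T := by
    rw [← Real.rpow_add hT]; norm_num
  have hvar : Var[truncation f T; μ] ≤ r * (T * t) := by
    calc _ ≤ T ^ (2 - p) * ∫ z, |f z| ^ p ∂μ := variance_truncation_le hf hT.le hp0 hp2 hint
      _ ≤ T ^ (2 - p) * (r * (T ^ (p - 1) * t)) := by gcongr
      _ = r * (T ^ (2 - p) * T ^ (p - 1) * t) := by ring
      _ = r * (T * t) := by rw [hTT]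
  have hChebyshev := meas_ge_le_variance_div_sq
    (memLp_two_blockMean (m := m) hLp) (mul_pos hc ht)
  rw [variance_blockMean hLp, integral_blockMean hm hf.integrable_truncation] at hChebyshev
  refine hChebyshev.trans (ENNReal.ofReal_le_ofReal ?_)
  calc Var[truncation f T; μ] / m / (c * t) ^ 2 ≤ r * (T * t) / m / (c * t) ^ 2 := by gcongr
    _ = r / c ^ 2 := by rw [hTdef]; field_simp

-- Truncating `f` at height `m * t` alters the block with probability at most `r` and shifts the
-- mean by at most `r * t ≤ t / 4`; Chebyshev's inequality at `3 / 4 * t` handles the truncation.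
lemma pi_lt_abs_blockMean_sub_integral_le_of_le (hf : AEStronglyMeasurable f μ) (hp1 : 1 ≤ p)
    (hp2 : p ≤ 2) (hm : m ≠ 0) (ht : 0 < t) (hint : Integrable (fun z => |f z| ^ p) μ)
    (hmoment : ∫ z, |f z| ^ p ∂μ ≤ r * ((m * t) ^ (p - 1) * t)) (hr0 : 0 ≤ r) (hr : r ≤ 1 / 4) :
    (Measure.pi fun _ : Fin m => μ) {x | t < |blockMean f x - ∫ z, f z ∂μ|} ≤
      ENNReal.ofReal (4 * r) := by
  set T := m * t
  have hT : 0 < T := by positivity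
  have hbias : |∫ z, f z ∂μ - ∫ z, truncation f T z ∂μ| ≤ r * t := by
    refine le_of_mul_le_mul_left ?_ (by positivity : 0 < T ^ (p - 1))
    linarith [rpow_mul_abs_integral_sub_truncation_le hf hT hp1 hint]
  have hsub : {x : Fin m → Ω | t < |blockMean f x - ∫ z, f z ∂μ|} ⊆
      {x | ∃ j, T ≤ |f (x j)|} ∪
        {x | 3 / 4 * t ≤ |blockMean (truncation f T) x - ∫ z, truncation f T z ∂μ|} := by
    intro x (hx : t < _)
    refine or_iff_not_imp_left.2 fun hsmall => ?_
    have hself (j : Fin m) : truncation f T (x j) = f (x j) :=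
      truncation_eq_self (lt_of_not_ge fun hj => hsmall ⟨j, hj⟩)
    have hblock : blockMean (truncation f T) x = blockMean f x := by simp only [blockMean, hself]
    have htri := abs_sub_le (blockMean f x) (∫ z, truncation f T z ∂μ) (∫ z, f z ∂μ)
    rw [abs_sub_comm (∫ z, truncation f T z ∂μ)] at htri
    rw [Set.mem_ofPred_eq, hblock]
    linarith [mul_le_mul_of_nonneg_right hr ht.le]
  calc _ ≤ _ := (measure_mono hsub).trans (measure_union_le _ _)
    _ ≤ ENNReal.ofReal r + ENNReal.ofReal (r / (3 / 4) ^ 2) :=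
        add_le_add (pi_exists_mul_le_abs_le hp1 hm ht hint hmoment)
          (pi_le_abs_blockMean_truncation_sub_le hf (by linarith) hp2 hm ht hint hmoment
            (by norm_num))
    _ = ENNReal.ofReal (r + r / (3 / 4) ^ 2) := (ENNReal.ofReal_add hr0 (by positivity)).symm
    _ ≤ ENNReal.ofReal (4 * r) := ENNReal.ofReal_le_ofReal (by ring_nf; linarith)

lemma pi_lt_abs_blockMean_sub_integral_le (hf : AEStronglyMeasurable f μ) (hp1 : 1 < p)
    (hp2 : p ≤ 2) (ht : 0 < t) (hint : Integrable (fun z => |f z| ^ p) μ)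
    (hmoment : ∫ z, |f z| ^ p ∂μ ≤ r * ((m * t) ^ (p - 1) * t)) :
    (Measure.pi fun _ : Fin m => μ) {x | t < |blockMean f x - ∫ z, f z ∂μ|} ≤
      ENNReal.ofReal (4 * r) := by
  have hpow (z : Ω) : 0 ≤ |f z| ^ p := by positivity
  have hmoment0 : 0 ≤ ∫ z, |f z| ^ p ∂μ := integral_nonneg hpow
  rcases m.eq_zero_or_pos with rfl | hm
  · have hzero : ∫ z, |f z| ^ p ∂μ = 0 := by
      refine le_antisymm (hmoment.trans_eq ?_) hmoment0
      simp [Real.zero_rpow (by linarith : p - 1 ≠ 0)]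
    have hae : f =ᵐ[μ] 0 := by
      filter_upwards [(integral_eq_zero_iff_of_nonneg hpow hint).1 hzero] with z hz
      exact abs_eq_zero.1 ((Real.rpow_eq_zero_iff_of_nonneg (abs_nonneg _)).1 hz).1
    simp [blockMean, integral_eq_zero_of_ae hae, ht.not_gt]
  · rcases le_total r (1 / 4) with hr | hr
    · have hr0 : 0 ≤ r := nonneg_of_mul_nonneg_left (hmoment0.trans hmoment) (by positivity)
      exact pi_lt_abs_blockMean_sub_integral_le_of_le hf hp1.le hp2 hm.ne' ht hint hmoment hr0 hr
    · exact prob_le_one.trans (ENNReal.one_le_ofReal.2 (by linarith))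

end WeakLaw

/-! ### Median-of-means over a class with a finite net -/

section FiniteNet

variable {Ω : Type*} {f g : Ω → ℝ} {S : Set Ω} {η t : ℝ} {m : ℕ}

lemma abs_blockMean_sub_blockMean_le {x : Fin m → Ω} (hη : 0 ≤ η)
    (h : ∀ j, |f (x j) - g (x j)| ≤ η) : |blockMean f x - blockMean g x| ≤ η := by
  rcases m.eq_zero_or_pos with rfl | hm
  · simpa [blockMean] using hη
  have hm' : (0 : ℝ) < m := Nat.cast_pos.2 hm
  calc |blockMean f x - blockMean g x| = |∑ j, (f (x j) - g (x j))| / m := by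
        rw [blockMean, blockMean, ← sub_div, ← Finset.sum_sub_distrib, abs_div, abs_of_pos hm']
    _ ≤ (∑ j, |f (x j) - g (x j)|) / m := by gcongr; exact Finset.abs_sum_le_sum_abs _ _
    _ ≤ (∑ _j : Fin m, η) / m := by gcongr with j; exact h j
    _ = η := by simp [hm'.ne']

/-- `N ⊆ ℱ` is a finite `η`-net of the function class `ℱ` for the supremum distance on `S`. -/
def IsUniformNetOn (S : Set Ω) (η : ℝ) (ℱ : Set (Ω → ℝ)) (N : Finset (Ω → ℝ)) : Prop :=
  ↑N ⊆ ℱ ∧ ∀ f ∈ ℱ, ∃ g ∈ N, ∀ z ∈ S, |f z - g z| ≤ η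

variable [MeasurableSpace Ω] {μ : Measure Ω}

/-- The blocks on which the mean of `f` may fail to represent the means of the functions close to
`f` on `S`: those with a point outside `S`, and those whose mean of `f` is not `t`-accurate. -/
def unreliableBlocks (μ : Measure Ω) (S : Set Ω) (t : ℝ) (f : Ω → ℝ) : Set (Fin m → Ω) :=
  {x | ∃ j, x j ∉ S} ∪ {x | t < |blockMean f x - ∫ z, f z ∂μ|}

lemma forall_mem_of_notMem_unreliableBlocks {x : Fin m → Ω} (hx : x ∉ unreliableBlocks μ S t f)
    (j : Fin m) : x j ∈ S :=
  by_contra fun hj => hx (.inl ⟨j, hj⟩)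

lemma abs_blockMean_sub_integral_le_of_notMem_unreliableBlocks {x : Fin m → Ω}
    (hx : x ∉ unreliableBlocks μ S t f) : |blockMean f x - ∫ z, f z ∂μ| ≤ t :=
  not_lt.1 fun hlt => hx (.inr hlt)

lemma abs_mom_sub_integral_le_of_majority {κ : ℕ} {Z : Fin κ → Fin m → Ω} (hη : 0 ≤ η)
    (hfg : ∀ z ∈ S, |f z - g z| ≤ η) (hintegral : |∫ z, f z ∂μ - ∫ z, g z ∂μ| ≤ 2 * t + η)
    (hmajority : 2 * {i | Z i ∈ unreliableBlocks μ S t g}.ncard < κ) :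
    |mom f Z - ∫ z, f z ∂μ| ≤ 3 * t + 2 * η := by
  have hmem : mom f Z ∈ Metric.closedBall (∫ z, f z ∂μ) (3 * t + 2 * η) := by
    rw [Real.closedBall_eq_Icc]
    refine median_mem_of_two_mul_ncard_notMem_lt Set.ordConnected_Icc (hmajority.trans_le' ?_)
    refine Nat.mul_le_mul_left 2 (Set.ncard_le_ncard fun i => not_imp_comm.1 fun hi => ?_)
    have hblock := abs_blockMean_sub_blockMean_le (x := Z i) hη fun j =>
      hfg _ (forall_mem_of_notMem_unreliableBlocks hi j)
    have hgi := abs_blockMean_sub_integral_le_of_notMem_unreliableBlocks hi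
    rw [abs_le] at hblock hgi hintegral
    constructor <;> linarith
  simpa [Real.dist_eq] using hmem

variable [IsProbabilityMeasure μ]

-- Blocks reliable for both functions have probability at least `1 - 2 / 5 - 2 / 5`, so one exists.
lemma abs_integral_sub_integral_le_of_unreliableBlocks (hη : 0 ≤ η)
    (hfg : ∀ z ∈ S, |f z - g z| ≤ η)
    (hf : (Measure.pi fun _ : Fin m => μ) (unreliableBlocks μ S t f) ≤ ENNReal.ofReal (2 / 5))
    (hg : (Measure.pi fun _ : Fin m => μ) (unreliableBlocks μ S t g) ≤ ENNReal.ofReal (2 / 5)) :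
    |∫ z, f z ∂μ - ∫ z, g z ∂μ| ≤ 2 * t + η := by
  have hlt : (Measure.pi fun _ : Fin m => μ) (unreliableBlocks μ S t f ∪ unreliableBlocks μ S t g)
      < 1 := by
    refine ((measure_union_le _ _).trans (add_le_add hf hg)).trans_lt ?_
    rw [← ENNReal.ofReal_add (by norm_num) (by norm_num), ENNReal.ofReal_lt_one]
    norm_num
  obtain ⟨x, hx⟩ : ∃ x, x ∉ unreliableBlocks μ S t f ∪ unreliableBlocks μ S t g := by
    rw [← Set.ne_univ_iff_exists_notMem]
    exact fun huniv => hlt.ne (by rw [huniv, measure_univ])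
  obtain ⟨hxf, hxg⟩ := not_or.1 hx
  have hclose := abs_blockMean_sub_blockMean_le (x := x) hη fun j =>
    hfg _ (forall_mem_of_notMem_unreliableBlocks hxf j)
  have hfx := abs_blockMean_sub_integral_le_of_notMem_unreliableBlocks hxf
  have hgx := abs_blockMean_sub_integral_le_of_notMem_unreliableBlocks hxg
  rw [abs_le] at *
  constructor <;> linarith

theorem pi_forall_abs_mom_sub_integral_le {ℱ : Set (Ω → ℝ)} {N : Finset (Ω → ℝ)}
    (hη : 0 ≤ η) (hN : IsUniformNetOn S η ℱ N) {κ : ℕ}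
    (hℱ : ∀ f ∈ ℱ, (Measure.pi fun _ : Fin m => μ) (unreliableBlocks μ S t f) ≤
      ENNReal.ofReal (2 / 5)) :
    ENNReal.ofReal (1 - #N * Real.exp (-(κ / 50))) ≤
      (Measure.pi fun _ : Fin κ => Measure.pi fun _ : Fin m => μ)
        {Z | ∀ f ∈ ℱ, |mom f Z - ∫ z, f z ∂μ| ≤ 3 * t + 2 * η} := by
  set Q := Measure.pi fun _ : Fin κ => Measure.pi fun _ : Fin m => μ
  let bad (g : Ω → ℝ) : Set (Fin κ → Fin m → Ω) :=
    {Z | κ ≤ 2 * {i | Z i ∈ unreliableBlocks μ S t g}.ncard}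
  have hbad : Q (⋃ g ∈ N, bad g) ≤ ENNReal.ofReal (#N * Real.exp (-(κ / 50))) := by
    calc Q (⋃ g ∈ N, bad g) ≤ ∑ g ∈ N, Q (bad g) := measure_biUnion_finset_le N bad
      _ ≤ ∑ _g ∈ N, ENNReal.ofReal (Real.exp (-(κ / 50))) :=
          Finset.sum_le_sum fun g hg => pi_le_two_mul_ncard_mem_le κ (hℱ g (hN.1 hg))
      _ = ENNReal.ofReal (#N * Real.exp (-(κ / 50))) := by
          rw [Finset.sum_const, nsmul_eq_mul, ENNReal.ofReal_mul (Nat.cast_nonneg _),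
            ENNReal.ofReal_natCast]
  have hgood : (⋃ g ∈ N, bad g)ᶜ ⊆ {Z | ∀ f ∈ ℱ, |mom f Z - ∫ z, f z ∂μ| ≤ 3 * t + 2 * η} := by
    intro Z hZ f hf
    obtain ⟨g, hg, hfg⟩ := hN.2 f hf
    exact abs_mom_sub_integral_le_of_majority hη hfg
      (abs_integral_sub_integral_le_of_unreliableBlocks hη hfg (hℱ f hf) (hℱ g (hN.1 hg)))
      (not_le.1 fun hcon => hZ (Set.mem_iUnion₂.2 ⟨g, hg, hcon⟩))
  rw [ENNReal.ofReal_sub _ (by positivity), ENNReal.ofReal_one, tsub_le_iff_right]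
  calc 1 = Q Set.univ := measure_univ.symm
    _ ≤ Q (⋃ g ∈ N, bad g)ᶜ + Q (⋃ g ∈ N, bad g) := by
        rw [add_comm]; exact measure_univ_le_add_compl _
    _ ≤ _ := add_le_add (measure_mono hgood) hbad

end FiniteNet

lemma pi_unreliableBlocks_le {Ω : Type*} [MeasurableSpace Ω] {μ : Measure Ω}
    [IsProbabilityMeasure μ] {m : ℕ} {f h : Ω → ℝ} {p r t c : ℝ} (h0 : 0 ≤ᵐ[μ] h)
    (hh : Integrable h μ) (hc : 0 < c) (hf : AEStronglyMeasurable f μ) (hp1 : 1 < p)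
    (hp2 : p ≤ 2) (ht : 0 < t) (hint : Integrable (fun z => |f z| ^ p) μ)
    (hmoment : ∫ z, |f z| ^ p ∂μ ≤ r * ((m * t) ^ (p - 1) * t)) :
    (Measure.pi fun _ : Fin m => μ)
        (unreliableBlocks μ {z | h z ≤ c * (∫ z, h z ∂μ) * m} t f) ≤
      ENNReal.ofReal (1 / c) + ENNReal.ofReal (4 * r) := by
  have hescape := pi_exists_mul_integral_lt_le h0 hh hc m
  simp only [← not_le] at hescape
  exact (measure_union_le _ _).trans
    (add_le_add hescape (pi_lt_abs_blockMean_sub_integral_le hf hp1 hp2 ht hint hmoment))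

/-! ### The modulus `alphaEll` -/

section Modulus

variable {ℓ : ℝ → ℝ} {a b : ℝ}

lemma abs_sub_le_of_abs_sub_lt_alphaEll {x y : ℝ} (hx : |x| ≤ a) (hy : |y| ≤ a)
    (hxy : |x - y| < alphaEll ℓ a b) : |ℓ x - ℓ y| ≤ b := by
  have hne : {α : ℝ | 0 < α ∧ ∀ x y : ℝ, |x| ≤ a → |y| ≤ a → |x - y| ≤ α →
      |ℓ x - ℓ y| ≤ b}.Nonempty := by
    by_contra hempty
    rw [alphaEll, Set.not_nonempty_iff_eq_empty.1 hempty, Real.sSup_empty] at hxy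
    exact (abs_nonneg _).not_gt hxy
  obtain ⟨α, hα, hlt⟩ := exists_lt_of_lt_csSup hne hxy
  exact hα.2 x y hx hy hlt.le

-- Without a pair `x₀, y₀` the supremum is over an unbounded set and takes the junk value `0`.
lemma alphaEll_pos (hcont : Continuous ℓ) (hb : 0 < b) {x₀ y₀ : ℝ} (hx₀ : |x₀| ≤ a)
    (hy₀ : |y₀| ≤ a) (hlt : b < |ℓ x₀ - ℓ y₀|) : 0 < alphaEll ℓ a b := by
  have hunif : UniformContinuousOn ℓ (Set.Icc (-a) a) :=
    isCompact_Icc.uniformContinuousOn_of_continuous hcont.continuousOn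
  obtain ⟨α, hα, hαb⟩ := Metric.uniformContinuousOn_iff_le.1 hunif b hb
  have hbdd : BddAbove {α : ℝ | 0 < α ∧ ∀ x y : ℝ, |x| ≤ a → |y| ≤ a → |x - y| ≤ α →
      |ℓ x - ℓ y| ≤ b} :=
    ⟨|x₀ - y₀|, fun γ hγ => le_of_not_gt fun hγlt =>
      (hγ.2 x₀ y₀ hx₀ hy₀ hγlt.le).not_gt hlt⟩
  exact hα.trans_le (le_csSup hbdd
    ⟨hα, fun x y hx hy hxy => hαb x (abs_le.1 hx) y (abs_le.1 hy) hxy⟩)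

end Modulus

/-! ### Nets of linear regression losses -/

section LinearRegression

variable {d : ℕ} {ℓ : ℝ → ℝ} {W M J b : ℝ}

/-- The loss `(x, y) ↦ ℓ(⟨w, x⟩ - y)` of the linear predictor `w`. -/
def linRegLoss (ℓ : ℝ → ℝ) (w : EuclideanSpace ℝ (Fin d)) (z : EuclideanSpace ℝ (Fin d) × ℝ) :
    ℝ :=
  ℓ ((∑ i, w i * z.1 i) - z.2)

/-- The size `‖x‖₁ + |y|` of a labelled point `(x, y)`, which controls how fast its residual
`⟨w, x⟩ - y` varies with `w`. -/
def l1Size (z : EuclideanSpace ℝ (Fin d) × ℝ) : ℝ :=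
  (∑ i, |z.1 i|) + |z.2|

lemma l1Size_nonneg (z : EuclideanSpace ℝ (Fin d) × ℝ) : 0 ≤ l1Size z := by
  unfold l1Size; positivity

lemma continuous_of_mem_linRegClass (hcont : Continuous ℓ) {f : EuclideanSpace ℝ (Fin d) × ℝ → ℝ}
    (hf : f ∈ linRegClass d ℓ W) : Continuous f := by
  obtain ⟨w, -, rfl⟩ := hf
  fun_prop

lemma abs_sum_mul_le (w x : EuclideanSpace ℝ (Fin d)) :
    |∑ i, w i * x i| ≤ ‖w‖ * ∑ i, |x i| := by
  calc |∑ i, w i * x i| ≤ ∑ i, |w i| * |x i| := by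
        simpa only [abs_mul] using Finset.abs_sum_le_sum_abs (fun i => w i * x i) Finset.univ
    _ ≤ ∑ i, ‖w‖ * |x i| := by gcongr with i; exact PiLp.norm_apply_le w i
    _ = ‖w‖ * ∑ i, |x i| := (Finset.mul_sum ..).symm

lemma abs_sum_mul_sub_le (hJ : (W + 1) * M ≤ J) {w : EuclideanSpace ℝ (Fin d)} (hw : ‖w‖ ≤ W)
    {z : EuclideanSpace ℝ (Fin d) × ℝ} (hz : l1Size z ≤ M) :
    |(∑ i, w i * z.1 i) - z.2| ≤ J := by
  have hx : 0 ≤ ∑ i, |z.1 i| := by positivity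
  calc _ ≤ ‖w‖ * ∑ i, |z.1 i| + |z.2| :=
        (abs_sub _ _).trans (by gcongr; exact abs_sum_mul_le w z.1)
    _ ≤ (‖w‖ + 1) * l1Size z := by
        unfold l1Size; nlinarith [mul_nonneg (norm_nonneg w) (abs_nonneg z.2)]
    _ ≤ (W + 1) * M := by gcongr; exacts [l1Size_nonneg z, by linarith [norm_nonneg w]]
    _ ≤ J := hJ

lemma isUniformNetOn_singleton_linRegLoss_zero (hW : 0 ≤ W) (hJ : (W + 1) * M ≤ J)
    (hosc : ∀ x y, |x| ≤ J → |y| ≤ J → |ℓ x - ℓ y| ≤ b) :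
    IsUniformNetOn {z | l1Size z ≤ M} b (linRegClass d ℓ W) {linRegLoss ℓ 0} := by
  have hzero : ‖(0 : EuclideanSpace ℝ (Fin d))‖ ≤ W := by simpa using hW
  refine ⟨?_, ?_⟩
  · rw [Finset.coe_singleton, Set.singleton_subset_iff]
    exact ⟨0, hzero, rfl⟩
  · rintro _ ⟨w, hw, rfl⟩
    exact ⟨_, Finset.mem_singleton_self _, fun z hz =>
      hosc _ _ (abs_sum_mul_sub_le hJ hw hz) (abs_sum_mul_sub_le hJ hzero hz)⟩

lemma abs_linRegLoss_sub_le {r : ℝ} (hJ : (W + 1) * M ≤ J) (hrM : r * M < alphaEll ℓ J b)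
    {w u : EuclideanSpace ℝ (Fin d)} (hw : ‖w‖ ≤ W) (hu : ‖u‖ ≤ W) (hwu : ‖w - u‖ ≤ r)
    {z : EuclideanSpace ℝ (Fin d) × ℝ} (hz : l1Size z ≤ M) :
    |linRegLoss ℓ w z - linRegLoss ℓ u z| ≤ b := by
  refine abs_sub_le_of_abs_sub_lt_alphaEll (abs_sum_mul_sub_le hJ hw hz)
    (abs_sum_mul_sub_le hJ hu hz) (lt_of_le_of_lt ?_ hrM)
  have hr : 0 ≤ r := (norm_nonneg _).trans hwu
  calc _ = |∑ i, (w - u) i * z.1 i| := by simp [sub_mul, Finset.sum_sub_distrib]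
    _ ≤ ‖w - u‖ * ∑ i, |z.1 i| := abs_sum_mul_le _ _
    _ ≤ r * l1Size z := by unfold l1Size; gcongr; linarith [abs_nonneg z.2]
    _ ≤ r * M := by gcongr

lemma exists_isUniformNetOn_linRegClass {r : ℝ} (hW : 0 ≤ W) (hr : 0 < r)
    (hJ : (W + 1) * M ≤ J) (hrM : r * M < alphaEll ℓ J b) :
    ∃ N : Finset (EuclideanSpace ℝ (Fin d) × ℝ → ℝ),
      IsUniformNetOn {z | l1Size z ≤ M} b (linRegClass d ℓ W) N ∧
        (#N : ℝ) ≤ ((2 * W + r) / r) ^ d := by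
  classical
  lift r to ℝ≥0 using hr.le
  obtain ⟨T, hTW, hcover, hcard⟩ :=
    exists_isCover_closedBall_card_le (0 : EuclideanSpace ℝ (Fin d)) hW (NNReal.coe_pos.1 hr)
  have hTnorm (u) (hu : u ∈ T) : ‖u‖ ≤ W := mem_closedBall_zero_iff.1 (hTW hu)
  refine ⟨T.image (linRegLoss ℓ), ⟨?_, ?_⟩, ?_⟩
  · rw [Finset.coe_image]
    rintro _ ⟨u, hu, rfl⟩
    exact ⟨u, hTnorm u hu, rfl⟩
  · rintro _ ⟨w, hw, rfl⟩
    obtain ⟨u, hu, hwu⟩ := Set.mem_iUnion₂.1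
      (hcover.subset_iUnion_closedBall (mem_closedBall_zero_iff.2 hw))
    rw [Metric.mem_closedBall, dist_eq_norm] at hwu
    exact ⟨_, Finset.mem_image_of_mem _ hu, fun z hz =>
      abs_linRegLoss_sub_le hJ hrM hw (hTnorm u hu) hwu hz⟩
  · rw [finrank_euclideanSpace_fin] at hcard
    exact (Nat.cast_le.2 Finset.card_image_le).trans hcard

-- If `ℓ` oscillates by at most `b` on `[-J, J]`, then `alphaEll` has the junk value `0`, but one
-- function is a net. Otherwise the radius `β / 2` keeps the residuals strictly closer than the
-- supremum `alphaEll`, which need not be attained.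
lemma exists_isUniformNetOn_linRegClass_card_le_max (d : ℕ) (hcont : Continuous ℓ) (hW : 0 < W)
    (hM : 0 ≤ M) (hb : 0 < b) :
    ∃ N : Finset (EuclideanSpace ℝ (Fin d) × ℝ → ℝ),
      IsUniformNetOn {z | l1Size z ≤ M} b (linRegClass d ℓ W) N ∧
        (#N : ℝ) ≤
          max 1 ((6 * W / min (W / 2) (alphaEll ℓ ((3 * W / 2 + 1) * M) b / M)) ^ d) := by
  set J := (3 * W / 2 + 1) * M with hJdef
  have hJ : (W + 1) * M ≤ J := by rw [hJdef]; gcongr; linarith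
  by_cases hosc : ∀ x y, |x| ≤ J → |y| ≤ J → |ℓ x - ℓ y| ≤ b
  · exact ⟨_, isUniformNetOn_singleton_linRegLoss_zero hW.le hJ hosc, by simp⟩
  push Not at hosc
  obtain ⟨x, y, hx, hy, hxy⟩ := hosc
  have hα : 0 < alphaEll ℓ J b := alphaEll_pos hcont hb hx hy hxy
  have hMpos : 0 < M := by
    refine hM.lt_of_ne fun hzero => ?_
    rw [hJdef, ← hzero, mul_zero, abs_nonpos_iff] at hx hy
    simp [hx, hy, hb.not_gt] at hxy
  set β := min (W / 2) (alphaEll ℓ J b / M)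
  have hβ : 0 < β := by positivity
  have hβM : β * M ≤ alphaEll ℓ J b := (le_div_iff₀ hMpos).1 (min_le_right _ _)
  have hβα : β / 2 * M < alphaEll ℓ J b := by linarith [mul_pos hβ hMpos]
  obtain ⟨N, hN, hcard⟩ :=
    exists_isUniformNetOn_linRegClass (d := d) hW.le (half_pos hβ) hJ hβα
  refine ⟨N, hN, hcard.trans (le_max_of_le_right ?_)⟩
  gcongr ?_ ^ d
  rw [div_le_div_iff₀ (half_pos hβ) hβ]
  nlinarith [min_le_left (W / 2) (alphaEll ℓ J b / M)]

end LinearRegression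

/-! ### Sample sizes -/

lemma le_mul_rpow_of_rpow_le {v r t p x : ℝ} (hv : 0 ≤ v) (hr : 0 < r) (ht : 0 < t) (hp : 1 < p)
    (hx : 0 ≤ x) (h : (v / (r * t ^ p)) ^ (1 / (p - 1)) ≤ x) :
    v ≤ r * ((x * t) ^ (p - 1) * t) := by
  rw [one_div, Real.rpow_inv_le_iff_of_pos (by positivity) hx (by linarith),
    div_le_iff₀ (by positivity)] at h
  calc v ≤ x ^ (p - 1) * (r * t ^ p) := h
    _ = x ^ (p - 1) * (r * (t ^ (p - 1) * t)) := by
        rw [← Real.rpow_add_one ht.ne', sub_add_cancel]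
    _ = r * ((x * t) ^ (p - 1) * t) := by rw [Real.mul_rpow hx ht.le]; ring

lemma pi_unreliableBlocks_le_two_div_five {Ω : Type*} [MeasurableSpace Ω] {μ : Measure Ω}
    [IsProbabilityMeasure μ] {m : ℕ} {f h : Ω → ℝ} {p v ε : ℝ} (h0 : 0 ≤ᵐ[μ] h)
    (hh : Integrable h μ) (hf : AEStronglyMeasurable f μ) (hp1 : 1 < p) (hp2 : p ≤ 2)
    (hε : 0 < ε) (hint : Integrable (fun z => |f z| ^ p) μ) (hv : ∫ z, |f z| ^ p ∂μ ≤ v)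
    (hm : (400 * (16 : ℝ) ^ p * v / ε ^ p) ^ (1 / (p - 1)) ≤ (m : ℝ)) :
    (Measure.pi fun _ : Fin m => μ)
        (unreliableBlocks μ {z | h z ≤ 3750 * (∫ z, h z ∂μ) * m} (ε / 16) f) ≤
      ENNReal.ofReal (2 / 5) := by
  have hε16 : 0 < ε / 16 := by positivity
  have hv0 : 0 ≤ v := (integral_nonneg fun z => by positivity).trans hv
  have hm' : (v / (1 / 400 * (ε / 16) ^ p)) ^ (1 / (p - 1)) ≤ (m : ℝ) := by
    convert hm using 2
    rw [Real.div_rpow hε.le (by norm_num)]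
    field_simp
  have hmoment : ∫ z, |f z| ^ p ∂μ ≤ 1 / 400 * ((m * (ε / 16)) ^ (p - 1) * (ε / 16)) :=
    hv.trans (le_mul_rpow_of_rpow_le hv0 (by norm_num) hε16 hp1 (Nat.cast_nonneg m) hm')
  calc _ ≤ ENNReal.ofReal (1 / 3750) + ENNReal.ofReal (4 * (1 / 400)) :=
        pi_unreliableBlocks_le h0 hh (by norm_num) hf hp1 hp2 hε16 hint hmoment
    _ ≤ ENNReal.ofReal (2 / 5) := by
        rw [← ENNReal.ofReal_add (by norm_num) (by norm_num)]
        exact ENNReal.ofReal_le_ofReal (by norm_num)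

lemma mul_exp_neg_le_of_log_div_le {a b x : ℝ} (hb : 0 < b) (h : Real.log (a / b) ≤ x) :
    a * Real.exp (-x) ≤ b := by
  rw [Real.exp_neg, ← div_eq_mul_inv, div_le_comm₀ (Real.exp_pos x) hb]
  exact (Real.le_exp_log _).trans (Real.exp_le_exp.2 h)

lemma mul_exp_neg_div_fifty_le {n a δ κ : ℝ} (hδ : 0 < δ) (hn : n ≤ max 1 a)
    (h1 : 50 * Real.log (8 / δ) ≤ κ) (ha : 50 * Real.log (8 * a / δ) ≤ κ) :
    n * Real.exp (-(κ / 50)) ≤ δ := by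
  have h1' : 8 * Real.exp (-(κ / 50)) ≤ δ := mul_exp_neg_le_of_log_div_le hδ (by linarith)
  have ha' : 8 * a * Real.exp (-(κ / 50)) ≤ δ := mul_exp_neg_le_of_log_div_le hδ (by linarith)
  have hexp := Real.exp_pos (-(κ / 50))
  calc n * Real.exp (-(κ / 50)) ≤ max 1 a * Real.exp (-(κ / 50)) := by gcongr
    _ = max (1 * Real.exp (-(κ / 50))) (a * Real.exp (-(κ / 50))) := max_mul_of_nonneg _ _ hexp.le
    _ ≤ δ := max_le (by linarith) (by linarith)

lemma fifty_mul_log_le_of_mul_log_exp_one_div_le {δ κ : ℝ} (hδ0 : 0 < δ) (hδ1 : δ < 1)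
    (h : 4 * 1250 ^ 2 * Real.log (Real.exp 1 / (δ / 8)) ≤ κ) : 50 * Real.log (8 / δ) ≤ κ := by
  have hlog : 0 ≤ Real.log (8 / δ) := Real.log_nonneg (by rw [one_le_div hδ0]; linarith)
  rw [div_div_eq_mul_div, mul_div_assoc, Real.log_mul (by positivity) (by positivity),
    Real.log_exp] at h
  linarith

/-! ### Linear regression -/

theorem regression_mom_uniform_convergence_general {d : ℕ} {ℓ : ℝ → ℝ} (hcont : Continuous ℓ)
    {W : ℝ} (hW : 0 < W) {𝒟 : Measure (EuclideanSpace ℝ (Fin d) × ℝ)} [IsProbabilityMeasure 𝒟]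
    (hsize : Integrable l1Size 𝒟) {p v : ℝ} (hp1 : 1 < p) (hp2 : p ≤ 2)
    (hvint : ∀ f ∈ linRegClass d ℓ W, Integrable (fun z => |f z| ^ p) 𝒟)
    (hv : ∀ f ∈ linRegClass d ℓ W, ∫ z, |f z| ^ p ∂𝒟 ≤ v)
    {ε δ : ℝ} (hε : 0 < ε) (hδ : 0 < δ) {m κ : ℕ}
    (hm : (400 * (16 : ℝ) ^ p * v / ε ^ p) ^ (1 / (p - 1)) ≤ (m : ℝ))
    (hκ : 50 * Real.log (8 / δ) ≤ (κ : ℝ))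
    (hκnet : 50 * Real.log (8 * ((6 * W / min (W / 2)
        (alphaEll ℓ ((3 * W / 2 + 1) * (3750 * (∫ z, l1Size z ∂𝒟) * m)) (ε / 16) /
          (3750 * (∫ z, l1Size z ∂𝒟) * m))) ^ d) / δ) ≤ (κ : ℝ)) :
    ENNReal.ofReal (1 - δ) ≤
      (Measure.pi fun _ : Fin κ => Measure.pi fun _ : Fin m => 𝒟)
        {Z | ∀ f ∈ linRegClass d ℓ W, |mom f Z - ∫ z, f z ∂𝒟| ≤ ε} := by
  have hsize0 : 0 ≤ᵐ[𝒟] l1Size := ae_of_all 𝒟 l1Size_nonneg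
  have hmean : 0 ≤ ∫ z, l1Size z ∂𝒟 := integral_nonneg_of_ae hsize0
  have hε16 : 0 < ε / 16 := by positivity
  obtain ⟨N, hN, hcard⟩ := exists_isUniformNetOn_linRegClass_card_le_max d hcont hW
    (by positivity : 0 ≤ 3750 * (∫ z, l1Size z ∂𝒟) * m) hε16
  have hunreliable (f) (hf : f ∈ linRegClass d ℓ W) :=
    pi_unreliableBlocks_le_two_div_five hsize0 hsize
      (continuous_of_mem_linRegClass hcont hf).aestronglyMeasurable hp1 hp2 hε (hvint f hf)
      (hv f hf) hm
  calc ENNReal.ofReal (1 - δ) ≤ ENNReal.ofReal (1 - #N * Real.exp (-(κ / 50))) :=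
        ENNReal.ofReal_le_ofReal
          (sub_le_sub_left (mul_exp_neg_div_fifty_le hδ hcard hκ hκnet) 1)
    _ ≤ _ := pi_forall_abs_mom_sub_integral_le hε16.le hN hunreliable
    _ ≤ _ := measure_mono (Set.ofPred_subset_ofPred.2 fun Z hZ f hf =>
        (hZ f hf).trans (by linarith))

/-- Uniform MoM estimation for linear regression with a general continuous loss: with
probability at least `1 - δ` over `Z ∼ (𝒟^m)^κ`, `𝒟 = 𝒟_X × 𝒟_Y`, every `f ∈ ℱ_W`
satisfies `|MoM(f,Z) - E[f]| ≤ ε`. -/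
theorem regression_mom_uniform_convergence (d : ℕ) (ℓ : ℝ → ℝ)
    (hcont : Continuous ℓ) (hnn : ∀ t, 0 ≤ ℓ t) (W : ℝ) (hW : 0 < W)
    (𝒟X : Measure (EuclideanSpace ℝ (Fin d))) [IsProbabilityMeasure 𝒟X]
    (𝒟Y : Measure ℝ) [IsProbabilityMeasure 𝒟Y]
    (hX1 : Integrable (fun x => ∑ i, |x i|) 𝒟X)
    (hY1 : Integrable (fun y => |y|) 𝒟Y)
    (p : ℝ) (hp1 : 1 < p) (hp2 : p ≤ 2)
    (v : ℝ)
    (hvint : ∀ f ∈ linRegClass d ℓ W, Integrable (fun z => f z ^ p) (𝒟X.prod 𝒟Y))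
    (hv : ∀ f ∈ linRegClass d ℓ W, ∫ z, f z ^ p ∂(𝒟X.prod 𝒟Y) ≤ v)
    (ε δ : ℝ) (hε : 0 < ε) (hδ0 : 0 < δ) (hδ1 : δ < 1)
    (m κ : ℕ)
    (hm : (400 * (16 : ℝ) ^ p * v / ε ^ p) ^ (1 / (p - 1)) ≤ (m : ℝ))
    (hκ0 : 4 * 1250 ^ 2 * Real.log (Real.exp 1 / (δ / 8)) ≤ (κ : ℝ))
    (hκ1 : 10 ^ 6 * Real.log 2 / 99 ≤ (κ : ℝ))
    (hκ2 : 50 * Real.log (8 *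
        ((6 * W / min (W / 2)
            (alphaEll ℓ
                ((3 * W / 2 + 1) *
                  (3750 * ((∫ x, ∑ i, |x i| ∂𝒟X) + ∫ y, |y| ∂𝒟Y) * m)) (ε / 16) /
              (3750 * ((∫ x, ∑ i, |x i| ∂𝒟X) + ∫ y, |y| ∂𝒟Y) * m))) ^ d) / δ)
      ≤ (κ : ℝ)) :
    ENNReal.ofReal (1 - δ) ≤
      (Measure.pi fun _ : Fin κ => Measure.pi fun _ : Fin m => 𝒟X.prod 𝒟Y)
        {Z | ∀ f ∈ linRegClass d ℓ W, |mom f Z - ∫ z, f z ∂(𝒟X.prod 𝒟Y)| ≤ ε} := by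
  have hX : Integrable (fun z => ∑ i, |z.1 i|) (𝒟X.prod 𝒟Y) := hX1.comp_fst 𝒟Y
  have hY : Integrable (fun z => |z.2|) (𝒟X.prod 𝒟Y) := hY1.comp_snd 𝒟X
  have hsize : ∫ z, l1Size z ∂(𝒟X.prod 𝒟Y) = (∫ x, ∑ i, |x i| ∂𝒟X) + ∫ y, |y| ∂𝒟Y := by
    simp only [l1Size, integral_add hX hY]
    rw [integral_fun_fst (μ := 𝒟X) (fun x => ∑ i, |x i|), integral_fun_snd (fun y => |y|)]
    simp
  have habs : ∀ f ∈ linRegClass d ℓ W, ∀ z, |f z| = f z := by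
    rintro _ ⟨w, -, rfl⟩ z
    exact abs_of_nonneg (hnn _)
  rw [← hsize] at hκ2
  exact regression_mom_uniform_convergence_general hcont hW (hX.add hY) hp1 hp2
    (fun f hf => by simpa only [habs f hf] using hvint f hf)
    (fun f hf => by simpa only [habs f hf] using hv f hf)
    hε hδ0 hm (fifty_mul_log_le_of_mul_log_exp_one_div_le hδ0 hδ1 hκ0) hκ2
end
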